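/- (Hartogs-type extension; local form of Proposition 5.2 of the paper.) Let J be an almost complex structure on an open set U ⊆ ℂ², let p ∈ U, and let α be a closed J-anti-invariant 2-form on U ∖ {p}. Then α extends smoothly across p: there exists a closed J-anti-invariant 2-form α̃ on all of U with α̃(x) = α(x) for every x ∈ U ∖ {p}. -/

import Mathlib

open Complex Metric

/-- An almost complex structure on an open set `U ⊆ ℂ²`. -/
def IsAlmostComplexOn (J : ℂ × ℂ → (ℂ × ℂ →L[ℝ] ℂ × ℂ)) (U : Set (ℂ × ℂ)) : Prop :=
  ContDiffOn ℝ (⊤ : ℕ∞) J U ∧ ∀ x ∈ U, ∀ X : ℂ × ℂ, J x (J x X) = -X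

/-- The open unit disk in `ℂ`. -/
def unitDisk : Set ℂ := ball (0 : ℂ) 1

/-- An embedded `J`-holomorphic disk in `U`. -/
def IsEmbeddedJHolDisk (J : ℂ × ℂ → (ℂ × ℂ →L[ℝ] ℂ × ℂ)) (U : Set (ℂ × ℂ))
    (u : ℂ → ℂ × ℂ) : Prop :=
  ContDiffOn ℝ (⊤ : ℕ∞) u unitDisk ∧ Set.InjOn u unitDisk ∧
    Set.MapsTo u unitDisk U ∧
    (∀ z ∈ unitDisk, Function.Injective (fderiv ℝ u z)) ∧
    ∀ z ∈ unitDisk, ∀ v : ℂ, fderiv ℝ u z (Complex.I * v) = J (u z) (fderiv ℝ u z v)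

/-- A (smooth, alternating) 2-form on an open set `U ⊆ ℂ²`. -/
def IsTwoFormOn (α : ℂ × ℂ → (ℂ × ℂ →L[ℝ] ℂ × ℂ →L[ℝ] ℝ)) (U : Set (ℂ × ℂ)) : Prop :=
  ContDiffOn ℝ (⊤ : ℕ∞) α U ∧ ∀ x ∈ U, ∀ X : ℂ × ℂ, α x X X = 0

/-- `J`-anti-invariance of a 2-form on `U`. -/
def IsJAntiInvariantOn (J : ℂ × ℂ → (ℂ × ℂ →L[ℝ] ℂ × ℂ))
    (α : ℂ × ℂ → (ℂ × ℂ →L[ℝ] ℂ × ℂ →L[ℝ] ℝ)) (U : Set (ℂ × ℂ)) : Prop :=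
  ∀ x ∈ U, ∀ X Y : ℂ × ℂ, α x (J x X) (J x Y) = -α x X Y

/-- Closedness of a 2-form on `U`. -/
def IsClosedTwoFormOn (α : ℂ × ℂ → (ℂ × ℂ →L[ℝ] ℂ × ℂ →L[ℝ] ℝ))
    (U : Set (ℂ × ℂ)) : Prop :=
  ∀ x ∈ U, ∀ X Y Z : ℂ × ℂ,
    fderiv ℝ α x X Y Z - fderiv ℝ α x Y X Z + fderiv ℝ α x Z X Y = 0

/-!
Near `p` a `J`-anti-invariant form is `α = Re (f θ)` for a nowhere vanishing form `θ` of type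
`(2, 0)` and a complex function `f`, and `α` is closed exactly when `f` solves a first-order system
`df ∘ J = i df + Q(f)` of Cauchy–Riemann type with `Q` of order zero. A neighbourhood of `p` is
filled by `J`-holomorphic discs; these are fixed points of an operator built from the Cauchy and
Beurling transforms, a contraction in half-Hölder spaces once `J` is almost constant, which
rescaling achieves. On a disc missing `p` the system is a perturbed `∂̄`-equation, so the
Cauchy–Pompeiu estimate bounds `f` by its values near the boundary of the disc, away from `p`.
Hence `f` is bounded near `p`. The first jet `(f, df)` solves a system of the same type, so all
derivatives of `f` are bounded as well, and `f` and then `α` extend smoothly. Anti-invariance and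
closedness pass to `p` by continuity.
-/

namespace HartogsExtension

open MeasureTheory Filter Topology
open scoped ContDiff ComplexConjugate

section HalfHolder

variable {E X : Type*} [SeminormedAddCommGroup E] [NormedAddCommGroup X]

/-- `g` is bounded by `M` and Hölder continuous of exponent `1 / 2` with constant `M`. The Beurling
transform preserves this class, but not the class of bounded continuous functions. -/
structure HalfHolderBound (g : E → X) (M : ℝ) : Prop where
  norm_le : ∀ z, ‖g z‖ ≤ M
  norm_sub_le : ∀ z z', ‖g z - g z'‖ ≤ M * √‖z - z'‖

namespace HalfHolderBound

variable {g : E → X} {M : ℝ}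

lemma nonneg (h : HalfHolderBound g M) : 0 ≤ M := (norm_nonneg _).trans (h.norm_le 0)

lemma continuous (h : HalfHolderBound g M) : Continuous g := by
  refine continuous_iff_continuousAt.2 fun z => tendsto_iff_norm_sub_tendsto_zero.2 ?_
  have hsqrt : Continuous fun z' => M * √‖z' - z‖ := by fun_prop
  exact squeeze_zero (fun _ => norm_nonneg _) (fun z' => h.norm_sub_le z' z)
    (by simpa using hsqrt.tendsto z)

lemma mono {M' : ℝ} (h : HalfHolderBound g M) (hM : M ≤ M') : HalfHolderBound g M' where
  norm_le z := (h.norm_le z).trans hM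
  norm_sub_le z z' := (h.norm_sub_le z z').trans (by gcongr)

lemma zero {M : ℝ} (hM : 0 ≤ M) : HalfHolderBound (fun _ : E => (0 : X)) M where
  norm_le _ := by simpa
  norm_sub_le _ _ := by
    rw [sub_self, norm_zero]
    positivity

lemma const (c : X) : HalfHolderBound (fun _ : E => c) ‖c‖ where
  norm_le _ := le_rfl
  norm_sub_le _ _ := by
    rw [sub_self, norm_zero]
    positivity

lemma add {g' : E → X} {M' : ℝ} (h : HalfHolderBound g M) (h' : HalfHolderBound g' M') :
    HalfHolderBound (fun z => g z + g' z) (M + M') where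
  norm_le z := norm_add_le_of_le (h.norm_le z) (h'.norm_le z)
  norm_sub_le z z' := by
    rw [add_sub_add_comm, add_mul]
    exact norm_add_le_of_le (h.norm_sub_le z z') (h'.norm_sub_le z z')

lemma const_smul {𝕜 : Type*} [NormedField 𝕜] [NormedSpace 𝕜 X] (h : HalfHolderBound g M)
    (c : 𝕜) : HalfHolderBound (fun z => c • g z) (‖c‖ * M) where
  norm_le z := by
    rw [norm_smul]
    gcongr
    exact h.norm_le z
  norm_sub_le z z' := by
    rw [← smul_sub, norm_smul, mul_assoc]
    gcongr
    exact h.norm_sub_le z z'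

lemma sub {g' : E → X} {M' : ℝ} (h : HalfHolderBound g M) (h' : HalfHolderBound g' M') :
    HalfHolderBound (fun z => g z - g' z) (M + M') where
  norm_le z := norm_sub_le_of_le (h.norm_le z) (h'.norm_le z)
  norm_sub_le z z' := by
    rw [sub_sub_sub_comm, add_mul]
    exact norm_sub_le_of_le (h.norm_sub_le z z') (h'.norm_sub_le z z')

lemma of_lipschitz (hM : ∀ z, ‖g z‖ ≤ M) (hLip : ∀ z z', ‖g z - g z'‖ ≤ M * ‖z - z'‖) :
    HalfHolderBound g (2 * M) := by
  have hM0 : 0 ≤ M := (norm_nonneg _).trans (hM 0)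
  refine ⟨fun z => (hM z).trans (by linarith), fun z z' => ?_⟩
  have hsqrt := Real.sqrt_nonneg ‖z - z'‖
  rcases le_or_gt (√‖z - z'‖) 1 with h | h
  · calc ‖g z - g z'‖ ≤ M * (√‖z - z'‖ * √‖z - z'‖) := by
          rw [Real.mul_self_sqrt (norm_nonneg _)]
          exact hLip z z'
      _ ≤ M * (√‖z - z'‖ * 1) := by gcongr
      _ ≤ 2 * M * √‖z - z'‖ := by nlinarith
  · calc ‖g z - g z'‖ ≤ M + M := norm_sub_le_of_le (hM z) (hM z')
      _ = 2 * M * 1 := by ring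
      _ ≤ 2 * M * √‖z - z'‖ := by gcongr

lemma of_tendsto {g : ℕ → E → X} {f : E → X} (h : ∀ n, HalfHolderBound (g n) M)
    (hf : ∀ z, Tendsto (fun n => g n z) atTop (𝓝 (f z))) : HalfHolderBound f M where
  norm_le z := le_of_tendsto (hf z).norm (Eventually.of_forall fun n => (h n).norm_le z)
  norm_sub_le z z' := le_of_tendsto ((hf z).sub (hf z')).norm
    (Eventually.of_forall fun n => (h n).norm_sub_le z z')

lemma clm_apply {𝕜 Y : Type*} [NontriviallyNormedField 𝕜] [NormedSpace 𝕜 X]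
    [NormedAddCommGroup Y] [NormedSpace 𝕜 Y] {L : E → X →L[𝕜] Y} {N : ℝ}
    (hL : HalfHolderBound L N) (hg : HalfHolderBound g M) :
    HalfHolderBound (fun z => L z (g z)) (2 * N * M) where
  norm_le z := by
    have hN := hL.nonneg
    have hM := hg.nonneg
    calc ‖L z (g z)‖ ≤ N * M := (L z).le_of_opNorm_le_of_le (hL.norm_le z) (hg.norm_le z)
      _ ≤ 2 * N * M := by nlinarith [mul_nonneg hN hM]
  norm_sub_le z z' := by
    have hsplit : L z (g z) - L z' (g z') = (L z - L z') (g z) + L z' (g z - g z') := by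
      rw [map_sub, _root_.sub_apply]
      abel
    calc ‖L z (g z) - L z' (g z')‖ ≤ N * √‖z - z'‖ * M + N * (M * √‖z - z'‖) := by
          rw [hsplit]
          exact norm_add_le_of_le
            ((L z - L z').le_of_opNorm_le_of_le (hL.norm_sub_le z z') (hg.norm_le z))
            ((L z').le_of_opNorm_le_of_le (hL.norm_le z') (hg.norm_sub_le z z'))
      _ = 2 * N * M * √‖z - z'‖ := by ring

end HalfHolderBound

end HalfHolder

section Wirtinger

variable {W : Type*} [NormedAddCommGroup W] [NormedSpace ℝ W] [NormedSpace ℂ W]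

/-- Twice the Wirtinger derivative `∂u/∂z̄`. -/
noncomputable def dbar (u : ℂ → W) (z : ℂ) : W := fderiv ℝ u z 1 + I • fderiv ℝ u z I

/-- Twice the Wirtinger derivative `∂u/∂z`. -/
noncomputable def del (u : ℂ → W) (z : ℂ) : W := fderiv ℝ u z 1 - I • fderiv ℝ u z I

end Wirtinger

section RealLinear

variable {W : Type*} [NormedAddCommGroup W] [NormedSpace ℝ W]

lemma clm_eq_smulRight_add_smulRight (D : ℂ →L[ℝ] W) :
    D = reCLM.smulRight (D 1) + imCLM.smulRight (D I) := by
  ext v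
  have hv : v = v.re • (1 : ℂ) + v.im • I := by apply Complex.ext <;> simp
  conv_lhs => rw [hv]
  rw [map_add, map_smul, map_smul]
  simp

lemma opNorm_le_norm_one_add_norm_I (D : ℂ →L[ℝ] W) : ‖D‖ ≤ ‖D 1‖ + ‖D I‖ := by
  calc ‖D‖ = ‖reCLM.smulRight (D 1) + imCLM.smulRight (D I)‖ :=
        congrArg _ (clm_eq_smulRight_add_smulRight D)
    _ ≤ ‖D 1‖ + ‖D I‖ := by
        refine (norm_add_le _ _).trans ?_
        simp [ContinuousLinearMap.norm_smulRight_apply]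

lemma continuous_of_continuous_apply_one_apply_I {Y : Type*} [TopologicalSpace Y]
    {D : Y → ℂ →L[ℝ] W} (h1 : Continuous fun y => D y 1) (hI : Continuous fun y => D y I) :
    Continuous D := by
  rw [funext fun y => clm_eq_smulRight_add_smulRight (D y)]
  exact (((ContinuousLinearMap.smulRightL ℝ ℂ W) reCLM).continuous.comp h1).add
    (((ContinuousLinearMap.smulRightL ℝ ℂ W) imCLM).continuous.comp hI)

end RealLinear

section Kernel

/-- Smooth compactly supported functions on `ℂ`, the kernels of the integral operators below. -/
structure IsTestKernel (k : ℂ → ℂ) : Prop where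
  contDiff : ContDiff ℝ ∞ k
  hasCompactSupport : HasCompactSupport k

/-- The convolution of `g` with the rescaled kernel `s⁻² k (ζ / s)`, written with the scale moved
into the argument of `g`. -/
noncomputable def scaledConv {W : Type*} [NormedAddCommGroup W] [NormedSpace ℝ W] [NormedSpace ℂ W]
    (k : ℂ → ℂ) (s : ℝ) (g : ℂ → W) (z : ℂ) : W :=
  ∫ ζ, k ζ • g (z - s • ζ)

/-- The weighted `L¹` norm of a kernel; the weight `1 + √‖ζ‖` controls the action of the kernel both
on bounded functions and on half-Hölder increments. -/
noncomputable def kernelNorm (k : ℂ → ℂ) : ℝ := ∫ ζ, ‖k ζ‖ * (1 + √‖ζ‖)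

/-- The derivative of a kernel in the direction `v`. -/
noncomputable def dirDeriv (k : ℂ → ℂ) (v ζ : ℂ) : ℂ := fderiv ℝ k ζ v

lemma kernelNorm_nonneg (k : ℂ → ℂ) : 0 ≤ kernelNorm k :=
  integral_nonneg fun _ => by positivity

variable {k : ℂ → ℂ}

namespace IsTestKernel

lemma continuous (hk : IsTestKernel k) : Continuous k := hk.contDiff.continuous

lemma integrable (hk : IsTestKernel k) : Integrable k :=
  hk.continuous.integrable_of_hasCompactSupport hk.hasCompactSupport

lemma integrable_norm_mul_weight (hk : IsTestKernel k) :
    Integrable fun ζ => ‖k ζ‖ * (1 + √‖ζ‖) := by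
  have := hk.continuous
  exact Continuous.integrable_of_hasCompactSupport (by fun_prop) hk.hasCompactSupport.norm.mul_right

lemma dirDeriv (hk : IsTestKernel k) (v : ℂ) : IsTestKernel (dirDeriv k v) where
  contDiff := by
    have := hk.contDiff.fderiv_right (m := ∞) (by simp)
    unfold HartogsExtension.dirDeriv
    fun_prop
  hasCompactSupport := hk.hasCompactSupport.fderiv_apply (𝕜 := ℝ) v

lemma comp_inv_smul (hk : IsTestKernel k) {s : ℝ} (hs : 0 < s) :
    IsTestKernel fun t => k (s⁻¹ • t) where
  contDiff := by
    have := hk.contDiff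
    fun_prop
  hasCompactSupport := hk.hasCompactSupport.comp_homeomorph
    (Homeomorph.smulOfNeZero s⁻¹ (inv_ne_zero hs.ne'))

end IsTestKernel

lemma dirDeriv_comp_inv_smul (hk : IsTestKernel k) (s : ℝ) (t v : ℂ) :
    fderiv ℝ (fun t => k (s⁻¹ • t)) t v = s⁻¹ • dirDeriv k v (s⁻¹ • t) := by
  have h := ((hk.contDiff.differentiable (by simp)) _).hasFDerivAt.comp t
    ((hasFDerivAt_id t).const_smul s⁻¹)
  rw [show fderiv ℝ (fun t => k (s⁻¹ • t)) t = _ from h.fderiv]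
  simp [dirDeriv]

variable {W : Type*} [NormedAddCommGroup W] [NormedSpace ℂ W] {g g' : ℂ → W} {M : ℝ}

lemma integrable_kernel_smul (hk : IsTestKernel k) (s : ℝ) (hg : Continuous g) (z : ℂ) :
    Integrable fun ζ => k ζ • g (z - s • ζ) := by
  have := hk.continuous
  exact Continuous.integrable_of_hasCompactSupport (by fun_prop) hk.hasCompactSupport.smul_right

variable [NormedSpace ℝ W]

lemma scaledConv_sub (hk : IsTestKernel k) (s : ℝ) (hg : Continuous g) (hg' : Continuous g')
    (z : ℂ) : scaledConv k s (g - g') z = scaledConv k s g z - scaledConv k s g' z := by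
  unfold scaledConv
  rw [← integral_sub (integrable_kernel_smul hk s hg z) (integrable_kernel_smul hk s hg' z)]
  simp [smul_sub]

lemma norm_scaledConv_le (hk : IsTestKernel k) (s : ℝ) (hM : ∀ z, ‖g z‖ ≤ M) (z : ℂ) :
    ‖scaledConv k s g z‖ ≤ kernelNorm k * M := by
  unfold scaledConv kernelNorm
  rw [← integral_mul_const]
  refine norm_integral_le_of_norm_le (hk.integrable_norm_mul_weight.mul_const M)
    (Eventually.of_forall fun ζ => ?_)
  rw [norm_smul]
  gcongr
  · exact le_mul_of_one_le_right (norm_nonneg _) (by simp)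
  · exact hM _

/-- For a kernel of mean zero, `g` may be replaced by its increments, whose size is at most the
square root of the scale. -/
lemma norm_scaledConv_sq_le [CompleteSpace W] (hk : IsTestKernel k) (hk0 : ∫ ζ, k ζ = 0) {r : ℝ}
    (hr : 0 ≤ r) (hg : HalfHolderBound g M) (z : ℂ) :
    ‖scaledConv k (r ^ 2) g z‖ ≤ kernelNorm k * (r * M) := by
  have hM := hg.nonneg
  have hincr : scaledConv k (r ^ 2) g z = ∫ ζ, k ζ • (g (z - r ^ 2 • ζ) - g z) := by
    simp_rw [smul_sub]
    rw [integral_sub (integrable_kernel_smul hk _ hg.continuous z) (hk.integrable.smul_const _),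
      integral_smul_const, hk0, zero_smul, sub_zero, scaledConv]
  rw [hincr, kernelNorm, ← integral_mul_const]
  refine norm_integral_le_of_norm_le (hk.integrable_norm_mul_weight.mul_const _)
    (Eventually.of_forall fun ζ => ?_)
  have hnorm : ‖z - r ^ 2 • ζ - z‖ = r ^ 2 * ‖ζ‖ := by
    rw [sub_sub_cancel_left, norm_neg, norm_smul]
    simp
  calc ‖k ζ • (g (z - r ^ 2 • ζ) - g z)‖ ≤ ‖k ζ‖ * (M * √(r ^ 2 * ‖ζ‖)) := by
        rw [norm_smul, ← hnorm]
        gcongr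
        exact hg.norm_sub_le _ _
    _ = ‖k ζ‖ * √‖ζ‖ * (r * M) := by
        rw [Real.sqrt_mul (by positivity), Real.sqrt_sq hr]
        ring
    _ ≤ ‖k ζ‖ * (1 + √‖ζ‖) * (r * M) := by
        gcongr
        linarith

variable [IsScalarTower ℝ ℂ W]

lemma scaledConv_eq_convolution (k : ℂ → ℂ) {s : ℝ} (hs : 0 < s) (g : ℂ → W) (z : ℂ) :
    scaledConv k s g z = (s ^ 2)⁻¹ •
      (convolution (fun t => k (s⁻¹ • t)) g (ContinuousLinearMap.lsmul ℝ ℂ) volume) z := by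
  have hchange := Measure.integral_comp_smul (volume : Measure ℂ)
    (fun t => k (s⁻¹ • t) • g (z - t)) s
  simp only [Complex.finrank_real_complex, inv_smul_smul₀ hs.ne'] at hchange
  rw [abs_of_pos (by positivity)] at hchange
  simp only [convolution_def, ContinuousLinearMap.lsmul_apply]
  rw [← hchange, scaledConv]

lemma hasFDerivAt_scaledConv (hk : IsTestKernel k) {s : ℝ} (hs : 0 < s) (hg : Continuous g)
    (z : ℂ) : HasFDerivAt (scaledConv k s g) ((s ^ 2)⁻¹ •
      (convolution (fderiv ℝ fun t => k (s⁻¹ • t)) g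
        ((ContinuousLinearMap.lsmul ℝ ℂ).precompL ℂ) volume) z) z := by
  have hk' := hk.comp_inv_smul hs
  have h := hk'.hasCompactSupport.hasFDerivAt_convolution_left (ContinuousLinearMap.lsmul ℝ ℂ)
    (μ := volume) (hk'.contDiff.of_le (by simp)) hg.locallyIntegrable z
  exact (h.const_smul ((s ^ 2)⁻¹)).congr_of_eventuallyEq
    (Eventually.of_forall fun z => scaledConv_eq_convolution k hs g z)

lemma differentiable_scaledConv (hk : IsTestKernel k) {s : ℝ} (hs : 0 < s) (hg : Continuous g) :
    Differentiable ℝ (scaledConv k s g) :=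
  fun z => (hasFDerivAt_scaledConv hk hs hg z).differentiableAt

lemma fderiv_scaledConv_apply (hk : IsTestKernel k) {s : ℝ} (hs : 0 < s) (hg : Continuous g)
    (z v : ℂ) :
    fderiv ℝ (scaledConv k s g) z v = s⁻¹ • scaledConv (dirDeriv k v) s g z := by
  have hk' := hk.comp_inv_smul hs
  have hint : Integrable fun t =>
      (((ContinuousLinearMap.lsmul ℝ ℂ : ℂ →L[ℝ] W →L[ℝ] W).precompL ℂ)
        (fderiv ℝ (fun t => k (s⁻¹ • t)) t)) (g (z - t)) := by
    have := hk'.contDiff.continuous_fderiv (by simp)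
    refine Continuous.integrable_of_hasCompactSupport (by fun_prop)
      ((hk'.hasCompactSupport.fderiv (𝕜 := ℝ)).mono fun t ht => ?_)
    contrapose! ht
    simp only [Function.notMem_support] at ht ⊢
    rw [ht, map_zero, zero_apply]
  rw [(hasFDerivAt_scaledConv hk hs hg z).fderiv, scaledConv_eq_convolution _ hs,
    _root_.smul_apply, smul_comm]
  congr 1
  rw [convolution_def, convolution_def, ← integral_smul, ContinuousLinearMap.integral_apply hint]
  simp only [ContinuousLinearMap.precompL_apply, ContinuousLinearMap.lsmul_apply,
    dirDeriv_comp_inv_smul hk, smul_assoc]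

lemma fderiv_scaledConv_apply_of_contDiff (hk : IsTestKernel k) {s : ℝ}
    (hs : 0 < s) (hg : ContDiff ℝ 1 g) (hgc : HasCompactSupport g) (z v : ℂ) :
    fderiv ℝ (scaledConv k s g) z v = scaledConv k s (fun z => fderiv ℝ g z v) z := by
  have hk' := (hk.comp_inv_smul hs).continuous.locallyIntegrable (μ := volume)
  have h := hgc.hasFDerivAt_convolution_right (ContinuousLinearMap.lsmul ℝ ℂ) (μ := volume)
    hk' hg z
  rw [((h.const_smul ((s ^ 2)⁻¹)).congr_of_eventuallyEq
    (Eventually.of_forall fun z => scaledConv_eq_convolution k hs g z)).fderiv,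
    scaledConv_eq_convolution _ hs, _root_.smul_apply,
    convolution_precompR_apply _ hk' (hgc.fderiv (𝕜 := ℝ)) (hg.continuous_fderiv (by simp))]

lemma integral_dirDeriv_eq_zero (hk : IsTestKernel k) (v : ℂ) : ∫ ζ, dirDeriv k v ζ = 0 := by
  have hconst : scaledConv k 1 (fun _ => (1 : ℂ)) =
      fun _ => scaledConv k 1 (fun _ => (1 : ℂ)) 0 := by
    ext
    simp [scaledConv]
  have h := fderiv_scaledConv_apply hk one_pos (g := fun _ => (1 : ℂ)) continuous_const 0 v
  rw [hconst, fderiv_const_apply] at h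
  simpa [scaledConv] using h.symm

end Kernel

section DyadicSeries

lemma summable_mul_half_pow (A : ℝ) : Summable fun j : ℕ => A * (1 / 2 : ℝ) ^ j :=
  summable_geometric_two.mul_left A

variable {X : Type*} [NormedAddCommGroup X] {a : ℕ → X} {A d : ℝ}

lemma norm_tsum_add_le_of_le_geometric (h : ∀ j, ‖a j‖ ≤ A * (1 / 2) ^ j) (n : ℕ) :
    ‖∑' j, a (j + n)‖ ≤ 2 * A * (1 / 2) ^ n := by
  refine tsum_of_norm_bounded (g := fun j : ℕ => A * (1 / 2) ^ n * (1 / 2 : ℝ) ^ j) ?_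
    fun j => (h _).trans_eq (by ring)
  rw [show 2 * A * (1 / 2) ^ n = A * (1 / 2) ^ n * 2 by ring]
  exact hasSum_geometric_two.mul_left _

lemma norm_tsum_le_of_le_geometric (h : ∀ j, ‖a j‖ ≤ A * (1 / 2) ^ j) :
    ‖∑' j, a j‖ ≤ 2 * A := by
  simpa using norm_tsum_add_le_of_le_geometric h 0

lemma norm_sum_range_le_of_le_geometric (hA : 0 ≤ A) (hd : 0 ≤ d)
    (h : ∀ j, ‖a j‖ ≤ A * 2 ^ j * d) (n : ℕ) :
    ‖∑ i ∈ Finset.range n, a i‖ ≤ A * d * 2 ^ n := by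
  calc ‖∑ i ∈ Finset.range n, a i‖ ≤ ∑ i ∈ Finset.range n, A * 2 ^ i * d :=
        norm_sum_le_of_le _ fun i _ => h i
    _ = A * d * ∑ i ∈ Finset.range n, (2 : ℝ) ^ i := by
        rw [Finset.mul_sum]
        exact Finset.sum_congr rfl fun i _ => by ring
    _ ≤ A * d * 2 ^ n := by
        gcongr
        rw [geom_sum_eq (by norm_num)]
        norm_num

/-- The series is split at the scale `2⁻ⁿ ≈ √d`, where the two bounds on its terms agree. -/
lemma norm_tsum_le_mul_sqrt [CompleteSpace X] (hA : 0 ≤ A) (hd : 0 ≤ d)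
    (hdecay : ∀ j, ‖a j‖ ≤ A * (1 / 2) ^ j) (hgrowth : ∀ j, ‖a j‖ ≤ A * 2 ^ j * d) :
    ‖∑' j, a j‖ ≤ 4 * A * √d := by
  rcases hd.eq_or_lt with rfl | hd0
  · have ha : ∀ j, a j = 0 := fun j => norm_le_zero_iff.1 (by simpa using hgrowth j)
    simp [ha]
  rcases le_or_gt (√d) 1 with hd1 | hd1
  · obtain ⟨n, hlow, hhigh⟩ := exists_nat_pow_near_of_lt_one (Real.sqrt_pos.2 hd0) hd1
      (y := (1 / 2 : ℝ)) (by norm_num) (by norm_num)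
    have hhead : ‖∑ i ∈ Finset.range (n + 1), a i‖ ≤ 2 * A * √d := by
      calc ‖∑ i ∈ Finset.range (n + 1), a i‖ ≤ A * d * 2 ^ (n + 1) :=
            norm_sum_range_le_of_le_geometric hA hd hgrowth _
        _ = 2 * A * √d * (√d * 2 ^ n) := by
            rw [pow_succ]
            nth_rw 1 [← Real.mul_self_sqrt hd]
            ring
        _ ≤ 2 * A * √d * ((1 / 2) ^ n * 2 ^ n) := by gcongr
        _ = 2 * A * √d := by rw [← mul_pow]; norm_num
    have htail : ‖∑' j, a (j + (n + 1))‖ ≤ 2 * A * √d :=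
      (norm_tsum_add_le_of_le_geometric hdecay _).trans (by gcongr)
    rw [← (Summable.of_norm_bounded (summable_mul_half_pow A) hdecay).sum_add_tsum_nat_add (n + 1)]
    linarith [norm_add_le (∑ i ∈ Finset.range (n + 1), a i) (∑' j, a (j + (n + 1)))]
  · calc ‖∑' j, a j‖ ≤ 2 * A := norm_tsum_le_of_le_geometric hdecay
      _ ≤ 4 * A * 1 := by linarith
      _ ≤ 4 * A * √d := by gcongr

end DyadicSeries

section DyadicOperators

/-- The scale `4⁻ʲ`, written as a square because half-Hölder increments at this scale have size
`2⁻ʲ`. -/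
noncomputable def dyadicScale (j : ℕ) : ℝ := ((1 / 2 : ℝ) ^ j) ^ 2

lemma dyadicScale_pos (j : ℕ) : 0 < dyadicScale j := by
  unfold dyadicScale
  positivity

lemma dyadicScale_le_half_pow (j : ℕ) : dyadicScale j ≤ (1 / 2) ^ j :=
  pow_le_of_le_one (by positivity) (pow_le_one₀ (by norm_num) (by norm_num)) two_ne_zero

lemma tendsto_dyadicScale : Tendsto dyadicScale atTop (𝓝 0) :=
  squeeze_zero (fun j => (dyadicScale_pos j).le) dyadicScale_le_half_pow
    (tendsto_pow_atTop_nhds_zero_of_lt_one (by norm_num) (by norm_num))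

lemma inv_dyadicScale_mul_half_pow (j : ℕ) : (dyadicScale j)⁻¹ * (1 / 2) ^ j = 2 ^ j := by
  unfold dyadicScale
  rw [one_div, inv_pow]
  field_simp

variable {W : Type*} [NormedAddCommGroup W] [NormedSpace ℝ W] [NormedSpace ℂ W]

/-- The sum of the dyadic rescalings of `k` acting on `g`: a singular integral operator when `k`
has mean zero. -/
noncomputable def dyadicSingularIntegral (k : ℂ → ℂ) (g : ℂ → W) (z : ℂ) : W :=
  ∑' j, scaledConv k (dyadicScale j) g z

/-- The sum of the dyadic rescalings of `k` acting on `g`, weighted by their scale: an operator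
which gains one derivative. -/
noncomputable def dyadicPotential (k : ℂ → ℂ) (g : ℂ → W) (z : ℂ) : W :=
  ∑' j, dyadicScale j • scaledConv k (dyadicScale j) g z

/-- The constant with which `dyadicSingularIntegral k` acts on half-Hölder functions. -/
noncomputable def singularConst (k : ℂ → ℂ) : ℝ :=
  8 * (kernelNorm k + (kernelNorm (dirDeriv k 1) + kernelNorm (dirDeriv k I)))

lemma singularConst_nonneg (k : ℂ → ℂ) : 0 ≤ singularConst k := by
  have := kernelNorm_nonneg
  unfold singularConst
  positivity [this k, this (dirDeriv k 1), this (dirDeriv k I)]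

variable {k : ℂ → ℂ} {g g' : ℂ → W} {M M' : ℝ}

lemma norm_dyadicScale_smul_scaledConv_le (hk : IsTestKernel k) (hg : ∀ z, ‖g z‖ ≤ M) (z : ℂ)
    (j : ℕ) :
    ‖dyadicScale j • scaledConv k (dyadicScale j) g z‖ ≤ kernelNorm k * M * (1 / 2) ^ j := by
  rw [norm_smul, Real.norm_of_nonneg (dyadicScale_pos j).le, mul_comm]
  exact mul_le_mul (norm_scaledConv_le hk _ hg z) (dyadicScale_le_half_pow j)
    (dyadicScale_pos j).le (mul_nonneg (kernelNorm_nonneg k) ((norm_nonneg _).trans (hg 0)))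

lemma norm_dyadicPotential_le (hk : IsTestKernel k) (hg : ∀ z, ‖g z‖ ≤ M) (z : ℂ) :
    ‖dyadicPotential k g z‖ ≤ 2 * (kernelNorm k * M) :=
  norm_tsum_le_of_le_geometric (norm_dyadicScale_smul_scaledConv_le hk hg z)

variable [CompleteSpace W]

lemma summable_dyadicScale_smul_scaledConv (hk : IsTestKernel k) (hg : ∀ z, ‖g z‖ ≤ M) (z : ℂ) :
    Summable fun j => dyadicScale j • scaledConv k (dyadicScale j) g z :=
  Summable.of_norm_bounded (summable_mul_half_pow _) (norm_dyadicScale_smul_scaledConv_le hk hg z)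

lemma dyadicPotential_sub (hk : IsTestKernel k) (hg : HalfHolderBound g M)
    (hg' : HalfHolderBound g' M') (z : ℂ) :
    dyadicPotential k (g - g') z = dyadicPotential k g z - dyadicPotential k g' z := by
  unfold dyadicPotential
  rw [← (summable_dyadicScale_smul_scaledConv hk hg.norm_le z).tsum_sub
    (summable_dyadicScale_smul_scaledConv hk hg'.norm_le z)]
  exact tsum_congr fun j => by rw [scaledConv_sub hk _ hg.continuous hg'.continuous, smul_sub]

lemma norm_scaledConv_dyadicScale_le (hk : IsTestKernel k) (hk0 : ∫ ζ, k ζ = 0)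
    (hg : HalfHolderBound g M) (z : ℂ) (j : ℕ) :
    ‖scaledConv k (dyadicScale j) g z‖ ≤ kernelNorm k * M * (1 / 2) ^ j :=
  (norm_scaledConv_sq_le hk hk0 (by positivity) hg z).trans_eq (by ring)

lemma summable_scaledConv_dyadicScale (hk : IsTestKernel k) (hk0 : ∫ ζ, k ζ = 0)
    (hg : HalfHolderBound g M) (z : ℂ) : Summable fun j => scaledConv k (dyadicScale j) g z :=
  Summable.of_norm_bounded (summable_mul_half_pow _) (norm_scaledConv_dyadicScale_le hk hk0 hg z)

lemma dyadicSingularIntegral_sub (hk : IsTestKernel k) (hk0 : ∫ ζ, k ζ = 0)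
    (hg : HalfHolderBound g M) (hg' : HalfHolderBound g' M') (z : ℂ) :
    dyadicSingularIntegral k (g - g') z =
      dyadicSingularIntegral k g z - dyadicSingularIntegral k g' z := by
  unfold dyadicSingularIntegral
  rw [← (summable_scaledConv_dyadicScale hk hk0 hg z).tsum_sub
    (summable_scaledConv_dyadicScale hk hk0 hg' z)]
  exact tsum_congr fun j => scaledConv_sub hk _ hg.continuous hg'.continuous z

variable [IsScalarTower ℝ ℂ W]

lemma norm_fderiv_scaledConv_dyadicScale_le (hk : IsTestKernel k) (hg : HalfHolderBound g M)
    (j : ℕ) (z : ℂ) :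
    ‖fderiv ℝ (scaledConv k (dyadicScale j) g) z‖ ≤
      (kernelNorm (dirDeriv k 1) + kernelNorm (dirDeriv k I)) * M * 2 ^ j := by
  have hdir : ∀ v, ‖fderiv ℝ (scaledConv k (dyadicScale j) g) z v‖ ≤
      kernelNorm (dirDeriv k v) * M * 2 ^ j := fun v => by
    rw [fderiv_scaledConv_apply hk (dyadicScale_pos j) hg.continuous, norm_smul, norm_inv,
      Real.norm_of_nonneg (dyadicScale_pos j).le, ← inv_dyadicScale_mul_half_pow, mul_left_comm]
    have := dyadicScale_pos j
    gcongr
    exact norm_scaledConv_dyadicScale_le (hk.dirDeriv v) (integral_dirDeriv_eq_zero hk v) hg z j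
  refine (opNorm_le_norm_one_add_norm_I _).trans ((add_le_add (hdir 1) (hdir I)).trans_eq ?_)
  ring

lemma norm_dyadicSingularIntegral_sub_le (hk : IsTestKernel k) (hk0 : ∫ ζ, k ζ = 0)
    (hg : HalfHolderBound g M) (z z' : ℂ) :
    ‖dyadicSingularIntegral k g z - dyadicSingularIntegral k g z'‖ ≤
      singularConst k * M * √‖z - z'‖ := by
  have hM := hg.nonneg
  have hn := kernelNorm_nonneg k
  have hn' := add_nonneg (kernelNorm_nonneg (dirDeriv k 1)) (kernelNorm_nonneg (dirDeriv k I))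
  unfold dyadicSingularIntegral
  rw [← (summable_scaledConv_dyadicScale hk hk0 hg z).tsum_sub
      (summable_scaledConv_dyadicScale hk hk0 hg z'),
    show singularConst k * M = 4 * (2 * (kernelNorm k +
      (kernelNorm (dirDeriv k 1) + kernelNorm (dirDeriv k I))) * M) by unfold singularConst; ring]
  refine norm_tsum_le_mul_sqrt (by positivity) (norm_nonneg _) (fun j => ?_) fun j => ?_
  · have hz := norm_scaledConv_dyadicScale_le hk hk0 hg z j
    have hz' := norm_scaledConv_dyadicScale_le hk hk0 hg z' j
    calc _ ≤ _ := norm_sub_le _ _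
      _ ≤ 2 * kernelNorm k * M * (1 / 2) ^ j := by linarith
      _ ≤ _ := by
        gcongr
        linarith
  · refine (convex_univ.norm_image_sub_le_of_norm_fderiv_le
      (fun z _ => differentiable_scaledConv hk (dyadicScale_pos j) hg.continuous z)
      (fun z _ => norm_fderiv_scaledConv_dyadicScale_le hk hg j z)
      (Set.mem_univ z') (Set.mem_univ z)).trans ?_
    gcongr
    linarith

lemma halfHolderBound_dyadicSingularIntegral (hk : IsTestKernel k) (hk0 : ∫ ζ, k ζ = 0)
    (hg : HalfHolderBound g M) :
    HalfHolderBound (dyadicSingularIntegral k g) (singularConst k * M) where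
  norm_le z := by
    have hM := hg.nonneg
    refine (norm_tsum_le_of_le_geometric (norm_scaledConv_dyadicScale_le hk hk0 hg z)).trans ?_
    rw [← mul_assoc]
    gcongr
    unfold singularConst
    linarith [kernelNorm_nonneg k, kernelNorm_nonneg (dirDeriv k 1),
      kernelNorm_nonneg (dirDeriv k I)]
  norm_sub_le := norm_dyadicSingularIntegral_sub_le hk hk0 hg

lemma norm_dyadicScale_smul_fderiv_scaledConv_le (hk : IsTestKernel k) (hg : HalfHolderBound g M)
    (j : ℕ) (z : ℂ) :
    ‖dyadicScale j • fderiv ℝ (scaledConv k (dyadicScale j) g) z‖ ≤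
      (kernelNorm (dirDeriv k 1) + kernelNorm (dirDeriv k I)) * M * (1 / 2) ^ j := by
  have hscale : dyadicScale j * 2 ^ j = (1 / 2) ^ j := by
    rw [← inv_dyadicScale_mul_half_pow, mul_inv_cancel_left₀ (dyadicScale_pos j).ne']
  rw [norm_smul, Real.norm_of_nonneg (dyadicScale_pos j).le, ← hscale, mul_left_comm]
  exact mul_le_mul_of_nonneg_left (norm_fderiv_scaledConv_dyadicScale_le hk hg j z)
    (dyadicScale_pos j).le

lemma hasFDerivAt_dyadicPotential (hk : IsTestKernel k) (hg : HalfHolderBound g M) (z : ℂ) :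
    HasFDerivAt (dyadicPotential k g)
      (∑' j, dyadicScale j • fderiv ℝ (scaledConv k (dyadicScale j) g) z) z :=
  hasFDerivAt_tsum (x₀ := 0) (summable_mul_half_pow _)
    (fun j z => ((differentiable_scaledConv hk (dyadicScale_pos j) hg.continuous
      z).hasFDerivAt).const_smul (dyadicScale j))
    (norm_dyadicScale_smul_fderiv_scaledConv_le hk hg)
    (summable_dyadicScale_smul_scaledConv hk hg.norm_le 0) z

lemma fderiv_dyadicPotential_apply (hk : IsTestKernel k) (hg : HalfHolderBound g M) (z v : ℂ) :
    fderiv ℝ (dyadicPotential k g) z v = dyadicSingularIntegral (dirDeriv k v) g z := by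
  have hsum : Summable fun j => dyadicScale j • fderiv ℝ (scaledConv k (dyadicScale j) g) z :=
    Summable.of_norm_bounded (summable_mul_half_pow _)
      fun j => norm_dyadicScale_smul_fderiv_scaledConv_le hk hg j z
  rw [(hasFDerivAt_dyadicPotential hk hg z).fderiv]
  refine ((ContinuousLinearMap.apply ℝ W v).map_tsum hsum).trans (tsum_congr fun j => ?_)
  rw [ContinuousLinearMap.apply_apply, _root_.smul_apply,
    fderiv_scaledConv_apply hk (dyadicScale_pos j) hg.continuous,
    smul_inv_smul₀ (dyadicScale_pos j).ne']

end DyadicOperators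

section CauchyKernel

/-- A smooth decreasing cutoff, equal to `1` on `(-∞, 4]` and to `0` on `[5, ∞)`. -/
noncomputable def cutoff (t : ℝ) : ℝ := Real.smoothTransition (5 - t)

lemma contDiff_cutoff : ContDiff ℝ ∞ cutoff :=
  Real.smoothTransition.contDiff.comp (contDiff_const.sub contDiff_id)

lemma antitone_cutoff : Antitone cutoff :=
  fun _ _ h => Real.smoothTransition.monotone (by linarith)

lemma cutoff_eq_one {t : ℝ} (h : t ≤ 4) : cutoff t = 1 :=
  Real.smoothTransition.one_of_one_le (by linarith)

lemma cutoff_eq_zero {t : ℝ} (h : 5 ≤ t) : cutoff t = 0 :=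
  Real.smoothTransition.zero_of_nonpos (by linarith)

lemma deriv_cutoff_eq_zero {t : ℝ} (h : t < 4 ∨ 5 < t) : deriv cutoff t = 0 := by
  rcases h with h | h
  · have hconst : cutoff =ᶠ[𝓝 t] fun _ => 1 := by
      filter_upwards [gt_mem_nhds h] with x hx using cutoff_eq_one hx.le
    rw [hconst.deriv_eq, deriv_const]
  · have hconst : cutoff =ᶠ[𝓝 t] fun _ => 0 := by
      filter_upwards [lt_mem_nhds h] with x hx using cutoff_eq_zero hx.le
    rw [hconst.deriv_eq, deriv_const]

lemma exists_deriv_cutoff_ne_zero : ∃ t, 0 ≤ t ∧ deriv cutoff t ≠ 0 := by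
  by_contra! hzero
  have hall : ∀ t, deriv cutoff t = 0 := fun t =>
    (le_or_gt 0 t).elim (hzero t) fun h => deriv_cutoff_eq_zero (Or.inl (by linarith))
  have h := is_const_of_deriv_eq_zero (contDiff_cutoff.differentiable (by simp)) hall 0 6
  rw [cutoff_eq_one (by norm_num), cutoff_eq_zero (by norm_num)] at h
  norm_num at h

/-- The radial profile of the dyadic piece of the Cauchy kernel, in the variable `t = ‖ζ‖ ^ 2`.
The division by zero at `t = 0` is harmless, since the numerator vanishes for `t ≤ 1 / 4`. -/
noncomputable def cauchyProfile (t : ℝ) : ℝ := (cutoff t - cutoff (16 * t)) / t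

lemma contDiff_cauchyProfile : ContDiff ℝ ∞ cauchyProfile := by
  refine contDiff_iff_contDiffAt.2 fun t => ?_
  rcases lt_or_ge t (1 / 4) with h | h
  · refine (contDiffAt_const (c := 0)).congr_of_eventuallyEq ?_
    filter_upwards [gt_mem_nhds h] with x hx
    rw [cauchyProfile, cutoff_eq_one (by linarith), cutoff_eq_one (by linarith), sub_self, zero_div]
  · exact (contDiff_cutoff.sub
      (contDiff_cutoff.comp (contDiff_const.mul contDiff_id))).contDiffAt.div
      contDiffAt_id (by linarith)

lemma mul_cauchyProfile (t : ℝ) : t * cauchyProfile t = cutoff t - cutoff (16 * t) := by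
  unfold cauchyProfile
  rcases eq_or_ne t 0 with rfl | h
  · simp
  · field_simp

lemma cauchyProfile_add_mul_deriv (t : ℝ) :
    cauchyProfile t + t * deriv cauchyProfile t = deriv cutoff t - 16 * deriv cutoff (16 * t) := by
  have hcut : ∀ s, HasDerivAt cutoff (deriv cutoff s) s := fun s =>
    (contDiff_cutoff.differentiable (by simp) s).hasDerivAt
  have hlhs := (hasDerivAt_id t).mul (contDiff_cauchyProfile.differentiable (by simp) t).hasDerivAt
  have hrhs := (hcut t).sub ((hcut (16 * t)).comp t (hasDerivAt_const_mul (16 : ℝ)))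
  rw [show (id * cauchyProfile : ℝ → ℝ) = cutoff - cutoff ∘ fun t => 16 * t from
    funext mul_cauchyProfile] at hlhs
  have h := hlhs.unique hrhs
  rw [id_eq] at h
  linear_combination h

/-- The dyadic piece `ζ̄ (η(|ζ|²) - η(16|ζ|²)) / |ζ|²` of the Cauchy kernel `1 / ζ`, where `η` is
`cutoff`; its rescalings by the factors `4⁻ʲ` add up to `1 / ζ` near the origin. -/
noncomputable def cauchyPiece (ζ : ℂ) : ℂ := cauchyProfile (‖ζ‖ ^ 2) * starRingEnd ℂ ζ

/-- A nonnegative radial bump, supported in the annulus `2 ≤ ‖ζ‖ ≤ 3`: the Cauchy kernel truncated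
at a given scale solves `∂̄ u = g` up to averaging `g` with this bump at that scale. -/
noncomputable def annularBump (ζ : ℂ) : ℝ := -(2 * deriv cutoff (‖ζ‖ ^ 2))

/-- `annularBump` as a kernel. -/
noncomputable def annularKernel (ζ : ℂ) : ℂ := annularBump ζ

lemma contDiff_annularBump : ContDiff ℝ ∞ annularBump :=
  (contDiff_const.mul ((contDiff_infty_iff_deriv.1 contDiff_cutoff).2.comp
    (contDiff_norm_sq ℝ))).neg

lemma annularBump_nonneg (ζ : ℂ) : 0 ≤ annularBump ζ := by
  have : deriv cutoff (‖ζ‖ ^ 2) ≤ 0 := antitone_cutoff.deriv_nonpos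
  unfold annularBump
  linarith

lemma annularKernel_eq_zero_of_norm_lt {ζ : ℂ} (h : ‖ζ‖ < 2) : annularKernel ζ = 0 := by
  have : ‖ζ‖ ^ 2 < 4 := by nlinarith [norm_nonneg ζ]
  simp [annularKernel, annularBump, deriv_cutoff_eq_zero (Or.inl this)]

lemma hasCompactSupport_annularBump : HasCompactSupport annularBump := by
  refine HasCompactSupport.intro (isCompact_closedBall (0 : ℂ) 3) fun ζ hζ => ?_
  have hζ' : 3 < ‖ζ‖ := by simpa using hζ
  have : 5 < ‖ζ‖ ^ 2 := by nlinarith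
  simp [annularBump, deriv_cutoff_eq_zero (Or.inr this)]

lemma isTestKernel_annularKernel : IsTestKernel annularKernel where
  contDiff := ofRealCLM.contDiff.comp contDiff_annularBump
  hasCompactSupport := hasCompactSupport_annularBump.comp_left ofReal_zero

lemma isTestKernel_cauchyPiece : IsTestKernel cauchyPiece where
  contDiff := (ofRealCLM.contDiff.comp
    (contDiff_cauchyProfile.comp (contDiff_norm_sq ℝ))).mul conjCLE.contDiff
  hasCompactSupport := by
    refine HasCompactSupport.intro (isCompact_closedBall (0 : ℂ) 3) fun ζ hζ => ?_
    have hζ' : 3 < ‖ζ‖ := by simpa using hζ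
    have : 9 < ‖ζ‖ ^ 2 := by nlinarith
    simp [cauchyPiece, cauchyProfile, cutoff_eq_zero (show (5 : ℝ) ≤ ‖ζ‖ ^ 2 by linarith),
      cutoff_eq_zero (show (5 : ℝ) ≤ 16 * ‖ζ‖ ^ 2 by linarith)]

lemma fderiv_cauchyPiece_apply (ζ v : ℂ) :
    fderiv ℝ cauchyPiece ζ v = cauchyProfile (‖ζ‖ ^ 2) * starRingEnd ℂ v +
      starRingEnd ℂ ζ * (deriv cauchyProfile (‖ζ‖ ^ 2) * (2 * (inner ℝ ζ v : ℝ))) := by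
  have hprofile : HasFDerivAt (fun ζ : ℂ => cauchyProfile (‖ζ‖ ^ 2)) _ ζ :=
    (contDiff_cauchyProfile.differentiable (by simp) _).hasDerivAt.comp_hasFDerivAt ζ
      (hasStrictFDerivAt_norm_sq ζ).hasFDerivAt
  have h := (ofRealCLM.hasFDerivAt.comp ζ hprofile).mul
    (conjCLE.toContinuousLinearMap.hasFDerivAt (x := ζ))
  rw [show fderiv ℝ cauchyPiece ζ = _ from HasFDerivAt.fderiv (f := cauchyPiece) h]
  simp [-Complex.inner, mul_comm]

lemma dbar_cauchyPiece (ζ : ℂ) :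
    dbar cauchyPiece ζ = 16 * annularKernel (4 * ζ) - annularKernel ζ := by
  have hprofile := congrArg ofReal (cauchyProfile_add_mul_deriv (‖ζ‖ ^ 2))
  have hsq : ((‖ζ‖ ^ 2 : ℝ) : ℂ) = ζ * starRingEnd ℂ ζ := by
    rw [Complex.mul_conj, Complex.normSq_eq_norm_sq]
  have hone : (inner ℝ ζ (1 : ℂ) : ℝ) = ζ.re := by simp [Complex.inner]
  have hI : (inner ℝ ζ I : ℝ) = ζ.im := by simp [Complex.inner]
  have hfour : ‖4 * ζ‖ ^ 2 = 16 * ‖ζ‖ ^ 2 := by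
    rw [norm_mul]
    norm_num
    ring
  simp only [ofReal_add, ofReal_mul, ofReal_sub, hsq, ofReal_ofNat] at hprofile
  simp only [dbar, fderiv_cauchyPiece_apply, hone, hI, map_one, conj_I, smul_eq_mul, annularKernel,
    annularBump, hfour, ofReal_neg, ofReal_mul, ofReal_ofNat]
  linear_combination 2 * hprofile
    + 2 * starRingEnd ℂ ζ * (deriv cauchyProfile (‖ζ‖ ^ 2) : ℝ) * Complex.re_add_im ζ
    - (cauchyProfile (‖ζ‖ ^ 2) : ℝ) * I_mul_I

/-- The total mass of `annularKernel`, which normalizes the Cauchy transform. -/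
noncomputable def cauchyMass : ℂ := ∫ ζ, annularKernel ζ

lemma cauchyMass_ne_zero : cauchyMass ≠ 0 := by
  obtain ⟨t, ht, hderiv⟩ := exists_deriv_cutoff_ne_zero
  have hnorm : ‖((√t : ℝ) : ℂ)‖ ^ 2 = t := by
    rw [Complex.norm_real, Real.norm_eq_abs, sq_abs, Real.sq_sqrt ht]
  have hpos : 0 < ∫ ζ, annularBump ζ :=
    contDiff_annularBump.continuous.integral_pos_of_hasCompactSupport_nonneg_nonzero
      hasCompactSupport_annularBump annularBump_nonneg (x := ((√t : ℝ) : ℂ))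
      (by simpa only [annularBump, hnorm, ne_eq, neg_eq_zero, mul_eq_zero, two_ne_zero, false_or])
  unfold cauchyMass annularKernel
  rw [integral_complex_ofReal]
  exact ofReal_ne_zero.2 hpos.ne'

end CauchyKernel

section Telescoping

variable {W : Type*} [NormedAddCommGroup W] [NormedSpace ℝ W] [NormedSpace ℂ W]
  {g : ℂ → W}

lemma scaledConv_annularKernel_eq_zero (hs : ∀ z, 1 ≤ ‖z‖ → g z = 0) {z : ℂ} (hz : ‖z‖ < 1) :
    scaledConv annularKernel 1 g z = 0 := by
  refine integral_eq_zero_of_ae (Eventually.of_forall fun ζ => ?_)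
  rcases lt_or_ge ‖ζ‖ 2 with h | h
  · simp [annularKernel_eq_zero_of_norm_lt h]
  · have hfar : 1 ≤ ‖z - ζ‖ := by linarith [norm_sub_norm_le ζ z, norm_sub_rev ζ z]
    simp [hs _ hfar]

lemma tendsto_scaledConv_annularKernel [CompleteSpace W] (hg : Continuous g) {M : ℝ}
    (hM : ∀ z, ‖g z‖ ≤ M) (z : ℂ) :
    Tendsto (fun n => scaledConv annularKernel (dyadicScale n) g z) atTop
      (𝓝 (cauchyMass • g z)) := by
  have hψ := isTestKernel_annularKernel
  rw [cauchyMass, ← integral_smul_const]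
  refine tendsto_integral_of_dominated_convergence (fun ζ => ‖annularKernel ζ‖ * M)
    (fun n => (integrable_kernel_smul hψ _ hg z).aestronglyMeasurable)
    (hψ.integrable.norm.mul_const M)
    (fun n => Eventually.of_forall fun ζ => ?_) (Eventually.of_forall fun ζ => ?_)
  · rw [norm_smul]
    gcongr
    exact hM _
  · have h : Tendsto (fun n => z - dyadicScale n • ζ) atTop (𝓝 (z - (0 : ℝ) • ζ)) :=
      tendsto_const_nhds.sub (tendsto_dyadicScale.smul_const ζ)
    rw [zero_smul, sub_zero] at h
    exact ((hg.tendsto z).comp h).const_smul _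

variable [IsScalarTower ℝ ℂ W]

lemma scaledConv_dyadicScale_succ (k : ℂ → ℂ) (g : ℂ → W) (z : ℂ) (j : ℕ) :
    scaledConv k (dyadicScale (j + 1)) g z =
      scaledConv (fun ζ => 16 * k (4 * ζ)) (dyadicScale j) g z := by
  have hscale : ∀ ζ : ℂ, dyadicScale (j + 1) • (4 : ℝ) • ζ = dyadicScale j • ζ := fun ζ => by
    rw [smul_smul, dyadicScale, dyadicScale, pow_succ]
    congr 1
    ring
  have hchange := Measure.integral_comp_smul (volume : Measure ℂ)
    (fun ζ => k ζ • g (z - dyadicScale (j + 1) • ζ)) 4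
  rw [Complex.finrank_real_complex, abs_of_pos (by positivity), eq_inv_smul_iff₀ (by norm_num),
    ← integral_smul] at hchange
  rw [scaledConv, ← hchange, scaledConv]
  refine integral_congr_ae (Eventually.of_forall fun ζ => ?_)
  simp only [hscale, ← smul_assoc]
  norm_num

lemma scaledConv_dbar_cauchyPiece (hg : Continuous g) (z : ℂ) (j : ℕ) :
    scaledConv (dirDeriv cauchyPiece 1) (dyadicScale j) g z +
        I • scaledConv (dirDeriv cauchyPiece I) (dyadicScale j) g z =
      scaledConv annularKernel (dyadicScale (j + 1)) g z -
        scaledConv annularKernel (dyadicScale j) g z := by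
  have hφ := isTestKernel_cauchyPiece
  have hψ := isTestKernel_annularKernel
  have hψ4 : IsTestKernel fun ζ => 16 * annularKernel (4 * ζ) := by
    have h := hψ.comp_inv_smul (s := 4⁻¹) (by norm_num)
    simp only [inv_inv, real_smul, ofReal_ofNat] at h
    exact ⟨contDiff_const.mul h.contDiff, h.hasCompactSupport.mul_left⟩
  rw [scaledConv_dyadicScale_succ]
  unfold scaledConv
  have hI : Integrable fun ζ => I • dirDeriv cauchyPiece I ζ • g (z - dyadicScale j • ζ) :=
    (integrable_kernel_smul (hφ.dirDeriv I) _ hg z).smul I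
  rw [← integral_smul, ← integral_add (integrable_kernel_smul (hφ.dirDeriv 1) _ hg z) hI,
    ← integral_sub (integrable_kernel_smul hψ4 _ hg z) (integrable_kernel_smul hψ _ hg z)]
  refine integral_congr_ae (Eventually.of_forall fun ζ => ?_)
  simp only
  rw [smul_smul, ← add_smul, ← sub_smul, ← dbar_cauchyPiece, dbar, dirDeriv, dirDeriv, smul_eq_mul]

lemma tendsto_sum_scaledConv_dbar_cauchyPiece [CompleteSpace W] (hg : Continuous g) {M : ℝ}
    (hM : ∀ z, ‖g z‖ ≤ M) (hs : ∀ z, 1 ≤ ‖z‖ → g z = 0) {z : ℂ} (hz : ‖z‖ < 1) :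
    Tendsto (fun n => ∑ j ∈ Finset.range n,
      (scaledConv (dirDeriv cauchyPiece 1) (dyadicScale j) g z +
        I • scaledConv (dirDeriv cauchyPiece I) (dyadicScale j) g z))
      atTop (𝓝 (cauchyMass • g z)) := by
  have hzero : scaledConv annularKernel (dyadicScale 0) g z = 0 := by
    rw [dyadicScale, pow_zero, one_pow, scaledConv_annularKernel_eq_zero hs hz]
  simp_rw [scaledConv_dbar_cauchyPiece hg z,
    Finset.sum_range_sub fun n => scaledConv annularKernel (dyadicScale n) g z, hzero, sub_zero]
  exact tendsto_scaledConv_annularKernel hg hM z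

end Telescoping

section CauchyTransform

variable {W : Type*} [NormedAddCommGroup W] [NormedSpace ℝ W] [NormedSpace ℂ W]

/-- The Cauchy transform, a right inverse of `dbar` on the unit disc. -/
noncomputable def cauchyTransform (g : ℂ → W) (z : ℂ) : W :=
  cauchyMass⁻¹ • dyadicPotential cauchyPiece g z

/-- The Beurling transform `∂ ∘ ∂̄⁻¹`, a singular integral. -/
noncomputable def beurlingTransform (g : ℂ → W) (z : ℂ) : W :=
  cauchyMass⁻¹ • (dyadicSingularIntegral (dirDeriv cauchyPiece 1) g z -
    I • dyadicSingularIntegral (dirDeriv cauchyPiece I) g z)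

/-- A common bound for the norms of the Cauchy and Beurling transforms between the spaces in which
they are used; it is normalized to be at least `1`. -/
noncomputable def cauchyConst : ℝ :=
  ‖cauchyMass⁻¹‖ * (2 * kernelNorm cauchyPiece + singularConst (dirDeriv cauchyPiece 1) +
    singularConst (dirDeriv cauchyPiece I)) + 1

lemma one_le_cauchyConst : 1 ≤ cauchyConst := by
  have := kernelNorm_nonneg cauchyPiece
  have := singularConst_nonneg (dirDeriv cauchyPiece 1)
  have := singularConst_nonneg (dirDeriv cauchyPiece I)
  unfold cauchyConst
  linarith [show 0 ≤ ‖cauchyMass⁻¹‖ * (2 * kernelNorm cauchyPiece +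
    singularConst (dirDeriv cauchyPiece 1) + singularConst (dirDeriv cauchyPiece I)) by positivity]

lemma kernelNorm_le_cauchyConst : ‖cauchyMass⁻¹‖ * (2 * kernelNorm cauchyPiece) ≤ cauchyConst := by
  have := mul_nonneg (norm_nonneg cauchyMass⁻¹) (add_nonneg
    (singularConst_nonneg (dirDeriv cauchyPiece 1)) (singularConst_nonneg (dirDeriv cauchyPiece I)))
  unfold cauchyConst
  linarith

lemma singularConst_le_cauchyConst :
    ‖cauchyMass⁻¹‖ * (singularConst (dirDeriv cauchyPiece 1) +
      singularConst (dirDeriv cauchyPiece I)) ≤ cauchyConst := by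
  have := mul_nonneg (norm_nonneg cauchyMass⁻¹) (kernelNorm_nonneg cauchyPiece)
  unfold cauchyConst
  linarith

variable {g g' : ℂ → W} {M M' : ℝ}

lemma norm_cauchyTransform_le (hg : HalfHolderBound g M) (z : ℂ) :
    ‖cauchyTransform g z‖ ≤ cauchyConst * M := by
  have hM := hg.nonneg
  calc ‖cauchyTransform g z‖ ≤ ‖cauchyMass⁻¹‖ * (2 * (kernelNorm cauchyPiece * M)) := by
        rw [cauchyTransform, norm_smul]
        gcongr
        exact norm_dyadicPotential_le isTestKernel_cauchyPiece hg.norm_le z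
    _ = ‖cauchyMass⁻¹‖ * (2 * kernelNorm cauchyPiece) * M := by ring
    _ ≤ cauchyConst * M := by
        gcongr
        exact kernelNorm_le_cauchyConst

variable [CompleteSpace W]

lemma cauchyTransform_sub (hg : HalfHolderBound g M) (hg' : HalfHolderBound g' M') (z : ℂ) :
    cauchyTransform (g - g') z = cauchyTransform g z - cauchyTransform g' z := by
  simp only [cauchyTransform, dyadicPotential_sub isTestKernel_cauchyPiece hg hg', smul_sub]

lemma beurlingTransform_sub (hg : HalfHolderBound g M) (hg' : HalfHolderBound g' M') (z : ℂ) :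
    beurlingTransform (g - g') z = beurlingTransform g z - beurlingTransform g' z := by
  have hsub := fun v => dyadicSingularIntegral_sub (isTestKernel_cauchyPiece.dirDeriv v)
    (integral_dirDeriv_eq_zero isTestKernel_cauchyPiece v) hg hg' z
  simp only [beurlingTransform, hsub, smul_sub]
  abel

variable [IsScalarTower ℝ ℂ W]

lemma halfHolderBound_dyadicSingularIntegral_cauchyPiece (hg : HalfHolderBound g M) (v : ℂ) :
    HalfHolderBound (dyadicSingularIntegral (dirDeriv cauchyPiece v) g)
      (singularConst (dirDeriv cauchyPiece v) * M) :=
  halfHolderBound_dyadicSingularIntegral (isTestKernel_cauchyPiece.dirDeriv v)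
    (integral_dirDeriv_eq_zero isTestKernel_cauchyPiece v) hg

lemma halfHolderBound_beurlingTransform (hg : HalfHolderBound g M) :
    HalfHolderBound (beurlingTransform g) (cauchyConst * M) := by
  have hM := hg.nonneg
  refine HalfHolderBound.mono (((halfHolderBound_dyadicSingularIntegral_cauchyPiece hg 1).sub
    ((halfHolderBound_dyadicSingularIntegral_cauchyPiece hg I).const_smul I)).const_smul
      cauchyMass⁻¹) ?_
  calc _ = ‖cauchyMass⁻¹‖ * (singularConst (dirDeriv cauchyPiece 1) +
        singularConst (dirDeriv cauchyPiece I)) * M := by rw [norm_I]; ring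
    _ ≤ cauchyConst * M := by
        gcongr
        exact singularConst_le_cauchyConst

lemma differentiable_cauchyTransform (hg : HalfHolderBound g M) :
    Differentiable ℝ (cauchyTransform g) := fun z =>
  (hasFDerivAt_dyadicPotential isTestKernel_cauchyPiece hg z).differentiableAt.const_smul _

lemma fderiv_cauchyTransform_apply (hg : HalfHolderBound g M) (z v : ℂ) :
    fderiv ℝ (cauchyTransform g) z v =
      cauchyMass⁻¹ • dyadicSingularIntegral (dirDeriv cauchyPiece v) g z := by
  have h := (hasFDerivAt_dyadicPotential isTestKernel_cauchyPiece hg z).differentiableAt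
  rw [← fderiv_dyadicPotential_apply isTestKernel_cauchyPiece hg z v]
  exact congrArg (· v) (h.hasFDerivAt.const_smul cauchyMass⁻¹).fderiv

lemma contDiff_one_cauchyTransform (hg : HalfHolderBound g M) :
    ContDiff ℝ 1 (cauchyTransform g) := by
  refine contDiff_one_iff_fderiv.2 ⟨differentiable_cauchyTransform hg,
    continuous_of_continuous_apply_one_apply_I ?_ ?_⟩ <;>
  · simp_rw [fderiv_cauchyTransform_apply hg]
    exact (halfHolderBound_dyadicSingularIntegral_cauchyPiece hg _).continuous.const_smul _

lemma norm_fderiv_cauchyTransform_le (hg : HalfHolderBound g M) (z : ℂ) :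
    ‖fderiv ℝ (cauchyTransform g) z‖ ≤ cauchyConst * M := by
  have hM := hg.nonneg
  have hv := fun v => (halfHolderBound_dyadicSingularIntegral_cauchyPiece hg v).norm_le z
  calc ‖fderiv ℝ (cauchyTransform g) z‖
      ≤ ‖cauchyMass⁻¹‖ * (singularConst (dirDeriv cauchyPiece 1) * M) +
        ‖cauchyMass⁻¹‖ * (singularConst (dirDeriv cauchyPiece I) * M) := by
        refine (opNorm_le_norm_one_add_norm_I _).trans ?_
        rw [fderiv_cauchyTransform_apply hg, fderiv_cauchyTransform_apply hg, norm_smul, norm_smul]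
        gcongr <;> exact hv _
    _ = ‖cauchyMass⁻¹‖ * (singularConst (dirDeriv cauchyPiece 1) +
        singularConst (dirDeriv cauchyPiece I)) * M := by ring
    _ ≤ cauchyConst * M := by
        gcongr
        exact singularConst_le_cauchyConst

lemma norm_cauchyTransform_sub_le (hg : HalfHolderBound g M) (z z' : ℂ) :
    ‖cauchyTransform g z - cauchyTransform g z'‖ ≤ cauchyConst * M * ‖z - z'‖ :=
  convex_univ.norm_image_sub_le_of_norm_fderiv_le
    (fun x _ => differentiable_cauchyTransform hg x)
    (fun x _ => norm_fderiv_cauchyTransform_le hg x) (Set.mem_univ _) (Set.mem_univ _)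

lemma del_cauchyTransform (hg : HalfHolderBound g M) (z : ℂ) :
    del (cauchyTransform g) z = beurlingTransform g z := by
  rw [del, fderiv_cauchyTransform_apply hg, fderiv_cauchyTransform_apply hg, smul_comm I,
    ← smul_sub, beurlingTransform]

lemma dbar_cauchyTransform (hg : HalfHolderBound g M) (hs : ∀ z, 1 ≤ ‖z‖ → g z = 0) {z : ℂ}
    (hz : ‖z‖ < 1) : dbar (cauchyTransform g) z = g z := by
  have hsum := fun v => (summable_scaledConv_dyadicScale (isTestKernel_cauchyPiece.dirDeriv v)
    (integral_dirDeriv_eq_zero isTestKernel_cauchyPiece v) hg z).hasSum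
  have hdbar : dyadicSingularIntegral (dirDeriv cauchyPiece 1) g z +
      I • dyadicSingularIntegral (dirDeriv cauchyPiece I) g z = cauchyMass • g z :=
    tendsto_nhds_unique ((hsum 1).add ((hsum I).const_smul I)).tendsto_sum_nat
      (tendsto_sum_scaledConv_dbar_cauchyPiece hg.continuous hg.norm_le hs hz)
  rw [dbar, fderiv_cauchyTransform_apply hg, fderiv_cauchyTransform_apply hg, smul_comm I,
    ← smul_add, hdbar, inv_smul_smul₀ cauchyMass_ne_zero]

end CauchyTransform

section Pompeiu

variable {W : Type*} [NormedAddCommGroup W] [NormedSpace ℝ W] [NormedSpace ℂ W]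
  [IsScalarTower ℝ ℂ W] {u : ℂ → W}

lemma scaledConv_dirDeriv_eq_smul_scaledConv_fderiv {k : ℂ → ℂ} (hk : IsTestKernel k) {s : ℝ}
    (hs : 0 < s) (hu : ContDiff ℝ 1 u) (huc : HasCompactSupport u) (z v : ℂ) :
    scaledConv (dirDeriv k v) s u z = s • scaledConv k s (fun z => fderiv ℝ u z v) z := by
  rw [← fderiv_scaledConv_apply_of_contDiff hk hs hu huc,
    fderiv_scaledConv_apply hk hs hu.continuous, smul_inv_smul₀ hs.ne']

lemma scaledConv_dirDeriv_add_I_smul {k : ℂ → ℂ} (hk : IsTestKernel k) {s : ℝ} (hs : 0 < s)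
    (hu : ContDiff ℝ 1 u) (huc : HasCompactSupport u) (z : ℂ) :
    scaledConv (dirDeriv k 1) s u z + I • scaledConv (dirDeriv k I) s u z =
      s • scaledConv k s (dbar u) z := by
  have hfderiv := hu.continuous_fderiv (by simp)
  have hint := fun v =>
    integrable_kernel_smul hk s (hfderiv.clm_apply (continuous_const (y := v))) z
  rw [scaledConv_dirDeriv_eq_smul_scaledConv_fderiv hk hs hu huc,
    scaledConv_dirDeriv_eq_smul_scaledConv_fderiv hk hs hu huc, smul_comm I, ← smul_add]
  congr 1
  simp only [scaledConv]
  have hI : Integrable fun ζ => I • k ζ • fderiv ℝ u (z - s • ζ) I := (hint I).smul I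
  rw [← integral_smul, ← integral_add (hint 1) hI]
  refine integral_congr_ae (Eventually.of_forall fun ζ => ?_)
  simp only [dbar, smul_add, smul_comm I]

variable [CompleteSpace W]

lemma norm_le_of_norm_dbar_le (hu : ContDiff ℝ 1 u)
    (hs : ∀ z, 1 ≤ ‖z‖ → u z = 0) {m : ℝ} (hm : ∀ z, ‖dbar u z‖ ≤ m) (z : ℂ) :
    ‖u z‖ ≤ cauchyConst * m := by
  have hm0 : 0 ≤ m := (norm_nonneg _).trans (hm 0)
  rcases le_or_gt 1 ‖z‖ with hz | hz
  · rw [hs z hz, norm_zero]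
    exact mul_nonneg (zero_le_one.trans one_le_cauchyConst) hm0
  have huc : HasCompactSupport u := HasCompactSupport.intro (isCompact_closedBall (0 : ℂ) 1)
    fun x hx => hs x (by simpa using (not_le.1 (mt mem_closedBall_zero_iff.2 hx)).le)
  obtain ⟨M, hM⟩ := huc.exists_bound_of_continuous hu.continuous
  have hlim := tendsto_sum_scaledConv_dbar_cauchyPiece hu.continuous hM hs hz
  simp_rw [scaledConv_dirDeriv_add_I_smul isTestKernel_cauchyPiece (dyadicScale_pos _) hu huc]
    at hlim
  have hsum := summable_dyadicScale_smul_scaledConv isTestKernel_cauchyPiece hm z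
  have hmass : cauchyMass • u z = dyadicPotential cauchyPiece (dbar u) z :=
    tendsto_nhds_unique hlim hsum.hasSum.tendsto_sum_nat
  calc ‖u z‖ = ‖cauchyMass⁻¹‖ * ‖dyadicPotential cauchyPiece (dbar u) z‖ := by
        rw [← norm_smul, ← hmass, inv_smul_smul₀ cauchyMass_ne_zero]
    _ ≤ ‖cauchyMass⁻¹‖ * (2 * (kernelNorm cauchyPiece * m)) := by
        gcongr
        exact norm_dyadicPotential_le isTestKernel_cauchyPiece hm z
    _ = ‖cauchyMass⁻¹‖ * (2 * kernelNorm cauchyPiece) * m := by ring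
    _ ≤ cauchyConst * m := by
        gcongr
        exact kernelNorm_le_cauchyConst

end Pompeiu

section SecondOrderSmall

variable {E X : Type*} [NormedAddCommGroup E] [NormedAddCommGroup X]

/-- `A`, its first and its second differences are of size `ε`: a derivative-free way of saying that
`A` is `ε`-small in `C²`. -/
structure IsC2Small (A : E → X) (ε : ℝ) : Prop where
  nonneg : 0 ≤ ε
  norm_le : ∀ x, ‖A x‖ ≤ ε
  norm_sub_le : ∀ x y, ‖A x - A y‖ ≤ ε * ‖x - y‖
  norm_sub_sub_le : ∀ x y h, ‖(A (x + h) - A x) - (A (y + h) - A y)‖ ≤ ε * ‖h‖ * ‖x - y‖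

namespace IsC2Small

variable {A : E → X} {ε L : ℝ} {u v : ℂ → E}

lemma halfHolderBound_comp (hA : IsC2Small A ε) (hL : 1 ≤ L)
    (hu : ∀ z z', ‖u z - u z'‖ ≤ L * ‖z - z'‖) :
    HalfHolderBound (fun z => A (u z)) (2 * (ε * L)) := by
  have hε := hA.nonneg
  refine HalfHolderBound.of_lipschitz (fun z => (hA.norm_le _).trans ?_) fun z z' => ?_
  · nlinarith
  · rw [mul_assoc]
    exact (hA.norm_sub_le _ _).trans (by gcongr; exact hu z z')

lemma halfHolderBound_comp_sub_comp (hA : IsC2Small A ε) {a b : ℝ}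
    (hsub : ∀ z, ‖u z - v z‖ ≤ a) (hv : ∀ z z', ‖v z - v z'‖ ≤ L * ‖z - z'‖) (hL : 0 ≤ L)
    (hb : 0 ≤ b) (hsub' : ∀ z z', ‖(u z - v z) - (u z' - v z')‖ ≤ b * ‖z - z'‖) :
    HalfHolderBound (fun z => A (u z) - A (v z)) (2 * (ε * (a + a * L + b))) := by
  have hε := hA.nonneg
  have ha : 0 ≤ a := (norm_nonneg _).trans (hsub 0)
  refine HalfHolderBound.of_lipschitz (fun z => ?_) fun z z' => ?_
  · calc ‖A (u z) - A (v z)‖ ≤ ε * ‖u z - v z‖ := hA.norm_sub_le _ _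
      _ ≤ ε * (a + a * L + b) := by
          gcongr
          linarith [hsub z, mul_nonneg ha hL]
  · have hsplit : A (u z) - A (v z) - (A (u z') - A (v z')) =
        ((A (v z + (u z - v z)) - A (v z)) - (A (v z' + (u z - v z)) - A (v z'))) +
          (A (v z' + (u z - v z)) - A (v z' + (u z' - v z'))) := by
      simp only [add_sub_cancel]
      abel
    have hsecond : ε * ‖u z - v z‖ * ‖v z - v z'‖ ≤ ε * a * (L * ‖z - z'‖) := by
      gcongr
      exacts [hsub z, hv z z']
    have hfirst := hA.norm_sub_le (v z' + (u z - v z)) (v z' + (u z' - v z'))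
    rw [add_sub_add_left_eq_sub] at hfirst
    calc _ ≤ ε * a * (L * ‖z - z'‖) + ε * (b * ‖z - z'‖) := by
          rw [hsplit]
          refine norm_add_le_of_le ((hA.norm_sub_sub_le _ _ _).trans hsecond) (hfirst.trans ?_)
          gcongr
          exact hsub' z z'
      _ ≤ ε * (a + a * L + b) * ‖z - z'‖ := by
          have : 0 ≤ ε * a * ‖z - z'‖ := by positivity
          linarith

end IsC2Small

end SecondOrderSmall

section DiscOperator

/-- The perturbation `u` of the flat disc `z ↦ (z, w)` with `dbar u = g` on the unit disc. -/
noncomputable def discMap (w : ℂ) (g : ℂ → ℂ × ℂ) (z : ℂ) : ℂ × ℂ := (z, w) + cauchyTransform g z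

/-- The fixed points `g` of this operator that vanish off the unit disc correspond to the solutions
`u = discMap w g` of the equation `dbar u = A(u) (del u)` on the unit disc. -/
noncomputable def discOperator (A : ℂ × ℂ → ℂ × ℂ →L[ℝ] ℂ × ℂ) (w : ℂ) (g : ℂ → ℂ × ℂ) (z : ℂ) :
    ℂ × ℂ :=
  A (discMap w g z) ((2, 0) + beurlingTransform g z)

/-- The Lipschitz constant of `discOperator A`, per unit of the size of `A`. -/
noncomputable def discConst : ℝ := 100 * cauchyConst ^ 3

lemma one_le_discConst : 1 ≤ discConst := by
  have := one_le_pow₀ one_le_cauchyConst (n := 3)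
  unfold discConst
  linarith

lemma sq_cauchyConst_le : 100 * cauchyConst ^ 2 ≤ discConst := by
  unfold discConst
  gcongr
  · exact one_le_cauchyConst
  · norm_num

variable {A : ℂ × ℂ → ℂ × ℂ →L[ℝ] ℂ × ℂ} {ε : ℝ} {w w' : ℂ} {g g' : ℂ → ℂ × ℂ}

lemma norm_discMap_sub_le (hg : HalfHolderBound g 1) (z z' : ℂ) :
    ‖discMap w g z - discMap w g z'‖ ≤ 2 * cauchyConst * ‖z - z'‖ := by
  have hflat : ‖((z, w) : ℂ × ℂ) - (z', w)‖ = ‖z - z'‖ := by simp [Prod.norm_def]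
  have hcauchy := norm_cauchyTransform_sub_le hg z z'
  rw [discMap, discMap, add_sub_add_comm]
  refine (norm_add_le _ _).trans ?_
  rw [hflat]
  nlinarith [norm_nonneg (z - z'), one_le_cauchyConst]

lemma discMap_sub_discMap {M M' : ℝ} (hg : HalfHolderBound g M) (hg' : HalfHolderBound g' M')
    (z : ℂ) : discMap w g z - discMap w' g' z = (0, w - w') + cauchyTransform (g - g') z := by
  rw [cauchyTransform_sub hg hg', discMap, discMap, add_sub_add_comm, Prod.mk_sub_mk, sub_self]

lemma halfHolderBound_two_add_beurlingTransform (hg : HalfHolderBound g 1) :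
    HalfHolderBound (fun z => ((2, 0) : ℂ × ℂ) + beurlingTransform g z) (3 * cauchyConst) := by
  have hnorm : ‖((2, 0) : ℂ × ℂ)‖ = 2 := by simp [Prod.norm_def]
  refine ((HalfHolderBound.const _).add (halfHolderBound_beurlingTransform hg)).mono ?_
  linarith [one_le_cauchyConst]

lemma halfHolderBound_comp_discMap (hA : IsC2Small A ε) (hg : HalfHolderBound g 1) :
    HalfHolderBound (fun z => A (discMap w g z)) (2 * (ε * (2 * cauchyConst))) :=
  hA.halfHolderBound_comp (by linarith [one_le_cauchyConst]) (norm_discMap_sub_le hg)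

lemma halfHolderBound_discOperator (hA : IsC2Small A ε) (hg : HalfHolderBound g 1) :
    HalfHolderBound (discOperator A w g) (discConst * ε) := by
  have hε := hA.nonneg
  refine ((halfHolderBound_comp_discMap hA hg).clm_apply
    (halfHolderBound_two_add_beurlingTransform hg)).mono ?_
  have := mul_le_mul_of_nonneg_right sq_cauchyConst_le hε
  nlinarith [sq_nonneg cauchyConst]

lemma discOperator_sub_discOperator {M M' : ℝ} (hg : HalfHolderBound g M)
    (hg' : HalfHolderBound g' M') :
    discOperator A w g - discOperator A w' g' = fun z =>
      (A (discMap w g z) - A (discMap w' g' z)) ((2, 0) + beurlingTransform g z) +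
        A (discMap w' g' z) (beurlingTransform (g - g') z) := by
  ext1 z
  rw [beurlingTransform_sub hg hg']
  simp only [discOperator, Pi.sub_apply, _root_.sub_apply, map_add, map_sub]
  abel

lemma halfHolderBound_discOperator_sub (hA : IsC2Small A ε) (hg : HalfHolderBound g 1)
    (hg' : HalfHolderBound g' 1) {m : ℝ} (hm : HalfHolderBound (g - g') m) (hw : ‖w - w'‖ ≤ m) :
    HalfHolderBound (discOperator A w g - discOperator A w' g') (discConst * ε * m) := by
  have hC := one_le_cauchyConst
  have hε := hA.nonneg
  have hm0 := hm.nonneg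
  have hdist : ∀ z, ‖discMap w g z - discMap w' g' z‖ ≤ 2 * cauchyConst * m := fun z => by
    have hflat : ‖((0, w - w') : ℂ × ℂ)‖ = ‖w - w'‖ := by simp [Prod.norm_def]
    rw [discMap_sub_discMap hg hg']
    refine (norm_add_le _ _).trans ?_
    rw [hflat]
    nlinarith [norm_cauchyTransform_le hm z]
  have hdist_sub : ∀ z z', ‖(discMap w g z - discMap w' g' z) -
      (discMap w g z' - discMap w' g' z')‖ ≤ cauchyConst * m * ‖z - z'‖ := fun z z' => by
    rw [discMap_sub_discMap hg hg', discMap_sub_discMap hg hg', add_sub_add_left_eq_sub]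
    exact norm_cauchyTransform_sub_le hm z z'
  have hcoeff := hA.halfHolderBound_comp_sub_comp hdist (norm_discMap_sub_le hg')
    (by positivity) (by positivity) hdist_sub
  rw [discOperator_sub_discOperator hg hg']
  refine ((hcoeff.clm_apply (halfHolderBound_two_add_beurlingTransform hg)).add
    ((halfHolderBound_comp_discMap hA hg').clm_apply
      (halfHolderBound_beurlingTransform hm))).mono ?_
  have hpow : cauchyConst ^ 2 ≤ cauchyConst ^ 3 := by
    gcongr
    norm_num
  have := mul_le_mul_of_nonneg_right hpow (mul_nonneg hε hm0)
  have : 0 ≤ cauchyConst ^ 3 * (ε * m) := by positivity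
  unfold discConst
  linarith

end DiscOperator

section FixedPoint

variable {A : ℂ × ℂ → ℂ × ℂ →L[ℝ] ℂ × ℂ} {ε : ℝ}

lemma halfHolderBound_iterate_discOperator (hA : IsC2Small A ε) (hδ : discConst * ε ≤ 1) (w : ℂ)
    (n : ℕ) : HalfHolderBound ((discOperator A w)^[n] 0) (discConst * ε) := by
  induction n with
  | zero => exact .zero (mul_nonneg (zero_le_one.trans one_le_discConst) hA.nonneg)
  | succ n ih =>
    rw [Function.iterate_succ_apply']
    exact halfHolderBound_discOperator hA (ih.mono hδ)

lemma halfHolderBound_iterate_discOperator_sub_self (hA : IsC2Small A ε)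
    (hδ : discConst * ε ≤ 1) (w : ℂ) (n k : ℕ) :
    HalfHolderBound ((discOperator A w)^[n + k] 0 - (discOperator A w)^[n] 0)
      ((discConst * ε) ^ n) := by
  have hδ0 : 0 ≤ discConst * ε := mul_nonneg (zero_le_one.trans one_le_discConst) hA.nonneg
  have hiter := fun n => (halfHolderBound_iterate_discOperator hA hδ w n).mono hδ
  induction n with
  | zero => simpa using hiter k
  | succ n ih =>
    rw [add_right_comm, Function.iterate_succ_apply', Function.iterate_succ_apply', pow_succ']
    exact halfHolderBound_discOperator_sub hA (hiter _) (hiter _) ih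
      (by rw [sub_self, norm_zero]; positivity)

lemma halfHolderBound_iterate_discOperator_sub_parameter (hA : IsC2Small A ε)
    (hδ : discConst * ε ≤ 1) (w w' : ℂ) (n : ℕ) :
    HalfHolderBound ((discOperator A w)^[n] 0 - (discOperator A w')^[n] 0)
      (discConst * ε * ‖w - w'‖) := by
  have hδ0 : 0 ≤ discConst * ε := mul_nonneg (zero_le_one.trans one_le_discConst) hA.nonneg
  have hiter := fun w n => (halfHolderBound_iterate_discOperator hA hδ w n).mono hδ
  induction n with
  | zero =>
    rw [Function.iterate_zero, Function.iterate_zero, id_eq, sub_self]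
    exact .zero (by positivity)
  | succ n ih =>
    rw [Function.iterate_succ_apply', Function.iterate_succ_apply']
    exact halfHolderBound_discOperator_sub hA (hiter w n) (hiter w' n)
      (ih.mono (mul_le_of_le_one_left (norm_nonneg _) hδ)) le_rfl

lemma exists_tendsto_iterate_discOperator (hA : IsC2Small A ε) (hδ : discConst * ε < 1) (w : ℂ) :
    ∃ g : ℂ → ℂ × ℂ, ∀ z, Tendsto (fun n => (discOperator A w)^[n] 0 z) atTop (𝓝 (g z)) := by
  refine Classical.skolem.1 fun z => cauchySeq_tendsto_of_complete
    (cauchySeq_of_le_tendsto_0' (fun n => (discConst * ε) ^ n) (fun n m hnm => ?_)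
      (tendsto_pow_atTop_nhds_zero_of_lt_one
        (mul_nonneg (zero_le_one.trans one_le_discConst) hA.nonneg) hδ))
  obtain ⟨k, rfl⟩ := Nat.exists_eq_add_of_le hnm
  rw [dist_comm, dist_eq_norm]
  exact (halfHolderBound_iterate_discOperator_sub_self hA hδ.le w n k).norm_le z

lemma discOperator_eq_self_of_tendsto (hA : IsC2Small A ε) (hδ : discConst * ε < 1) {w : ℂ}
    {g : ℂ → ℂ × ℂ} (hg : ∀ z, Tendsto (fun n => (discOperator A w)^[n] 0 z) atTop (𝓝 (g z))) :
    discOperator A w g = g := by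
  have hδ0 : 0 ≤ discConst * ε := mul_nonneg (zero_le_one.trans one_le_discConst) hA.nonneg
  have hiter := fun n => halfHolderBound_iterate_discOperator hA hδ.le w n
  have hdist : ∀ n, HalfHolderBound (g - (discOperator A w)^[n] 0) ((discConst * ε) ^ n) :=
    fun n => .of_tendsto (halfHolderBound_iterate_discOperator_sub_self hA hδ.le w n) fun z => by
      have h := ((tendsto_add_atTop_iff_nat n).2 (hg z)).sub_const ((discOperator A w)^[n] 0 z)
      simpa only [add_comm n, Pi.sub_apply] using h
  ext1 z
  refine tendsto_nhds_unique ?_ ((tendsto_add_atTop_iff_nat 1).2 (hg z))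
  refine tendsto_iff_norm_sub_tendsto_zero.2 (squeeze_zero (fun _ => norm_nonneg _) (fun n => ?_)
    ((tendsto_pow_atTop_nhds_zero_of_lt_one hδ0 hδ).comp (tendsto_add_atTop_nat 1)))
  rw [norm_sub_rev, Function.iterate_succ_apply', Function.comp_apply, pow_succ']
  exact (halfHolderBound_discOperator_sub hA ((HalfHolderBound.of_tendsto hiter hg).mono hδ.le)
    ((hiter n).mono hδ.le) (hdist n) (by rw [sub_self, norm_zero]; positivity)).norm_le z

lemma exists_discOperator_eq_self (hA : IsC2Small A ε) (hδ : discConst * ε < 1) :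
    ∃ g : ℂ → ℂ → ℂ × ℂ, (∀ w, HalfHolderBound (g w) (discConst * ε)) ∧
      (∀ w, discOperator A w (g w) = g w) ∧
      ∀ w w', HalfHolderBound (g w - g w') (discConst * ε * ‖w - w'‖) := by
  choose g hg using fun w => exists_tendsto_iterate_discOperator hA hδ w
  exact ⟨g, fun w => .of_tendsto (halfHolderBound_iterate_discOperator hA hδ.le w) (hg w),
    fun w => discOperator_eq_self_of_tendsto hA hδ (hg w), fun w w' => .of_tendsto
      (halfHolderBound_iterate_discOperator_sub_parameter hA hδ.le w w')
      fun z => (hg w z).sub (hg w' z)⟩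

end FixedPoint

section DiscFamily

/-- The map `F` of `ℂ × ℂ` is close to the identity and straightens a family of discs, namely its
restrictions to the horizontal lines `ℂ × {w}`. -/
structure IsNearIdDiscFamily (F : ℂ × ℂ → ℂ × ℂ) : Prop where
  norm_sub_self_le (x : ℂ × ℂ) : ‖F x - x‖ ≤ 1 / 8
  approximatesLinearOn : ApproximatesLinearOn F (ContinuousLinearMap.id ℝ (ℂ × ℂ)) Set.univ (1 / 8)
  contDiff_slice (w : ℂ) : ContDiff ℝ 1 fun z => F (z, w)
  norm_fderiv_slice_le (w z : ℂ) : ‖fderiv ℝ (fun z => F (z, w)) z‖ ≤ 2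

namespace IsNearIdDiscFamily

variable {F : ℂ × ℂ → ℂ × ℂ}

lemma isHomeomorph (hF : IsNearIdDiscFamily F) : IsHomeomorph F := by
  have hnorm : ‖ContinuousLinearMap.id ℝ (ℂ × ℂ)‖₊ = 1 := NNReal.eq ContinuousLinearMap.norm_id
  refine (ApproximatesLinearOn.toHomeomorph F (f' := ContinuousLinearEquiv.refl ℝ (ℂ × ℂ))
    hF.approximatesLinearOn (.inr ?_)).isHomeomorph
  rw [ContinuousLinearEquiv.refl_symm, ContinuousLinearEquiv.coe_refl, hnorm, inv_one]
  norm_num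

end IsNearIdDiscFamily

/-- A size of `A` below which `dbar u = A(u) (del u)` has a full family of solutions. -/
noncomputable def discThreshold : ℝ := 1 / (16 * cauchyConst * discConst)

lemma discThreshold_pos : 0 < discThreshold := by
  have := one_le_cauchyConst
  have := one_le_discConst
  unfold discThreshold
  positivity

lemma cauchyConst_mul_discConst_mul_discThreshold :
    cauchyConst * (discConst * discThreshold) = 1 / 16 := by
  have := one_le_cauchyConst
  have := one_le_discConst
  unfold discThreshold
  field_simp

variable {g : ℂ → ℂ × ℂ} {w : ℂ} {M : ℝ}

lemma hasFDerivAt_discMap (hg : HalfHolderBound g M) (w z : ℂ) :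
    HasFDerivAt (discMap w g)
      (ContinuousLinearMap.inl ℝ ℂ ℂ + fderiv ℝ (cauchyTransform g) z) z :=
  ((hasFDerivAt_id z).prodMk (hasFDerivAt_const w z)).add
    (differentiable_cauchyTransform hg z).hasFDerivAt

lemma contDiff_discMap (hg : HalfHolderBound g M) : ContDiff ℝ 1 (discMap w g) :=
  (contDiff_id.prodMk contDiff_const).add (contDiff_one_cauchyTransform hg)

lemma dbar_discMap (hg : HalfHolderBound g M) (z : ℂ) :
    dbar (discMap w g) z = dbar (cauchyTransform g) z := by
  simp only [dbar, (hasFDerivAt_discMap hg w z).fderiv, _root_.add_apply,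
    ContinuousLinearMap.inl_apply, smul_add, Prod.smul_mk, smul_eq_mul, I_mul_I, mul_zero]
  have hflat : ((1, 0) : ℂ × ℂ) + (-1, 0) = 0 := by simp
  rw [add_add_add_comm, hflat, zero_add]

lemma del_discMap (hg : HalfHolderBound g M) (z : ℂ) :
    del (discMap w g) z = (2, 0) + beurlingTransform g z := by
  simp only [← del_cauchyTransform hg, del, (hasFDerivAt_discMap hg w z).fderiv, _root_.add_apply,
    ContinuousLinearMap.inl_apply, smul_add, Prod.smul_mk, smul_eq_mul, I_mul_I, mul_zero]
  rw [add_sub_add_comm, Prod.mk_sub_mk, sub_neg_eq_add, one_add_one_eq_two, sub_zero]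

variable {A : ℂ × ℂ → ℂ × ℂ →L[ℝ] ℂ × ℂ}

lemma dbar_discMap_of_discOperator_eq_self (hA : ∀ x, 3 / 4 ≤ ‖x‖ → A x = 0)
    (hg : HalfHolderBound g M) (hM : cauchyConst * M ≤ 1 / 8) (hfix : discOperator A w g = g)
    {z : ℂ} (hz : ‖z‖ < 1) :
    dbar (discMap w g) z = A (discMap w g z) (del (discMap w g) z) := by
  have hvanish : ∀ z, 1 ≤ ‖z‖ → g z = 0 := fun z hz => by
    have hfar : 3 / 4 ≤ ‖discMap w g z‖ := by
      have hfst : ‖z‖ ≤ ‖((z, w) : ℂ × ℂ)‖ := norm_fst_le ((z, w) : ℂ × ℂ)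
      have htri := norm_sub_le_norm_add ((z, w) : ℂ × ℂ) (cauchyTransform g z)
      have hcauchy := norm_cauchyTransform_le hg z
      rw [discMap]
      linarith
    rw [← hfix, discOperator, hA _ hfar, _root_.zero_apply]
  rw [dbar_discMap hg, del_discMap hg, dbar_cauchyTransform hg hvanish hz]
  exact (congrFun hfix z).symm

lemma approximatesLinearOn_discMap {g : ℂ → ℂ → ℂ × ℂ} (hg : ∀ w, HalfHolderBound (g w) M)
    (hsub : ∀ w w', HalfHolderBound (g w - g w') (M * ‖w - w'‖))
    (hM : cauchyConst * M = 1 / 16) :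
    ApproximatesLinearOn (fun x : ℂ × ℂ => discMap x.2 (g x.2) x.1)
      (ContinuousLinearMap.id ℝ (ℂ × ℂ)) Set.univ (1 / 8) := by
  intro x _ y _
  have hfst := norm_cauchyTransform_sub_le (hg x.2) x.1 y.1
  have hsnd := norm_cauchyTransform_le (hsub x.2 y.2) y.1
  rw [cauchyTransform_sub (hg _) (hg _), ← mul_assoc, hM] at hsnd
  rw [hM] at hfst
  have hfst_le : ‖x.1 - y.1‖ ≤ ‖x - y‖ := norm_fst_le (x - y)
  have hsnd_le : ‖x.2 - y.2‖ ≤ ‖x - y‖ := norm_snd_le (x - y)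
  calc ‖discMap x.2 (g x.2) x.1 - discMap y.2 (g y.2) y.1 - (x - y)‖
      = ‖(cauchyTransform (g x.2) x.1 - cauchyTransform (g x.2) y.1) +
          (cauchyTransform (g x.2) y.1 - cauchyTransform (g y.2) y.1)‖ := by
        congr 1
        unfold discMap
        abel
    _ ≤ 1 / 16 * ‖x.1 - y.1‖ + 1 / 16 * ‖x.2 - y.2‖ := norm_add_le_of_le hfst hsnd
    _ ≤ ((1 / 8 : NNReal) : ℝ) * ‖x - y‖ := by
        push_cast
        linarith

lemma isNearIdDiscFamily_discMap {g : ℂ → ℂ → ℂ × ℂ} (hg : ∀ w, HalfHolderBound (g w) M)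
    (hsub : ∀ w w', HalfHolderBound (g w - g w') (M * ‖w - w'‖))
    (hM : cauchyConst * M = 1 / 16) :
    IsNearIdDiscFamily fun x => discMap x.2 (g x.2) x.1 where
  norm_sub_self_le x := by
    rw [discMap, add_sub_cancel_left]
    exact (norm_cauchyTransform_le (hg _) _).trans (hM.le.trans (by norm_num))
  approximatesLinearOn := approximatesLinearOn_discMap hg hsub hM
  contDiff_slice w := by
    change ContDiff ℝ 1 (discMap w (g w))
    exact contDiff_discMap (hg w)
  norm_fderiv_slice_le w z := by
    change ‖fderiv ℝ (discMap w (g w)) z‖ ≤ 2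
    rw [(hasFDerivAt_discMap (hg w) w z).fderiv]
    have hinl := ContinuousLinearMap.norm_inl_le_one ℝ ℂ ℂ
    refine (norm_add_le_of_le hinl (norm_fderiv_cauchyTransform_le (hg w) z)).trans ?_
    rw [hM]
    norm_num

lemma exists_isNearIdDiscFamily (hA : IsC2Small A discThreshold)
    (hA0 : ∀ x, 3 / 4 ≤ ‖x‖ → A x = 0) :
    ∃ F, IsNearIdDiscFamily F ∧ ∀ w z, ‖z‖ < 1 →
      dbar (fun z => F (z, w)) z = A (F (z, w)) (del (fun z => F (z, w)) z) := by
  have hconst := cauchyConst_mul_discConst_mul_discThreshold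
  have hδ : discConst * discThreshold < 1 := by nlinarith [one_le_cauchyConst]
  obtain ⟨g, hg, hfix, hsub⟩ := exists_discOperator_eq_self hA hδ
  exact ⟨fun x => discMap x.2 (g x.2) x.1, isNearIdDiscFamily_discMap hg hsub hconst,
    fun w z hz => dbar_discMap_of_discOperator_eq_self hA0 (hg w)
      (hconst.le.trans (by norm_num)) (hfix w) hz⟩

end DiscFamily

section ParameterFamilies

lemma eventually_forall_norm_le_of_eq_zero {Λ E X : Type*} [TopologicalSpace Λ]
    [NormedAddCommGroup E] [ProperSpace E] [NormedAddCommGroup X] {f : Λ × E → X} {a : Λ} {R ε : ℝ}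
    (hf : Continuous f) (h0 : ∀ x, f (a, x) = 0) (hs : ∀ t x, R < ‖x‖ → f (t, x) = 0)
    (hε : 0 < ε) : ∀ᶠ t in 𝓝 a, ∀ x, ‖f (t, x)‖ ≤ ε := by
  have hball : ∀ᶠ t in 𝓝 a, ∀ x ∈ closedBall (0 : E) R, ‖f (t, x)‖ < ε := by
    refine (isCompact_closedBall (0 : E) R).eventually_forall_of_forall_eventually
      (P := fun t x => ‖f (t, x)‖ < ε) fun y _ => ?_
    have hnorm : ‖f (a, y)‖ < ε := by rwa [h0, norm_zero]
    exact hf.norm.continuousAt.eventually_lt_const hnorm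
  filter_upwards [hball] with t ht x
  by_cases hx : x ∈ closedBall (0 : E) R
  · exact (ht x hx).le
  · rw [mem_closedBall_zero_iff, not_le] at hx
    rw [hs t x hx, norm_zero]
    exact hε.le

variable {Λ E X : Type*} [NormedAddCommGroup Λ] [NormedSpace ℝ Λ] [NormedAddCommGroup E]
  [NormedSpace ℝ E] [NormedAddCommGroup X] [NormedSpace ℝ X]

/-- The partial derivative of `f : Λ × E → X` in the direction of `E`. -/
noncomputable def sndFDeriv (f : Λ × E → X) (q : Λ × E) : E →L[ℝ] X :=
  (fderiv ℝ f q).comp (ContinuousLinearMap.inr ℝ Λ E)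

variable {f : Λ × E → X}

lemma contDiff_sndFDeriv (hf : ContDiff ℝ ∞ f) : ContDiff ℝ ∞ (sndFDeriv f) :=
  (hf.fderiv_right (m := ∞) (by simp)).clm_comp contDiff_const

lemma hasFDerivAt_sndFDeriv (hf : ContDiff ℝ ∞ f) (t : Λ) (x : E) :
    HasFDerivAt (fun x => f (t, x)) (sndFDeriv f (t, x)) x :=
  HasFDerivAt.comp x (hf.differentiable (by simp) (t, x)).hasFDerivAt
    ((hasFDerivAt_const t x).prodMk (hasFDerivAt_id x))

lemma sndFDeriv_eq_zero (hf : ContDiff ℝ ∞ f) {t : Λ} {x : E}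
    (h : ∀ᶠ y in 𝓝 x, f (t, y) = 0) : sndFDeriv f (t, x) = 0 :=
  (hasFDerivAt_sndFDeriv hf t x).unique ((hasFDerivAt_const 0 x).congr_of_eventuallyEq h)

lemma sndFDeriv_eq_zero_of_lt_norm {R : ℝ} (hf : ContDiff ℝ ∞ f)
    (hs : ∀ t x, R < ‖x‖ → f (t, x) = 0) (t : Λ) (x : E) (hx : R < ‖x‖) :
    sndFDeriv f (t, x) = 0 :=
  sndFDeriv_eq_zero hf <|
    (continuous_norm.continuousAt.eventually_const_lt hx).mono fun y hy => hs t y hy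

lemma norm_sub_le_of_norm_sndFDeriv_le {t : Λ} {C : ℝ} (hf : ContDiff ℝ ∞ f)
    (hC : ∀ x, ‖sndFDeriv f (t, x)‖ ≤ C) (x y : E) : ‖f (t, x) - f (t, y)‖ ≤ C * ‖x - y‖ :=
  convex_univ.norm_image_sub_le_of_norm_hasFDerivWithin_le
    (fun x _ => (hasFDerivAt_sndFDeriv hf t x).hasFDerivWithinAt) (fun x _ => hC x)
    (Set.mem_univ _) (Set.mem_univ _)

lemma isC2Small_of_norm_sndFDeriv_le {t : Λ} {ε : ℝ} (hf : ContDiff ℝ ∞ f)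
    (h0 : ∀ x, ‖f (t, x)‖ ≤ ε) (h1 : ∀ x, ‖sndFDeriv f (t, x)‖ ≤ ε)
    (h2 : ∀ x, ‖sndFDeriv (sndFDeriv f) (t, x)‖ ≤ ε) : IsC2Small (fun x => f (t, x)) ε where
  nonneg := (norm_nonneg _).trans (h0 0)
  norm_le := h0
  norm_sub_le := norm_sub_le_of_norm_sndFDeriv_le hf h1
  norm_sub_sub_le x y h := by
    refine convex_univ.norm_image_sub_le_of_norm_hasFDerivWithin_le
      (f := fun x => f (t, x + h) - f (t, x))
      (f' := fun x => sndFDeriv f (t, x + h) - sndFDeriv f (t, x)) (C := ε * ‖h‖)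
      (fun x _ => ?_) (fun x _ => ?_) (Set.mem_univ _) (Set.mem_univ _)
    · have hshift := (hasFDerivAt_sndFDeriv hf t (x + h)).comp x ((hasFDerivAt_id x).add_const h)
      exact (hshift.sub (hasFDerivAt_sndFDeriv hf t x)).hasFDerivWithinAt
    · have hstep := norm_sub_le_of_norm_sndFDeriv_le (contDiff_sndFDeriv hf) h2 (x + h) x
      rwa [add_sub_cancel_left] at hstep

lemma eventually_isC2Small [ProperSpace E] {a : Λ} {R ε : ℝ} (hf : ContDiff ℝ ∞ f)
    (h0 : ∀ x, f (a, x) = 0) (hs : ∀ t x, R < ‖x‖ → f (t, x) = 0) (hε : 0 < ε) :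
    ∀ᶠ t in 𝓝 a, IsC2Small (fun x => f (t, x)) ε := by
  have hf1 := contDiff_sndFDeriv hf
  have h1 : ∀ x, sndFDeriv f (a, x) = 0 := fun x => sndFDeriv_eq_zero hf (.of_forall h0)
  have hs1 := sndFDeriv_eq_zero_of_lt_norm hf hs
  have h2 : ∀ x, sndFDeriv (sndFDeriv f) (a, x) = 0 :=
    fun x => sndFDeriv_eq_zero hf1 (.of_forall h1)
  filter_upwards [eventually_forall_norm_le_of_eq_zero hf.continuous h0 hs hε,
    eventually_forall_norm_le_of_eq_zero hf1.continuous h1 hs1 hε,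
    eventually_forall_norm_le_of_eq_zero (contDiff_sndFDeriv hf1).continuous h2
      (sndFDeriv_eq_zero_of_lt_norm hf1 hs1) hε] with t ht0 ht1 ht2
  exact isC2Small_of_norm_sndFDeriv_le hf ht0 ht1 ht2

variable [HasContDiffBump E] {c : E}

lemma contDiff_bump_smul {n : ℕ∞} (χ : ContDiffBump c) {f : E → X}
    (hf : ∀ x ∈ closedBall c χ.rOut, ContDiffAt ℝ n f x) : ContDiff ℝ n fun x => χ x • f x := by
  rw [contDiff_iff_contDiffAt]
  intro x
  by_cases hx : x ∈ closedBall c χ.rOut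
  · exact χ.contDiff.contDiffAt.smul (hf x hx)
  · have hzero : (χ : E → ℝ) =ᶠ[𝓝 x] 0 := by
      rwa [← notMem_tsupport_iff_eventuallyEq, χ.tsupport_eq]
    refine contDiffAt_const (c := (0 : X)) |>.congr_of_eventuallyEq (hzero.mono fun y hy => ?_)
    simp only [hy, Pi.zero_apply, zero_smul]

lemma exists_contDiff_eventuallyEq {f : E → X} (hf : ∀ᶠ y in 𝓝 c, ContDiffAt ℝ ∞ f y) :
    ∃ f' : E → X, ContDiff ℝ ∞ f' ∧ f' =ᶠ[𝓝 c] f := by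
  obtain ⟨r, hr, hball⟩ := Metric.eventually_nhds_iff_ball.1 hf
  let χ : ContDiffBump c := ⟨r / 4, r / 2, by positivity, by linarith⟩
  exact ⟨fun x => χ x • f x,
    contDiff_bump_smul χ fun x hx => hball x (closedBall_subset_ball (half_lt_self hr) hx),
    χ.eventuallyEq_one.mono fun x hx => by simp only [hx, Pi.one_apply, one_smul]⟩

end ParameterFamilies

section Cayley

variable {W : Type*} [NormedAddCommGroup W] [NormedSpace ℝ W] [NormedSpace ℂ W]
  [IsScalarTower ℝ ℂ W]

variable (W) in
/-- Multiplication by `I`, the standard complex structure of `W`, as a real-linear map. -/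
noncomputable def mulI : W →L[ℝ] W := (I • ContinuousLinearMap.id ℂ W).restrictScalars ℝ

lemma mulI_apply (x : W) : mulI W x = I • x := rfl

lemma mulI_mul_mulI : mulI W * mulI W = -1 := by
  ext x
  simp only [mul_apply_eq_comp, mulI_apply, smul_smul, I_mul_I, neg_smul, one_smul,
    _root_.neg_apply, one_apply_eq_self]

/-- The Cayley transform `B` of a complex structure `K`: the `K`-complex maps from `ℂ` are those
with `dbar u = B (del u)`, see `eq_of_add_eq_cayley`. It is the intended one where
`1 - K * mulI W` is invertible. -/
noncomputable def cayley (K : W →L[ℝ] W) : W →L[ℝ] W :=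
  -(Ring.inverse (1 - K * mulI W) * (1 + K * mulI W))

lemma cayley_mulI : cayley (mulI W) = 0 := by
  rw [cayley, mulI_mul_mulI, add_neg_cancel, mul_zero, neg_zero]

lemma isUnit_one_sub_mulI_mul_mulI : IsUnit (1 - mulI W * mulI W) := by
  have htwo : (1 - mulI W * mulI W) = algebraMap ℝ (W →L[ℝ] W) 2 := by
    rw [mulI_mul_mulI, sub_neg_eq_add, one_add_one_eq_two, map_ofNat]
  rw [htwo]
  exact (isUnit_iff_ne_zero.2 two_ne_zero).map _

lemma eq_of_add_eq_cayley {K : W →L[ℝ] W} (hK : IsUnit (1 - K * mulI W)) (hsq : K * K = -1)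
    {a b : W} (h : a + I • b = cayley K (a - I • b)) : K a = b := by
  have hclear : (1 - K * mulI W) (a + I • b) = -((1 + K * mulI W) (a - I • b)) := by
    rw [h, cayley, ← mul_apply_eq_comp, mul_neg, ← mul_assoc, Ring.mul_inverse_cancel _ hK,
      one_mul, _root_.neg_apply]
  simp only [_root_.sub_apply, _root_.add_apply, mul_apply_eq_comp, one_apply_eq_self, mulI_apply,
    smul_smul, I_mul_I, neg_smul, one_smul, map_add, map_sub, map_neg]
    at hclear
  have htwo : (2 : ℝ) • (a + K b) = 0 := by
    rw [two_smul, ← sub_eq_zero.2 hclear]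
    abel
  have ha : a = -K b :=
    eq_neg_of_add_eq_zero_left ((smul_eq_zero.1 htwo).resolve_left two_ne_zero)
  rw [ha, map_neg, ← mul_apply_eq_comp, hsq, _root_.neg_apply, neg_neg, one_apply_eq_self]

variable [FiniteDimensional ℝ W] {K : W → W →L[ℝ] W}

lemma contDiffAt_cayley {y : W} (hK : ContDiffAt ℝ ∞ K y) (hunit : IsUnit (1 - K y * mulI W)) :
    ContDiffAt ℝ ∞ (fun y => cayley (K y)) y := by
  have : CompleteSpace W := FiniteDimensional.complete ℝ W
  have hKI := hK.mul (contDiffAt_const (c := mulI W))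
  obtain ⟨v, hv⟩ := hunit
  have hinv := contDiffAt_ringInverse ℝ (n := ∞) v
  rw [hv] at hinv
  exact ((hinv.comp y (contDiffAt_const.sub hKI)).mul (contDiffAt_const.add hKI)).neg

lemma exists_contDiff_cayley (hK : ∀ᶠ y in 𝓝 0, ContDiffAt ℝ ∞ K y) (h0 : K 0 = mulI W)
    (hsq : ∀ᶠ y in 𝓝 0, K y * K y = -1) :
    ∃ B : W → W →L[ℝ] W, ContDiff ℝ ∞ B ∧ B 0 = 0 ∧
      ∀ᶠ y in 𝓝 0, ∀ a b : W, a + I • b = B y (a - I • b) → K y a = b := by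
  have : CompleteSpace W := FiniteDimensional.complete ℝ W
  have hunit : ∀ᶠ y in 𝓝 (0 : W), IsUnit (1 - K y * mulI W) := by
    have hcont : ContinuousAt (fun y => 1 - K y * mulI W) 0 :=
      continuousAt_const.sub (hK.self_of_nhds.continuousAt.mul continuousAt_const)
    refine hcont.eventually_mem (Units.isOpen.mem_nhds ?_)
    rw [Set.mem_ofPred_eq, h0]
    exact isUnit_one_sub_mulI_mul_mulI
  obtain ⟨B, hB, hBK⟩ := exists_contDiff_eventuallyEq
    ((hK.and hunit).mono fun y hy => contDiffAt_cayley hy.1 hy.2)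
  refine ⟨B, hB, by simp only [hBK.self_of_nhds, h0, cayley_mulI], ?_⟩
  filter_upwards [hBK, hunit, hsq] with y hy hyunit hysq a b hab
  rw [hy] at hab
  exact eq_of_add_eq_cayley hyunit hysq hab

end Cayley

lemma exists_linearEquiv_smul_I {V W : Type*} [AddCommGroup V] [Module ℝ V]
    [FiniteDimensional ℝ V] [AddCommGroup W] [Module ℝ W] [Module ℂ W] [IsScalarTower ℝ ℂ W]
    [FiniteDimensional ℝ W] (hVW : Module.finrank ℝ W = Module.finrank ℝ V)
    {j : V →ₗ[ℝ] V} (hj : ∀ x, j (j x) = -x) : ∃ T : W ≃ₗ[ℝ] V, ∀ x, T (I • x) = j (T x) := by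
  let φ : ℂ →ₐ[ℝ] Module.End ℝ V := Complex.lift ⟨j, LinearMap.ext hj⟩
  let : Module ℂ V := Module.compHom V φ.toRingHom
  have hI : ∀ x : V, I • x = j x := fun x =>
    LinearMap.congr_fun (Complex.liftAux_apply_I j (LinearMap.ext hj)) x
  have : IsScalarTower ℝ ℂ V := ⟨fun r c x => LinearMap.congr_fun (map_smul φ r c) x⟩
  have : FiniteDimensional ℂ V := .right ℝ ℂ V
  have : FiniteDimensional ℂ W := .right ℝ ℂ W
  have hdim : Module.finrank ℂ W = Module.finrank ℂ V := by
    have hV := Module.finrank_mul_finrank ℝ ℂ V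
    have hW := Module.finrank_mul_finrank ℝ ℂ W
    rw [Complex.finrank_real_complex] at hV hW
    omega
  let T : W ≃ₗ[ℂ] V := LinearEquiv.ofFinrankEq W V hdim
  exact ⟨T.restrictScalars ℝ, fun x => (T.map_smul I x).trans (hI _)⟩

section DiscCharts

lemma eventually_isC2Small_bump_smul {E X : Type*} [NormedAddCommGroup E] [NormedSpace ℝ E]
    [HasContDiffBump E] [ProperSpace E] [NormedAddCommGroup X] [NormedSpace ℝ X]
    (χ : ContDiffBump (0 : E)) {B : E → X} (hB : ContDiff ℝ ∞ B) (hB0 : B 0 = 0) {ε : ℝ}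
    (hε : 0 < ε) : ∀ᶠ ρ in 𝓝 (0 : ℝ), IsC2Small (fun x => χ x • B (ρ • x)) ε := by
  refine eventually_isC2Small (f := fun q : ℝ × E => χ q.2 • B (q.1 • q.2)) (R := χ.rOut)
    ((χ.contDiff.comp contDiff_snd).smul (hB.comp (contDiff_fst.smul contDiff_snd)))
    (fun x => ?_) (fun ρ x hx => ?_) hε
  · rw [zero_smul, hB0, smul_zero]
  · rw [χ.zero_of_le_dist (by rw [dist_zero_right]; exact hx.le), zero_smul]

lemma eventually_forall_mem_closedBall_smul {E : Type*} [NormedAddCommGroup E] [NormedSpace ℝ E]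
    [ProperSpace E] {P : E → Prop} (hP : ∀ᶠ y in 𝓝 0, P y) (R : ℝ) :
    ∀ᶠ ρ in 𝓝 (0 : ℝ), ∀ x ∈ closedBall (0 : E) R, P (ρ • x) := by
  refine (isCompact_closedBall (0 : E) R).eventually_forall_of_forall_eventually
    (P := fun (ρ : ℝ) x => P (ρ • x)) fun x _ => ?_
  have hcont : Tendsto (fun q : ℝ × E => q.1 • q.2) (𝓝 (0, x)) (𝓝 0) := by
    have hmul : Continuous fun q : ℝ × E => q.1 • q.2 := by fun_prop
    simpa only [zero_smul] using hmul.tendsto (0, x)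
  exact hcont.eventually hP

lemma IsNearIdDiscFamily.norm_apply_le {F : ℂ × ℂ → ℂ × ℂ} (hF : IsNearIdDiscFamily F)
    {q : ℂ × ℂ} (hq : ‖q‖ ≤ 3 / 8) : ‖F q‖ ≤ 1 / 2 := by
  have hsub := hF.norm_sub_self_le q
  have htri := norm_le_norm_add_norm_sub' (F q) q
  linarith

lemma eventually_exists_isNearIdDiscFamily {K : ℂ × ℂ → ℂ × ℂ →L[ℝ] ℂ × ℂ}
    (hK : ∀ᶠ y in 𝓝 0, ContDiffAt ℝ ∞ K y) (h0 : K 0 = mulI (ℂ × ℂ))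
    (hsq : ∀ᶠ y in 𝓝 0, K y * K y = -1) :
    ∀ᶠ ρ in 𝓝 (0 : ℝ), ∃ F, IsNearIdDiscFamily F ∧ ∀ z w : ℂ, ‖(z, w)‖ ≤ 3 / 8 →
      K (ρ • F (z, w)) (fderiv ℝ (fun z => F (z, w)) z 1) = fderiv ℝ (fun z => F (z, w)) z I := by
  obtain ⟨B, hB, hB0, hBK⟩ := exists_contDiff_cayley hK h0 hsq
  let χ : ContDiffBump (0 : ℂ × ℂ) := ⟨1 / 2, 5 / 8, by norm_num, by norm_num⟩
  filter_upwards [eventually_isC2Small_bump_smul χ hB hB0 discThreshold_pos,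
    eventually_forall_mem_closedBall_smul hBK (1 / 2)] with ρ hsmall hcayley
  have hzero : ∀ x : ℂ × ℂ, 3 / 4 ≤ ‖x‖ → χ x • B (ρ • x) = 0 := fun x hx => by
    rw [χ.zero_of_le_dist (by rw [dist_zero_right]; exact le_trans (by norm_num) hx), zero_smul]
  obtain ⟨F, hF, hdbar⟩ := exists_isNearIdDiscFamily hsmall hzero
  refine ⟨F, hF, fun z w hzw => ?_⟩
  have hball : F (z, w) ∈ closedBall (0 : ℂ × ℂ) (1 / 2) :=
    mem_closedBall_zero_iff.2 (hF.norm_apply_le hzw)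
  have hz : ‖z‖ < 1 := (norm_fst_le (z, w)).trans_lt (hzw.trans_lt (by norm_num))
  have heq := hdbar w z hz
  rw [χ.one_of_mem_closedBall hball, one_smul] at heq
  exact hcayley _ hball _ _ heq

variable {V : Type*} [NormedAddCommGroup V] [NormedSpace ℝ V] {J : V → V →L[ℝ] V} {U : Set V}
  {p : V} {η : ℝ}

/-- A parametrisation `Ψ` of a neighbourhood of `p` in `U` by the bidisc of radius `3 / 8`,
whose horizontal slices `z ↦ Ψ (z, w)` are `J`-holomorphic discs with derivative at most `η`.
It is extended to a global homeomorphism to avoid domain conditions. -/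
structure IsDiscChart (J : V → V →L[ℝ] V) (U : Set V) (p : V) (η : ℝ) (Ψ : ℂ × ℂ → V) : Prop where
  isHomeomorph : IsHomeomorph Ψ
  exists_center : ∃ q, ‖q‖ ≤ 1 / 8 ∧ Ψ q = p
  mem {q : ℂ × ℂ} : ‖q‖ ≤ 3 / 8 → Ψ q ∈ U
  contDiff_slice (w : ℂ) : ContDiff ℝ 1 fun z => Ψ (z, w)
  norm_fderiv_slice_le (w z : ℂ) : ‖fderiv ℝ (fun z => Ψ (z, w)) z‖ ≤ η
  map_one_eq_map_I {z w : ℂ} : ‖(z, w)‖ ≤ 3 / 8 →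
    J (Ψ (z, w)) (fderiv ℝ (fun z => Ψ (z, w)) z 1) = fderiv ℝ (fun z => Ψ (z, w)) z I

lemma isDiscChart_add_smul {F : ℂ × ℂ → ℂ × ℂ} (hF : IsNearIdDiscFamily F)
    (T : (ℂ × ℂ) ≃L[ℝ] V) {ρ : ℝ} (hρ : 0 < ρ)
    (hmem : ∀ x ∈ closedBall (0 : ℂ × ℂ) (1 / 2), p + T (ρ • x) ∈ U)
    (hη : ρ * (‖(T : ℂ × ℂ →L[ℝ] V)‖ * 2) ≤ η)
    (hJ : ∀ z w : ℂ, ‖(z, w)‖ ≤ 3 / 8 →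
      J (p + T (ρ • F (z, w))) (T (fderiv ℝ (fun z => F (z, w)) z 1)) =
        T (fderiv ℝ (fun z => F (z, w)) z I)) :
    IsDiscChart J U p η fun q => p + T (ρ • F q) := by
  have hslice (w z : ℂ) : fderiv ℝ (fun z => p + T (ρ • F (z, w))) z =
      ρ • (T : ℂ × ℂ →L[ℝ] V) ∘L fderiv ℝ (fun z => F (z, w)) z := by
    have hd := ((hF.contDiff_slice w).differentiable one_ne_zero z).hasFDerivAt
    rw [← ContinuousLinearMap.comp_smul]
    exact (((T : ℂ × ℂ →L[ℝ] V).hasFDerivAt.comp z (hd.const_smul ρ)).const_add p).fderiv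
  refine ⟨?_, ?_, fun hq => hmem _ (mem_closedBall_zero_iff.2 (hF.norm_apply_le hq)),
    fun w => contDiff_const.add (T.contDiff.comp ((hF.contDiff_slice w).const_smul ρ)),
    fun w z => ?_, fun {z w} hzw => ?_⟩
  · exact ((Homeomorph.addLeft p).isHomeomorph.comp (T.toHomeomorph.isHomeomorph.comp
      ((Homeomorph.smulOfNeZero ρ hρ.ne').isHomeomorph.comp hF.isHomeomorph)))
  · obtain ⟨q, hq⟩ := hF.isHomeomorph.surjective 0
    have hnorm := hF.norm_sub_self_le q
    rw [hq, zero_sub, norm_neg] at hnorm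
    exact ⟨q, hnorm, by rw [hq, smul_zero, map_zero, add_zero]⟩
  · rw [hslice, norm_smul, Real.norm_of_nonneg hρ.le]
    refine le_trans ?_ hη
    gcongr
    exact (ContinuousLinearMap.opNorm_comp_le _ _).trans (by
      gcongr
      exact hF.norm_fderiv_slice_le w z)
  · rw [hslice]
    exact (map_smul _ ρ _).trans (congrArg (ρ • ·) (hJ z w hzw))

lemma eventually_add_mem (T : (ℂ × ℂ) ≃L[ℝ] V) (hU : IsOpen U) (hp : p ∈ U) :
    ∀ᶠ y in 𝓝 0, p + T y ∈ U :=
  (T.continuous.const_add p).continuousAt.eventually_mem (by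
    simpa only [map_zero, add_zero] using hU.mem_nhds hp)

lemma eventually_contDiffAt_conj (T : (ℂ × ℂ) ≃L[ℝ] V) (hU : IsOpen U) (hp : p ∈ U)
    (hJ : ContDiffOn ℝ ∞ J U) :
    ∀ᶠ y in 𝓝 0, ContDiffAt ℝ ∞
      (fun y => (T.symm : V →L[ℝ] ℂ × ℂ) ∘L J (p + T y) ∘L (T : ℂ × ℂ →L[ℝ] V)) y := by
  have hmap : ContDiff ℝ ∞ fun y => p + T y := contDiff_const.add T.contDiff
  filter_upwards [eventually_add_mem T hU hp] with y hy
  have hJy : ContDiffAt ℝ ∞ (fun y => J (p + T y)) y :=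
    (hJ.contDiffAt (hU.mem_nhds hy)).comp y hmap.contDiffAt
  exact contDiffAt_const.clm_comp (hJy.clm_comp contDiffAt_const)

lemma exists_isDiscChart (hV : Module.finrank ℝ V = 4) (hU : IsOpen U) (hp : p ∈ U)
    (hJ : ContDiffOn ℝ ∞ J U) (hJ2 : ∀ x ∈ U, ∀ X, J x (J x X) = -X) (hη : 0 < η) :
    ∃ Ψ, IsDiscChart J U p η Ψ := by
  have : FiniteDimensional ℝ V := .of_finrank_pos (hV ▸ four_pos)
  have hdim : Module.finrank ℝ (ℂ × ℂ) = Module.finrank ℝ V := by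
    rw [Module.finrank_prod, Complex.finrank_real_complex, hV]
  obtain ⟨L, hL⟩ := exists_linearEquiv_smul_I hdim (hJ2 p hp)
  let T : (ℂ × ℂ) ≃L[ℝ] V := L.toContinuousLinearEquiv
  have hT : ∀ x, T (I • x) = J p (T x) := hL
  let K : ℂ × ℂ → ℂ × ℂ →L[ℝ] ℂ × ℂ := fun y =>
    (T.symm : V →L[ℝ] ℂ × ℂ) ∘L J (p + T y) ∘L (T : ℂ × ℂ →L[ℝ] V)
  have hmem := eventually_add_mem T hU hp
  have hK0 : K 0 = mulI (ℂ × ℂ) := by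
    refine ContinuousLinearMap.ext fun x => ?_
    change T.symm (J (p + T 0) (T x)) = I • x
    rw [map_zero, add_zero, ← hT, T.symm_apply_apply]
  have hsq : ∀ᶠ y in 𝓝 0, K y * K y = -1 := by
    filter_upwards [hmem] with y hy
    refine ContinuousLinearMap.ext fun x => ?_
    change T.symm (J (p + T y) (T (T.symm (J (p + T y) (T x))))) = -x
    rw [T.apply_symm_apply, hJ2 _ hy, map_neg, T.symm_apply_apply]
  have hsmall : ∀ᶠ ρ in 𝓝 (0 : ℝ), ρ * (‖(T : ℂ × ℂ →L[ℝ] V)‖ * 2) < η :=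
    (continuous_mul_const _).continuousAt.eventually_lt_const ((zero_mul _).trans_lt hη)
  obtain ⟨ρ, ⟨⟨F, hF, hdisc⟩, hρU, hρη⟩, hρ⟩ :=
    ((((eventually_exists_isNearIdDiscFamily (eventually_contDiffAt_conj T hU hp hJ) hK0 hsq).and
      ((eventually_forall_mem_closedBall_smul hmem (1 / 2)).and hsmall)).filter_mono
        nhdsWithin_le_nhds).and (self_mem_nhdsWithin (s := Set.Ioi (0 : ℝ)))).exists
  exact ⟨_, isDiscChart_add_smul hF T hρ hρU hρη.le fun z w hzw =>
    (T.symm_apply_eq).1 (hdisc z w hzw)⟩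

end DiscCharts

section DiscEstimate

variable {W : Type*} [NormedAddCommGroup W] [NormedSpace ℝ W] [NormedSpace ℂ W]
  {θ : ContDiffBump (0 : ℂ)} {f : ℂ → W} {C κ M : ℝ} {z : ℂ}

lemma norm_smul_add_I_smul_le (A : ℂ →L[ℝ] ℝ) (w : W) :
    ‖A 1 • w + I • A I • w‖ ≤ 2 * ‖A‖ * ‖w‖ := by
  have h1 : ‖A 1‖ ≤ ‖A‖ := by simpa only [norm_one, mul_one] using A.le_opNorm 1
  have hI : ‖A I‖ ≤ ‖A‖ := by simpa only [norm_I, mul_one] using A.le_opNorm I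
  calc ‖A 1 • w + I • A I • w‖ ≤ ‖A 1 • w‖ + ‖I • A I • w‖ := norm_add_le _ _
    _ = ‖A 1‖ * ‖w‖ + ‖A I‖ * ‖w‖ := by rw [norm_smul, norm_smul, norm_smul, norm_I, one_mul]
    _ ≤ ‖A‖ * ‖w‖ + ‖A‖ * ‖w‖ := by gcongr
    _ = 2 * ‖A‖ * ‖w‖ := by ring

variable [IsScalarTower ℝ ℂ W]

lemma dbar_smul {φ : ℂ → ℝ} (hφ : DifferentiableAt ℝ φ z) (hf : DifferentiableAt ℝ f z) :
    dbar (fun z => φ z • f z) z =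
      (fderiv ℝ φ z 1 • f z + I • fderiv ℝ φ z I • f z) + φ z • dbar f z := by
  simp only [dbar, fderiv_fun_smul hφ hf, _root_.add_apply, _root_.smul_apply,
    ContinuousLinearMap.smulRight_apply, smul_add, smul_comm I (φ z)]
  abel

lemma norm_dbar_bump_smul_le (hC : ∀ z, ‖fderiv ℝ θ z‖ ≤ C) (hM0 : 0 ≤ M)
    (hM : ∀ z, θ.rIn ≤ ‖z‖ → ‖z‖ ≤ θ.rOut → ‖f z‖ ≤ M)
    (hd : ∀ z, ‖z‖ ≤ θ.rOut → ‖dbar f z‖ ≤ κ * ‖f z‖)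
    (hf : ∀ z, ‖z‖ ≤ θ.rOut → DifferentiableAt ℝ f z) (z : ℂ) :
    ‖dbar (fun z => θ z • f z) z‖ ≤ 2 * C * M + κ * ‖θ z • f z‖ := by
  have hC0 : 0 ≤ C := (norm_nonneg _).trans (hC z)
  rcases lt_or_ge θ.rOut ‖z‖ with hout | hin
  · have hzero : (fun z => θ z • f z) =ᶠ[𝓝 z] fun _ => 0 := by
      filter_upwards [continuous_norm.continuousAt.eventually_const_lt hout] with y hy
      rw [θ.zero_of_le_dist (by rw [dist_zero_right]; exact hy.le), zero_smul]
    simp only [dbar, hzero.fderiv_eq, show θ z • f z = 0 from hzero.self_of_nhds,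
      fderiv_fun_const, Pi.zero_apply, _root_.zero_apply, smul_zero, add_zero, norm_zero,
      mul_zero]
    positivity
  rw [dbar_smul (θ.contDiffAt.differentiableAt one_ne_zero) (hf z hin)]
  refine (norm_add_le _ _).trans (add_le_add ?_ ?_)
  · rcases lt_or_ge ‖z‖ θ.rIn with hz | hz
    · have hone : (θ : ℂ → ℝ) =ᶠ[𝓝 z] fun _ => 1 := by
        filter_upwards [continuous_norm.continuousAt.eventually_lt_const hz] with y hy
        exact θ.one_of_mem_closedBall (mem_closedBall_zero_iff.2 hy.le)
      simp only [hone.fderiv_eq, fderiv_fun_const, Pi.zero_apply, _root_.zero_apply, zero_smul,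
        smul_zero, add_zero, norm_zero]
      positivity
    · refine (norm_smul_add_I_smul_le _ _).trans ?_
      gcongr
      exacts [hC z, hM z hz hin]
  · rw [norm_smul, norm_smul, mul_left_comm κ]
    gcongr
    exact hd z hin

/-- Cut off `f` by `θ`: the zero-order term `κ * ‖f‖` is absorbed in the Cauchy–Pompeiu estimate,
and the error from `dθ` lives on the annulus where `f` is at most `M`. -/
lemma norm_le_of_norm_dbar_le_mul_norm [CompleteSpace W] (hθ : θ.rOut ≤ 1)
    (hC : ∀ z, ‖fderiv ℝ θ z‖ ≤ C) (hf : ∀ z, ‖z‖ ≤ θ.rOut → ContDiffAt ℝ 1 f z)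
    (hκ0 : 0 ≤ κ) (hκ : cauchyConst * κ ≤ 1 / 2)
    (hd : ∀ z, ‖z‖ ≤ θ.rOut → ‖dbar f z‖ ≤ κ * ‖f z‖)
    (hM : ∀ z, θ.rIn ≤ ‖z‖ → ‖z‖ ≤ θ.rOut → ‖f z‖ ≤ M) (hz : ‖z‖ ≤ θ.rIn) :
    ‖f z‖ ≤ 4 * cauchyConst * C * M := by
  have hnorm : ‖(θ.rOut : ℂ)‖ = θ.rOut := by
    rw [norm_real, Real.norm_of_nonneg θ.rOut_pos.le]
  have hM0 : 0 ≤ M :=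
    (norm_nonneg _).trans (hM θ.rOut (by rw [hnorm]; exact θ.rIn_lt_rOut.le) hnorm.le)
  let u : ℂ → W := fun z => θ z • f z
  have hu : ContDiff ℝ 1 u :=
    contDiff_bump_smul (n := 1) θ fun x hx => hf x (mem_closedBall_zero_iff.1 hx)
  have hus : ∀ z, θ.rOut ≤ ‖z‖ → u z = 0 := fun z hz => by
    simp only [u, θ.zero_of_le_dist (show θ.rOut ≤ dist z 0 by rwa [dist_zero_right]), zero_smul]
  have hcomp : HasCompactSupport u := HasCompactSupport.intro (isCompact_closedBall (0 : ℂ) θ.rOut)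
    fun x hx => hus x (not_le.1 (mt mem_closedBall_zero_iff.2 hx)).le
  obtain ⟨zmax, hmax⟩ := hu.continuous.norm.exists_forall_ge_of_hasCompactSupport hcomp.norm
  have hdbar : ∀ z, ‖dbar u z‖ ≤ 2 * C * M + κ * ‖u zmax‖ := fun z =>
    (norm_dbar_bump_smul_le hC hM0 hM hd (fun z hz => (hf z hz).differentiableAt one_ne_zero)
      z).trans (by gcongr; exact hmax z)
  have hpompeiu := norm_le_of_norm_dbar_le hu (fun z hz => hus z (hθ.trans hz)) hdbar zmax
  have habsorb : cauchyConst * κ * ‖u zmax‖ ≤ 1 / 2 * ‖u zmax‖ := by gcongr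
  calc ‖f z‖ = ‖u z‖ := by
        simp only [u, θ.one_of_mem_closedBall (mem_closedBall_zero_iff.2 hz), one_smul]
    _ ≤ ‖u zmax‖ := hmax z
    _ ≤ 4 * cauchyConst * C * M := by linarith

end DiscEstimate

section PunctureBound

variable {V W : Type*} [NormedAddCommGroup V] [NormedSpace ℝ V] [NormedAddCommGroup W]
  {J : V → V →L[ℝ] V} {F : V → W} {U s : Set V} {p : V} {η : ℝ} {Ψ : ℂ × ℂ → V} {q₀ : ℂ × ℂ}

namespace IsDiscChart

lemma mem_diff_singleton (hΨ : IsDiscChart J U p η Ψ) (hq₀ : Ψ q₀ = p) {q : ℂ × ℂ}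
    (hq : ‖q‖ ≤ 3 / 8) (hne : q ≠ q₀) : Ψ q ∈ U \ {p} :=
  ⟨hΨ.mem hq, fun h => hne (hΨ.isHomeomorph.injective (h.trans hq₀.symm))⟩

lemma exists_norm_le_of_mem_annulus (hΨ : IsDiscChart J U p η Ψ)
    (hF : ContinuousOn F (U \ {p})) :
    ∃ M, ∀ z w : ℂ, 1 / 4 ≤ ‖z‖ → ‖z‖ ≤ 5 / 16 → ‖w‖ ≤ 1 / 4 → ‖F (Ψ (z, w))‖ ≤ M := by
  obtain ⟨q₀, hq₀, hq₀p⟩ := hΨ.exists_center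
  let A : Set ℂ := closedBall 0 (5 / 16) \ ball 0 (1 / 4)
  have hcompact : IsCompact (A ×ˢ closedBall (0 : ℂ) (1 / 4)) :=
    ((isCompact_closedBall _ _).diff isOpen_ball).prod (isCompact_closedBall _ _)
  have hmaps : Set.MapsTo Ψ (A ×ˢ closedBall (0 : ℂ) (1 / 4)) (U \ {p}) := by
    rintro ⟨z, w⟩ ⟨⟨hz, hz'⟩, hw⟩
    rw [mem_closedBall_zero_iff] at hz hw
    rw [mem_ball_zero_iff, not_lt] at hz'
    refine hΨ.mem_diff_singleton hq₀p (max_le (hz.trans (by norm_num)) (hw.trans (by norm_num))) ?_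
    rintro rfl
    linarith [(norm_fst_le (z, w)).trans hq₀]
  obtain ⟨M, hM⟩ := hcompact.exists_bound_of_continuousOn
    (hF.comp hΨ.isHomeomorph.continuous.continuousOn hmaps)
  exact ⟨M, fun z w hz hz' hw => hM (z, w) ⟨⟨mem_closedBall_zero_iff.2 hz',
    by rwa [mem_ball_zero_iff, not_lt]⟩, mem_closedBall_zero_iff.2 hw⟩⟩

lemma eventually_norm_le (hΨ : IsDiscChart J U p η Ψ) (hU : IsOpen U) (hq₀ : ‖q₀‖ ≤ 1 / 8)
    (hq₀p : Ψ q₀ = p) (hF : ContinuousOn F (U \ {p})) {M : ℝ}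
    (hM : ∀ q : ℂ × ℂ, ‖q‖ ≤ 1 / 4 → q.2 ≠ q₀.2 → ‖F (Ψ q)‖ ≤ M) :
    ∀ᶠ x in 𝓝[≠] p, ‖F x‖ ≤ M := by
  have hnhds : Ψ '' ball 0 (1 / 4) ∈ 𝓝 p := by
    refine (hΨ.isHomeomorph.isOpenMap _ isOpen_ball).mem_nhds ⟨q₀, ?_, hq₀p⟩
    exact mem_ball_zero_iff.2 (hq₀.trans_lt (by norm_num))
  filter_upwards [mem_nhdsWithin_of_mem_nhds hnhds, self_mem_nhdsWithin]
  rintro _ ⟨⟨z, w⟩, hq, rfl⟩ hne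
  rw [mem_ball_zero_iff] at hq
  have hmem : Ψ (z, w) ∈ U \ {p} := ⟨hΨ.mem (hq.le.trans (by norm_num)), hne⟩
  have hcont : ContinuousAt (fun w => ‖F (Ψ (z, w))‖) w :=
    ((hF.continuousAt ((hU.sdiff isClosed_singleton).mem_nhds hmem)).comp
      (f := fun w => Ψ (z, w)) (hΨ.isHomeomorph.continuous.comp (by fun_prop)).continuousAt).norm
  have hsmall : ∀ᶠ w' in 𝓝[≠] w, ‖(z, w')‖ < 1 / 4 :=
    ((by fun_prop : Continuous fun w' : ℂ => ‖(z, w')‖).continuousAt.eventually_lt_const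
      hq).filter_mono nhdsWithin_le_nhds
  have hgeneric : ∀ᶠ w' in 𝓝[≠] w, w' ≠ q₀.2 := by
    by_cases hw : w = q₀.2
    · exact hw ▸ self_mem_nhdsWithin
    · exact mem_nhdsWithin_of_mem_nhds (isOpen_ne.mem_nhds hw)
  refine le_of_tendsto (hcont.tendsto.mono_left (nhdsWithin_le_nhds (s := {w}ᶜ))) ?_
  filter_upwards [hsmall, hgeneric] with w' hw' hne' using hM (z, w') hw'.le hne'

end IsDiscChart

variable [NormedSpace ℝ W] [NormedSpace ℂ W] {Q : V → W →L[ℝ] V →L[ℝ] W}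

/-- `F` solves on `s` the Cauchy–Riemann type system `dF ∘ J = i dF + Q(F)`, with zero-order
coefficients `Q`. Along a `J`-holomorphic disc it reduces to `dbar F = i Q(F)`. -/
def IsCauchyRiemannSolutionOn (J : V → V →L[ℝ] V) (Q : V → W →L[ℝ] V →L[ℝ] W) (F : V → W)
    (s : Set V) : Prop :=
  ∀ x ∈ s, ∀ X, fderiv ℝ F x (J x X) = I • fderiv ℝ F x X + Q x (F x) X

namespace IsDiscChart

lemma norm_dbar_comp_le (hΨ : IsDiscChart J U p η Ψ)
    (hF : IsCauchyRiemannSolutionOn J Q F s) {K : ℝ} {z w : ℂ} (hzw : ‖(z, w)‖ ≤ 3 / 8)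
    (hmem : Ψ (z, w) ∈ s) (hFd : DifferentiableAt ℝ F (Ψ (z, w))) (hQ : ‖Q (Ψ (z, w))‖ ≤ K) :
    ‖dbar (fun z => F (Ψ (z, w))) z‖ ≤ K * η * ‖F (Ψ (z, w))‖ := by
  have hd := ((hΨ.contDiff_slice w).differentiable one_ne_zero z).hasFDerivAt
  have hcomp : fderiv ℝ (fun z => F (Ψ (z, w))) z =
      fderiv ℝ F (Ψ (z, w)) ∘L fderiv ℝ (fun z => Ψ (z, w)) z :=
    (hFd.hasFDerivAt.comp z hd).fderiv
  have hdbar : dbar (fun z => F (Ψ (z, w))) z =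
      I • Q (Ψ (z, w)) (F (Ψ (z, w))) (fderiv ℝ (fun z => Ψ (z, w)) z 1) := by
    simp only [dbar, hcomp, ContinuousLinearMap.comp_apply]
    rw [← hΨ.map_one_eq_map_I hzw, hF _ hmem, smul_add, smul_smul, I_mul_I, neg_smul, one_smul,
      add_neg_cancel_left]
  have hone : ‖fderiv ℝ (fun z => Ψ (z, w)) z 1‖ ≤ η := by
    have := (fderiv ℝ (fun z => Ψ (z, w)) z).le_opNorm 1
    rw [norm_one, mul_one] at this
    exact this.trans (hΨ.norm_fderiv_slice_le w z)
  have hK : 0 ≤ K := (norm_nonneg (Q (Ψ (z, w)))).trans hQ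
  rw [hdbar, norm_smul, norm_I, one_mul, mul_right_comm]
  refine (ContinuousLinearMap.le_opNorm₂ _ _ _).trans ?_
  gcongr

/-- Only the slice through the centre of the chart meets `p`. -/
lemma exists_norm_le_of_snd_ne [IsScalarTower ℝ ℂ W] [CompleteSpace W]
    (hΨ : IsDiscChart J U p η Ψ) (hq₀ : Ψ q₀ = p) (hU : IsOpen U)
    (hF : ContDiffOn ℝ 1 F (U \ {p})) (hCR : IsCauchyRiemannSolutionOn J Q F (U \ {p})) {K : ℝ}
    (hQ : ∀ x ∈ U, ‖Q x‖ ≤ K) (hη : 0 ≤ η) (hKη : cauchyConst * (K * η) ≤ 1 / 2) :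
    ∃ M, ∀ q : ℂ × ℂ, ‖q‖ ≤ 1 / 4 → q.2 ≠ q₀.2 → ‖F (Ψ q)‖ ≤ M := by
  let θ : ContDiffBump (0 : ℂ) := ⟨1 / 4, 5 / 16, by norm_num, by norm_num⟩
  obtain ⟨C, hC⟩ := (θ.hasCompactSupport.fderiv ℝ).exists_bound_of_continuous
    ((θ.contDiff (n := 1)).continuous_fderiv one_ne_zero)
  obtain ⟨M, hM⟩ := hΨ.exists_norm_le_of_mem_annulus hF.continuousOn
  refine ⟨4 * cauchyConst * C * M, fun ⟨z₀, w⟩ hq hne => ?_⟩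
  have hw : ‖w‖ ≤ 1 / 4 := (norm_snd_le (z₀, w)).trans hq
  have hnorm : ∀ z : ℂ, ‖z‖ ≤ 5 / 16 → ‖(z, w)‖ ≤ 3 / 8 := fun z hz =>
    max_le (hz.trans (show (5 / 16 : ℝ) ≤ 3 / 8 by norm_num))
      (hw.trans (show (1 / 4 : ℝ) ≤ 3 / 8 by norm_num))
  have hmem : ∀ z, ‖z‖ ≤ θ.rOut → Ψ (z, w) ∈ U \ {p} := fun z hz =>
    hΨ.mem_diff_singleton hq₀ (hnorm z hz) fun h => hne (congrArg Prod.snd h :)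
  have hFd : ∀ z, ‖z‖ ≤ θ.rOut → ContDiffAt ℝ 1 F (Ψ (z, w)) := fun z hz =>
    hF.contDiffAt ((hU.sdiff isClosed_singleton).mem_nhds (hmem z hz))
  have hK : 0 ≤ K := (norm_nonneg (Q _)).trans
    (hQ _ (hmem 0 (by rw [norm_zero]; exact θ.rOut_pos.le)).1)
  exact norm_le_of_norm_dbar_le_mul_norm (θ := θ) (by norm_num) hC
    (fun z hz => (hFd z hz).comp z (hΨ.contDiff_slice w).contDiffAt) (by positivity) hKη
    (fun z hz => hΨ.norm_dbar_comp_le hCR (hnorm z hz) (hmem z hz)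
      ((hFd z hz).differentiableAt one_ne_zero) (hQ _ (hmem z hz).1))
    (fun z hz hz' => hM z w hz hz' hw) ((norm_fst_le (z₀, w)).trans hq)

end IsDiscChart

lemma exists_eventually_norm_le [IsScalarTower ℝ ℂ W] [CompleteSpace W]
    (hV : Module.finrank ℝ V = 4) (hU : IsOpen U) (hp : p ∈ U) (hJ : ContDiffOn ℝ ∞ J U)
    (hJ2 : ∀ x ∈ U, ∀ X, J x (J x X) = -X) (hQ : ContinuousAt Q p)
    (hF : ContDiffOn ℝ 1 F (U \ {p})) (hCR : IsCauchyRiemannSolutionOn J Q F (U \ {p})) :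
    ∃ M, ∀ᶠ x in 𝓝[≠] p, ‖F x‖ ≤ M := by
  let K := ‖Q p‖ + 1
  have hK : 0 < K := by positivity
  have hC : 0 < cauchyConst := zero_lt_one.trans_le one_le_cauchyConst
  have hQK : ∀ᶠ x in 𝓝 p, ‖Q x‖ < K :=
    (hQ.tendsto.norm (E := W →L[ℝ] V →L[ℝ] W)).eventually_lt_const (lt_add_one _)
  obtain ⟨U', hU'sub, hU', hpU'⟩ :=
    _root_.mem_nhds_iff.1 (inter_mem (hU.mem_nhds hp) hQK)
  have hsub : U' ⊆ U := fun x hx => (hU'sub hx).1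
  have hsub' : U' \ {p} ⊆ U \ {p} := Set.sdiff_subset_sdiff_left hsub
  have hη : 0 < 1 / (2 * cauchyConst * K) := by positivity
  obtain ⟨Ψ, hΨ⟩ := exists_isDiscChart hV hU' hpU' (hJ.mono hsub) (fun x hx => hJ2 x (hsub hx)) hη
  obtain ⟨q₀, hq₀, hq₀p⟩ := hΨ.exists_center
  obtain ⟨M, hM⟩ := hΨ.exists_norm_le_of_snd_ne hq₀p hU' (hF.mono hsub')
    (fun x hx => hCR x (hsub' hx)) (fun x hx => (hU'sub hx).2.le) hη.le
    (by field_simp; rfl)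
  exact ⟨M, hΨ.eventually_norm_le hU' hq₀ hq₀p (hF.continuousOn.mono hsub') hM⟩

end PunctureBound

section PunctureLimit

variable {V W : Type*} [NormedAddCommGroup V] [NormedSpace ℝ V] [NormedAddCommGroup W]
  [NormedSpace ℝ W] {F : V → W} {p x y : V} {s : Set V} {M : ℝ}

lemma sub_mem_span_of_mem_segment (hxp : x ≠ p) (h : p ∈ segment ℝ x y) :
    y - x ∈ Submodule.span ℝ {p - x} := by
  rw [segment_eq_image'] at h
  obtain ⟨t, -, rfl⟩ := h
  have ht : t ≠ 0 := by
    rintro rfl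
    simp at hxp
  refine Submodule.mem_span_singleton.2 ⟨t⁻¹, ?_⟩
  rw [add_sub_cancel_left, inv_smul_smul₀ ht]

lemma dense_setOf_notMem_segment (hV : 1 < Module.rank ℝ V) (hxp : x ≠ p) :
    Dense {y | p ∉ segment ℝ x y} := by
  have hspan : Submodule.span ℝ {p - x} ≠ ⊤ := fun h => by
    have := rank_span_le (R := ℝ) {p - x}
    rw [h, rank_top, Cardinal.mk_singleton] at this
    exact hV.not_ge this
  have hdense : Dense ((Submodule.span ℝ {p - x} : Set V)ᶜ) := by
    rw [← interior_eq_empty_iff_dense_compl, ← Set.not_nonempty_iff_eq_empty]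
    exact mt (Submodule.eq_top_of_nonempty_interior' _) hspan
  refine (hdense.preimage (Homeomorph.subRight x).isOpenMap).mono fun y hy h => ?_
  exact hy (sub_mem_span_of_mem_segment hxp h)

/-- Off a line, segments avoid `p`; the general case follows by density. -/
lemma norm_sub_le_of_norm_fderiv_le_of_ne (hV : 1 < Module.rank ℝ V) (hs : IsOpen s)
    (hconv : Convex ℝ s) (hd : ∀ z ∈ s, z ≠ p → DifferentiableAt ℝ F z)
    (hM : ∀ z ∈ s, z ≠ p → ‖fderiv ℝ F z‖ ≤ M) (hx : x ∈ s) (hxp : x ≠ p) (hy : y ∈ s)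
    (hyp : y ≠ p) : ‖F y - F x‖ ≤ M * ‖y - x‖ := by
  have hgeneric : ∀ z ∈ s ∩ {z | p ∉ segment ℝ x z}, ‖F z - F x‖ ≤ M * ‖z - x‖ := by
    rintro z ⟨hz, hp⟩
    have hsub := hconv.segment_subset hx hz
    have hne : ∀ u ∈ segment ℝ x z, u ≠ p := fun u hu h => hp (h ▸ hu)
    exact (convex_segment x z).norm_image_sub_le_of_norm_fderiv_le
      (fun u hu => hd u (hsub hu) (hne u hu)) (fun u hu => hM u (hsub hu) (hne u hu))
      (left_mem_segment ℝ x z) (right_mem_segment ℝ x z)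
  have hcont := (hd y hy hyp).continuousAt.continuousWithinAt
    (s := s ∩ {z | p ∉ segment ℝ x z})
  exact ContinuousWithinAt.closure_le
    ((dense_setOf_notMem_segment hV hxp).open_subset_closure_inter hs hy)
    (hcont.sub continuousWithinAt_const).norm
    (by fun_prop : Continuous fun z => M * ‖z - x‖).continuousWithinAt hgeneric

lemma exists_tendsto_punctured_of_norm_fderiv_le [CompleteSpace W] (hV : 1 < Module.rank ℝ V)
    (hd : ∀ᶠ x in 𝓝[≠] p, DifferentiableAt ℝ F x)
    (hM : ∀ᶠ x in 𝓝[≠] p, ‖fderiv ℝ F x‖ ≤ M) : ∃ c, Tendsto F (𝓝[≠] p) (𝓝 c) := by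
  have : Nontrivial V := rank_pos_iff_nontrivial.1 (zero_lt_one.trans hV)
  have : (𝓝[≠] p).NeBot := Module.punctured_nhds_neBot ℝ V p
  have hM0 : 0 ≤ M := (norm_nonneg _).trans hM.exists.choose_spec
  obtain ⟨r, hr, hball⟩ := eventually_nhds_iff_ball.1 (eventually_nhdsWithin_iff.1 (hd.and hM))
  have hlip : LipschitzOnWith ⟨M, hM0⟩ F (ball p r \ {p}) :=
    LipschitzOnWith.of_dist_le_mul fun x hx y hy => by
      rw [dist_eq_norm, dist_eq_norm]
      exact norm_sub_le_of_norm_fderiv_le_of_ne hV isOpen_ball (convex_ball p r)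
        (fun z hz hzp => (hball z hz hzp).1) (fun z hz hzp => (hball z hz hzp).2)
        hy.1 hy.2 hx.1 hx.2
  have hcauchy : Cauchy (𝓝[≠] p) := cauchy_nhds.mono nhdsWithin_le_nhds
  exact CompleteSpace.complete (hcauchy.map_of_le hlip.uniformContinuousOn
    (le_principal_iff.2 (sdiff_mem_nhdsWithin_compl (ball_mem_nhds p hr) {p})))

lemma hasFDerivAt_update_of_tendsto_fderiv [DecidableEq V] (hV : 1 < Module.rank ℝ V) {c : W}
    {L : V →L[ℝ] W} (hd : ∀ᶠ x in 𝓝[≠] p, DifferentiableAt ℝ F x)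
    (hc : Tendsto F (𝓝[≠] p) (𝓝 c)) (hL : Tendsto (fderiv ℝ F) (𝓝[≠] p) (𝓝 L)) :
    HasFDerivAt (Function.update F p c) L p := by
  have : Nontrivial V := rank_pos_iff_nontrivial.1 (zero_lt_one.trans hV)
  have : (𝓝[≠] p).NeBot := Module.punctured_nhds_neBot ℝ V p
  rw [hasFDerivAt_iff_isLittleO, Asymptotics.isLittleO_iff]
  intro ε hε
  have hclose : ∀ᶠ x in 𝓝[≠] p, ‖fderiv ℝ F x - L‖ < ε := by
    simpa only [dist_eq_norm] using (Metric.tendsto_nhds.1 hL) ε hε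
  obtain ⟨r, hr, hball⟩ :=
    eventually_nhds_iff_ball.1 (eventually_nhdsWithin_iff.1 (hd.and hclose))
  filter_upwards [ball_mem_nhds p hr] with x hx
  rcases eq_or_ne x p with rfl | hxp
  · simp only [sub_self, map_zero, norm_zero, mul_zero, le_refl]
  rw [Function.update_self, Function.update_of_ne hxp]
  have hG : ∀ y ∈ ball p r, y ≠ p → HasFDerivAt (fun y => F y - L y) (fderiv ℝ F y - L) y :=
    fun y hy hyp => (hball y hy hyp).1.hasFDerivAt.sub L.hasFDerivAt
  have hincr : ∀ᶠ y in 𝓝[≠] p, ‖F x - L x - (F y - L y)‖ ≤ ε * ‖x - y‖ := by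
    filter_upwards [sdiff_mem_nhdsWithin_compl (ball_mem_nhds p hr) {p}] with y hy
    exact norm_sub_le_of_norm_fderiv_le_of_ne hV isOpen_ball (convex_ball p r)
      (fun z hz hzp => (hG z hz hzp).differentiableAt)
      (fun z hz hzp => (hG z hz hzp).fderiv ▸ (hball z hz hzp).2.le) hy.1 hy.2 hx hxp
  have hid : Tendsto (fun y : V => y) (𝓝[≠] p) (𝓝 p) := nhdsWithin_le_nhds
  have hlim := le_of_tendsto_of_tendsto
    (tendsto_const_nhds.sub (hc.sub ((L.continuous.tendsto p).comp hid))).norm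
    ((tendsto_const_nhds.sub hid).norm.const_mul ε) hincr
  rwa [map_sub, sub_sub_sub_comm]

end PunctureLimit

section Prolongation

variable {V W : Type*} [NormedAddCommGroup V] [NormedSpace ℝ V] [NormedAddCommGroup W]
  [NormedSpace ℝ W]

/-- The first jet of a map `F`, without its base point. -/
noncomputable def firstJet (F : V → W) (x : V) : W × (V →L[ℝ] W) := (F x, fderiv ℝ F x)

variable [FiniteDimensional ℝ V] [FiniteDimensional ℝ W]

/-- The zero-order coefficients of the system for the first jet `(F, dF)` obtained by
differentiating `dF ∘ J = i dF + Q(F)` in the direction `Y`. -/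
noncomputable def prolongedCoeff (J : V → V →L[ℝ] V) (Q : V → W →L[ℝ] V →L[ℝ] W) (x : V) :
    W × (V →L[ℝ] W) →L[ℝ] V →L[ℝ] W × (V →L[ℝ] W) :=
  (LinearMap.mk₂ ℝ
    (fun (a : W × (V →L[ℝ] W)) (X : V) => (Q x a.1 X,
      -(a.2 ∘L (fderiv ℝ J x).flip X) + ((fderiv ℝ Q x).flip a.1).flip X +
        (Q x).flip X ∘L a.2))
    (fun a b X => Prod.ext (by simp) (ContinuousLinearMap.ext fun Y => by simp; abel))
    (fun r a X => Prod.ext (by simp) (ContinuousLinearMap.ext fun Y => by simp))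
    (fun a X X' => Prod.ext (by simp) (ContinuousLinearMap.ext fun Y => by simp; abel))
    fun r a X => Prod.ext (by simp)
      (ContinuousLinearMap.ext fun Y => by simp)).toContinuousBilinearMap

variable {J : V → V →L[ℝ] V} {Q : V → W →L[ℝ] V →L[ℝ] W} {F : V → W} {U s : Set V}

set_option maxSynthPendingDepth 4 in
lemma contDiffOn_prolongedCoeff (hU : IsOpen U) (hJ : ContDiffOn ℝ ∞ J U)
    (hQ : ContDiffOn ℝ ∞ Q U) : ContDiffOn ℝ ∞ (prolongedCoeff J Q) U := by
  have hDJ : ContDiffOn ℝ ∞ (fderiv ℝ J) U := hJ.fderiv_of_isOpen hU (by simp)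
  have hDQ : ContDiffOn ℝ ∞ (fderiv ℝ Q) U := hQ.fderiv_of_isOpen hU (by simp)
  refine contDiffOn_clm_apply.2 fun a => contDiffOn_clm_apply.2 fun X =>
    ContDiffOn.prodMk ?_ (contDiffOn_clm_apply.2 fun Y => ?_)
  · exact (hQ.clm_apply contDiffOn_const).clm_apply contDiffOn_const
  · refine ((ContDiffOn.neg ?_).add ?_).add ?_
    · exact a.2.contDiff.comp_contDiffOn
        ((hDJ.clm_apply contDiffOn_const).clm_apply contDiffOn_const)
    · exact ((hDQ.clm_apply contDiffOn_const).clm_apply contDiffOn_const).clm_apply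
        contDiffOn_const
    · exact (hQ.clm_apply contDiffOn_const).clm_apply contDiffOn_const

lemma IsCauchyRiemannSolutionOn.prolong [NormedSpace ℂ W] [IsScalarTower ℝ ℂ W]
    (hF : IsCauchyRiemannSolutionOn J Q F s) (hs : IsOpen s) (hJ : ContDiffOn ℝ ∞ J s)
    (hQ : ContDiffOn ℝ ∞ Q s) (hFs : ContDiffOn ℝ ∞ F s) :
    IsCauchyRiemannSolutionOn J (prolongedCoeff J Q) (firstJet F) s := by
  intro x hx X
  have hDFs : ContDiffOn ℝ ∞ (fderiv ℝ F) s := hFs.fderiv_of_isOpen hs (by simp)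
  have hFd := (hFs.differentiableOn (by simp)).hasFDerivAt (hs.mem_nhds hx)
  have hDFd := (hDFs.differentiableOn (by simp)).hasFDerivAt (hs.mem_nhds hx)
  have hJd := (hJ.differentiableOn (by simp)).hasFDerivAt (hs.mem_nhds hx)
  have hQd := (hQ.differentiableOn (by simp)).hasFDerivAt (hs.mem_nhds hx)
  have hsymm : IsSymmSndFDerivAt ℝ F x :=
    (hFs.contDiffAt (hs.mem_nhds hx)).isSymmSndFDerivAt
      (by simp only [minSmoothness_of_isRCLikeNormedField]; exact WithTop.coe_le_coe.2 le_top)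
  have hjet : fderiv ℝ (firstJet F) x =
      (fderiv ℝ F x).prod (fderiv ℝ (fderiv ℝ F) x) := (hFd.prodMk hDFd).fderiv
  rw [hjet]
  refine Prod.ext (hF x hx X) (ContinuousLinearMap.ext fun Y => ?_)
  have hleft := hDFd.clm_apply (hJd.clm_apply (hasFDerivAt_const X x))
  have hright := ((hDFd.clm_apply (hasFDerivAt_const X x)).const_smul I).add
    ((hQd.clm_apply hFd).clm_apply (hasFDerivAt_const X x))
  have hsystem : (fun x => fderiv ℝ F x (J x X)) =ᶠ[𝓝 x]
      (I • fun x => fderiv ℝ F x X) + fun x => Q x (F x) X := by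
    filter_upwards [hs.mem_nhds hx] with y hy using hF y hy X
  have hdiff : fderiv ℝ F x (fderiv ℝ J x Y X) + fderiv ℝ (fderiv ℝ F) x Y (J x X) =
      I • fderiv ℝ (fderiv ℝ F) x Y X +
        (Q x (fderiv ℝ F x Y) X + fderiv ℝ Q x Y (F x) X) := by
    simpa only [ContinuousLinearMap.comp_zero, zero_add, _root_.add_apply, _root_.smul_apply,
      ContinuousLinearMap.comp_apply, ContinuousLinearMap.flip_apply,
      ContinuousLinearMap.flip_add] using
      DFunLike.congr_fun ((hleft.congr_of_eventuallyEq hsystem.symm).unique hright) Y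
  simp only [ContinuousLinearMap.prod_apply, Prod.smul_mk, prolongedCoeff, firstJet,
    LinearMap.toContinuousBilinearMap_apply, LinearMap.mk₂_apply, Prod.mk_add_mk,
    _root_.add_apply, _root_.smul_apply, _root_.neg_apply, ContinuousLinearMap.comp_apply,
    ContinuousLinearMap.flip_apply]
  rw [hsymm (J x X) Y, hsymm X Y, eq_sub_of_add_eq' hdiff]
  abel

end Prolongation

section RemovableSingularity

universe u

variable {V W : Type u} [NormedAddCommGroup V] [NormedSpace ℝ V] [DecidableEq V]
  [NormedAddCommGroup W] [NormedSpace ℝ W] {F : V → W} {U : Set V} {p : V}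

lemma contDiffAt_zero_update (hU : IsOpen U) (hp : p ∈ U) (hF : ContinuousOn F (U \ {p}))
    {c : W} (hc : Tendsto F (𝓝[≠] p) (𝓝 c)) : ContDiffAt ℝ 0 (Function.update F p c) p := by
  refine contDiffAt_zero.2 ⟨U, hU.mem_nhds hp, fun x hx => ContinuousAt.continuousWithinAt ?_⟩
  rcases eq_or_ne x p with rfl | hxp
  · exact continuousAt_update_same.2 hc
  · rw [continuousAt_update_of_ne hxp]
    exact hF.continuousAt ((hU.sdiff isClosed_singleton).mem_nhds ⟨hx, hxp⟩)

lemma contDiffAt_succ_update_of_firstJet (hV : 1 < Module.rank ℝ V) (hU : IsOpen U)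
    (hp : p ∈ U) (hF : DifferentiableOn ℝ F (U \ {p})) {n : ℕ} {c : W × (V →L[ℝ] W)}
    (hc : ContDiffAt ℝ n (Function.update (firstJet F) p c) p) :
    ContDiffAt ℝ (n + 1 : ℕ) (Function.update F p c.1) p := by
  have hd : ∀ x ∈ U \ {p}, DifferentiableAt ℝ F x := fun x hx =>
    hF.differentiableAt ((hU.sdiff isClosed_singleton).mem_nhds hx)
  have hev : ∀ᶠ x in 𝓝[≠] p, DifferentiableAt ℝ F x := by
    filter_upwards [sdiff_mem_nhdsWithin_compl (hU.mem_nhds hp) {p}] using hd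
  have hjet : Tendsto (firstJet F) (𝓝[≠] p) (𝓝 c) := continuousAt_update_same.1 hc.continuousAt
  have hderiv := hasFDerivAt_update_of_tendsto_fderiv hV hev
    ((continuous_fst.tendsto c).comp hjet) ((continuous_snd.tendsto c).comp hjet)
  rw [Nat.cast_succ, contDiffAt_succ_iff_hasFDerivAt]
  refine ⟨fun x => (Function.update (firstJet F) p c x).2, ⟨U, hU.mem_nhds hp, fun x hx => ?_⟩,
    contDiff_snd.contDiffAt.comp p hc⟩
  rcases eq_or_ne x p with rfl | hxp
  · simpa only [Function.update_self] using hderiv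
  · simp only [Function.update_of_ne hxp]
    refine (hd x ⟨hx, hxp⟩).hasFDerivAt.congr_of_eventuallyEq ?_
    filter_upwards [isOpen_ne.mem_nhds hxp] with y hy using Function.update_of_ne hy _ _

variable {J : V → V →L[ℝ] V}

set_option maxSynthPendingDepth 4 in
lemma exists_contDiffAt_nat_update (hV : Module.finrank ℝ V = 4) (hU : IsOpen U) (hp : p ∈ U)
    (hJ : ContDiffOn ℝ ∞ J U) (hJ2 : ∀ x ∈ U, ∀ X, J x (J x X) = -X) (n : ℕ) :
    ∀ (W : Type u) [NormedAddCommGroup W] [NormedSpace ℝ W] [NormedSpace ℂ W]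
      [IsScalarTower ℝ ℂ W] [FiniteDimensional ℝ W] (F : V → W) (Q : V → W →L[ℝ] V →L[ℝ] W),
      ContDiffOn ℝ ∞ F (U \ {p}) → ContDiffOn ℝ ∞ Q U →
      IsCauchyRiemannSolutionOn J Q F (U \ {p}) →
      ∃ c, ContDiffAt ℝ n (Function.update F p c) p := by
  have : FiniteDimensional ℝ V := Module.finite_of_finrank_eq_succ hV
  have hrank : 1 < Module.rank ℝ V := by
    rw [← Module.finrank_eq_rank, hV]
    norm_num
  have hs : IsOpen (U \ {p}) := hU.sdiff isClosed_singleton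
  have hsU : U \ {p} ⊆ U := Set.sdiff_subset
  induction n with
  | zero =>
    intro W _ _ _ _ _ F Q hF hQ hCR
    have : CompleteSpace W := FiniteDimensional.complete ℝ W
    have hQ' := contDiffOn_prolongedCoeff hU hJ hQ
    have hF' : ContDiffOn ℝ 1 (firstJet F) (U \ {p}) :=
      (hF.prodMk (hF.fderiv_of_isOpen hs (by simp))).of_le (by simp)
    obtain ⟨M, hM⟩ := exists_eventually_norm_le hV hU hp hJ hJ2
      (hQ'.continuousOn.continuousAt (hU.mem_nhds hp)) hF'
      (hCR.prolong hs (hJ.mono hsU) (hQ.mono hsU) hF)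
    obtain ⟨c, hc⟩ := exists_tendsto_punctured_of_norm_fderiv_le hrank
      (by
        filter_upwards [sdiff_mem_nhdsWithin_compl (hU.mem_nhds hp) {p}] with x hx
        exact (hF.differentiableOn (by simp)).differentiableAt (hs.mem_nhds hx))
      (hM.mono fun x hx => (norm_snd_le (firstJet F x)).trans hx)
    exact ⟨c, contDiffAt_zero_update hU hp hF.continuousOn hc⟩
  | succ n ih =>
    intro W _ _ _ _ _ F Q hF hQ hCR
    obtain ⟨c, hc⟩ := ih (W × (V →L[ℝ] W)) (firstJet F) (prolongedCoeff J Q)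
      (hF.prodMk (hF.fderiv_of_isOpen hs (by simp))) (contDiffOn_prolongedCoeff hU hJ hQ)
      (hCR.prolong hs (hJ.mono hsU) (hQ.mono hsU) hF)
    exact ⟨c.1, contDiffAt_succ_update_of_firstJet hrank hU hp
      (hF.differentiableOn (by simp)) hc⟩

theorem exists_contDiffAt_update [NormedSpace ℂ W] [IsScalarTower ℝ ℂ W] [FiniteDimensional ℝ W]
    (hV : Module.finrank ℝ V = 4) (hU : IsOpen U) (hp : p ∈ U)
    (hJ : ContDiffOn ℝ ∞ J U) (hJ2 : ∀ x ∈ U, ∀ X, J x (J x X) = -X)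
    {Q : V → W →L[ℝ] V →L[ℝ] W} (hQ : ContDiffOn ℝ ∞ Q U) (hF : ContDiffOn ℝ ∞ F (U \ {p}))
    (hCR : IsCauchyRiemannSolutionOn J Q F (U \ {p})) :
    ∃ c, ContDiffAt ℝ ∞ (Function.update F p c) p := by
  have : Nontrivial V := Module.nontrivial_of_finrank_eq_succ hV
  have : (𝓝[≠] p).NeBot := Module.punctured_nhds_neBot ℝ V p
  choose c hc using fun n => exists_contDiffAt_nat_update hV hU hp hJ hJ2 n W F Q hF hQ hCR
  have hlim : ∀ n, Tendsto F (𝓝[≠] p) (𝓝 (c n)) := fun n =>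
    continuousAt_update_same.1 (hc n).continuousAt
  exact ⟨c 0, contDiffAt_infty.2 fun n => tendsto_nhds_unique (hlim n) (hlim 0) ▸ hc n⟩

end RemovableSingularity

section TwoZeroForms

variable {V : Type*} [NormedAddCommGroup V] [NormedSpace ℝ V] {j : V →L[ℝ] V}
  {θ Φ B : V →L[ℝ] V →L[ℝ] ℂ} {A : V →L[ℝ] V →L[ℝ] ℝ} {a b : V}
  {E F : Type*} [NormedAddCommGroup E] [NormedSpace ℝ E] [NormedAddCommGroup F] [NormedSpace ℝ F]

/-- A complex-valued alternating form is of type `(2, 0)` for the complex structure `j` if it is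
`j`-complex bilinear. -/
structure IsTwoZeroForm (j : V →L[ℝ] V) (θ : V →L[ℝ] V →L[ℝ] ℂ) : Prop where
  self_eq_zero : ∀ Y, θ Y Y = 0
  map_j_left : ∀ Y Z, θ (j Y) Z = I * θ Y Z

namespace IsTwoZeroForm

lemma swap (hθ : IsTwoZeroForm j θ) (Y Z : V) : θ Y Z = -θ Z Y := by
  have h := hθ.self_eq_zero (Y + Z)
  simp only [map_add, _root_.add_apply, hθ.self_eq_zero, zero_add, add_zero] at h
  exact eq_neg_of_add_eq_zero_left ((add_comm _ _).trans h)

lemma map_j_right (hθ : IsTwoZeroForm j θ) (Y Z : V) : θ Y (j Z) = I * θ Y Z := by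
  rw [hθ.swap, hθ.map_j_left, hθ.swap Z, mul_neg, neg_neg]

lemma smul (hθ : IsTwoZeroForm j θ) (c : ℂ) : IsTwoZeroForm j (c • θ) where
  self_eq_zero Y := by simp only [_root_.smul_apply, hθ.self_eq_zero, smul_zero]
  map_j_left Y Z := by simp only [_root_.smul_apply, hθ.map_j_left, smul_eq_mul, mul_left_comm]

end IsTwoZeroForm

/-- The complex linear map `ℂ × ℂ → V` with values `a`, `b` on the standard basis, for the complex
structure `j` on `V`. -/
noncomputable def frameMap (j : V →L[ℝ] V) (a b : V) : ℂ × ℂ →ₗ[ℝ] V where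
  toFun q := q.1.re • a + q.1.im • j a + (q.2.re • b + q.2.im • j b)
  map_add' q q' := by simp only [Prod.fst_add, Prod.snd_add, add_re, add_im]; module
  map_smul' r q := by
    simp only [Prod.smul_fst, Prod.smul_snd, smul_re, smul_im, RingHom.id_apply, smul_eq_mul]
    module

lemma IsTwoZeroForm.map_frameMap_left (hθ : IsTwoZeroForm j θ) (q : ℂ × ℂ) (Z : V) :
    θ (frameMap j a b q) Z = q.1 * θ a Z + q.2 * θ b Z := by
  simp only [frameMap, LinearMap.coe_mk, AddHom.coe_mk, map_add, map_smul, _root_.add_apply,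
    _root_.smul_apply, hθ.map_j_left, real_smul]
  conv_rhs => rw [← re_add_im q.1, ← re_add_im q.2]
  ring

lemma IsTwoZeroForm.map_frameMap_right (hθ : IsTwoZeroForm j θ) (Y : V) (q : ℂ × ℂ) :
    θ Y (frameMap j a b q) = q.1 * θ Y a + q.2 * θ Y b := by
  rw [hθ.swap, hθ.map_frameMap_left, hθ.swap a, hθ.swap b]
  ring

lemma IsTwoZeroForm.frameMap_eq (hθ : IsTwoZeroForm j θ) (hab : θ a b = 1)
    (hV : Module.finrank ℝ V = 4) (X : V) : frameMap j a b (θ X b, θ a X) = X := by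
  have hcoord : ∀ q, (θ (frameMap j a b q) b, θ a (frameMap j a b q)) = q := fun q => by
    rw [hθ.map_frameMap_left, hθ.map_frameMap_right, hab, hθ.self_eq_zero, hθ.self_eq_zero]
    simp only [mul_one, mul_zero, add_zero, zero_add]
  have : FiniteDimensional ℝ V := Module.finite_of_finrank_eq_succ hV
  have hdim : Module.finrank ℝ (ℂ × ℂ) = Module.finrank ℝ V := by
    rw [Module.finrank_prod, finrank_real_complex, hV]
  obtain ⟨q, rfl⟩ := ((frameMap j a b).injective_iff_surjective_of_finrank_eq_finrank hdim).1
    (Function.LeftInverse.injective (g := fun X => (θ X b, θ a X)) hcoord) X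
  rw [hcoord]

lemma IsTwoZeroForm.apply_eq_mul (hΦ : IsTwoZeroForm j Φ) (hθ : IsTwoZeroForm j θ)
    (hab : θ a b = 1) (hV : Module.finrank ℝ V = 4) (Y Z : V) : Φ Y Z = Φ a b * θ Y Z := by
  obtain ⟨q, rfl⟩ : ∃ q, frameMap j a b q = Y := ⟨_, hθ.frameMap_eq hab hV Y⟩
  obtain ⟨r, rfl⟩ : ∃ r, frameMap j a b r = Z := ⟨_, hθ.frameMap_eq hab hV Z⟩
  simp only [hΦ.map_frameMap_left, hΦ.map_frameMap_right, hθ.map_frameMap_left,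
    hθ.map_frameMap_right, hΦ.self_eq_zero, hθ.self_eq_zero, hΦ.swap b a, hθ.swap b a, hab]
  ring

/-- Four times the `(2, 0)`-part of a complex-valued bilinear form for the complex structure
`j`. -/
noncomputable def twoZeroPart (j : V →L[ℝ] V) (B : V →L[ℝ] V →L[ℝ] ℂ) : V →L[ℝ] V →L[ℝ] ℂ :=
  B - B.bilinearComp j j -
    I • (B.bilinearComp j (.id ℝ V) + B.bilinearComp (.id ℝ V) j)

lemma twoZeroPart_apply (j : V →L[ℝ] V) (B : V →L[ℝ] V →L[ℝ] ℂ) (Y Z : V) :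
    twoZeroPart j B Y Z = B Y Z - B (j Y) (j Z) - I * (B (j Y) Z + B Y (j Z)) := rfl

lemma isTwoZeroForm_twoZeroPart (hj : ∀ X, j (j X) = -X) (hB : ∀ Y, B Y Y = 0) :
    IsTwoZeroForm j (twoZeroPart j B) where
  self_eq_zero Y := by
    have h := hB (Y + j Y)
    simp only [map_add, _root_.add_apply, hB, zero_add, add_zero] at h
    rw [twoZeroPart_apply, hB, hB, h, mul_zero, sub_zero, sub_zero]
  map_j_left Y Z := by
    simp only [twoZeroPart_apply, hj, map_neg, _root_.neg_apply]
    linear_combination (B (j Y) Z + B Y (j Z)) * I_mul_I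

lemma IsTwoZeroForm.twoZeroPart_apply (hθ : IsTwoZeroForm j θ) (Y Z : V) :
    twoZeroPart j θ Y Z = 4 * θ Y Z := by
  rw [HartogsExtension.twoZeroPart_apply]
  simp only [hθ.map_j_left, hθ.map_j_right]
  linear_combination (-3 * θ Y Z) * I_mul_I

/-- Composition of a vector-valued bilinear form with a linear map of its values. -/
noncomputable def mapForm (L : E →L[ℝ] F) : (V →L[ℝ] V →L[ℝ] E) →L[ℝ] V →L[ℝ] V →L[ℝ] F :=
  .compL ℝ V (V →L[ℝ] E) (V →L[ℝ] F) (.compL ℝ V E F L)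

@[simp]
lemma mapForm_apply (L : E →L[ℝ] F) (β : V →L[ℝ] V →L[ℝ] E) (Y Z : V) :
    mapForm L β Y Z = L (β Y Z) := rfl

lemma re_twoZeroPart_mapForm_ofRealCLM (hA : ∀ X Y, A (j X) (j Y) = -A X Y) (Y Z : V) :
    (twoZeroPart j (mapForm ofRealCLM A) Y Z).re = 2 * A Y Z := by
  simp only [twoZeroPart_apply, mapForm_apply, ofRealCLM_apply, hA, ← ofReal_add, sub_re,
    ofReal_re, I_mul_re, ofReal_im]
  ring

end TwoZeroForms

section LocalFrames

variable {V : Type*} [NormedAddCommGroup V] [NormedSpace ℝ V] [FiniteDimensional ℝ V]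
  {J : V → V →L[ℝ] V} {U : Set V} {p : V}

lemma contDiffOn_twoZeroPart {B : V → V →L[ℝ] V →L[ℝ] ℂ} {n : WithTop ℕ∞}
    (hJ : ContDiffOn ℝ n J U) (hB : ContDiffOn ℝ n B U) :
    ContDiffOn ℝ n (fun x => twoZeroPart (J x) (B x)) U := by
  refine contDiffOn_clm_apply.2 fun Y => contDiffOn_clm_apply.2 fun Z => ?_
  simp only [twoZeroPart_apply]
  have hJY := hJ.clm_apply (contDiffOn_const (c := Y))
  have hJZ := hJ.clm_apply (contDiffOn_const (c := Z))
  have hBY := hB.clm_apply (contDiffOn_const (c := Y))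
  exact ((hBY.clm_apply contDiffOn_const).sub ((hB.clm_apply hJY).clm_apply hJZ)).sub
    (contDiffOn_const.mul
      (((hB.clm_apply hJY).clm_apply contDiffOn_const).add (hBY.clm_apply hJZ)))

lemma exists_isTwoZeroForm_apply_eq_one (hV : Module.finrank ℝ V = 4) {j : V →L[ℝ] V}
    (hj : ∀ X, j (j X) = -X) : ∃ θ a b, IsTwoZeroForm j θ ∧ θ a b = 1 := by
  obtain ⟨T, hT⟩ := exists_linearEquiv_smul_I (W := ℂ × ℂ) (j := j.toLinearMap)
    (by rw [Module.finrank_prod, finrank_real_complex, hV]) hj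
  have hTsymm : ∀ X, T.symm (j X) = I • T.symm X := fun X => by
    rw [LinearEquiv.symm_apply_eq, hT, LinearEquiv.apply_symm_apply]
    rfl
  let u : V →L[ℝ] ℂ := (LinearMap.fst ℝ ℂ ℂ ∘ₗ T.symm.toLinearMap).toContinuousLinearMap
  let v : V →L[ℝ] ℂ := (LinearMap.snd ℝ ℂ ℂ ∘ₗ T.symm.toLinearMap).toContinuousLinearMap
  have hu : ∀ X, u (j X) = I * u X := fun X => congrArg Prod.fst (hTsymm X)
  have hv : ∀ X, v (j X) = I * v X := fun X => congrArg Prod.snd (hTsymm X)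
  let μ := ContinuousLinearMap.mul ℝ ℂ
  have happly : ∀ Y Z, (μ.bilinearComp u v - μ.bilinearComp v u) Y Z = u Y * v Z - v Y * u Z :=
    fun _ _ => rfl
  refine ⟨μ.bilinearComp u v - μ.bilinearComp v u, T (1, 0), T (0, 1), ⟨fun Y => ?_, fun Y Z => ?_⟩,
    ?_⟩
  · rw [happly, mul_comm, sub_self]
  · rw [happly, happly, hu, hv]
    ring
  · rw [happly]
    simp [u, v]

set_option maxSynthPendingDepth 4 in
lemma exists_isTwoZeroForm_near (hV : Module.finrank ℝ V = 4) (hU : IsOpen U) (hp : p ∈ U)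
    (hJ : ContDiffOn ℝ ∞ J U) (hJ2 : ∀ x ∈ U, ∀ X, J x (J x X) = -X) :
    ∃ N ⊆ U, IsOpen N ∧ p ∈ N ∧ ∃ (θ : V → V →L[ℝ] V →L[ℝ] ℂ) (a b : V),
      ContDiffOn ℝ ∞ θ N ∧ ∀ x ∈ N, IsTwoZeroForm (J x) (θ x) ∧ θ x a b = 1 := by
  obtain ⟨B, a, b, hB, hab⟩ := exists_isTwoZeroForm_apply_eq_one hV (hJ2 p hp)
  let Θ := fun x => twoZeroPart (J x) B
  have hΘ : ContDiffOn ℝ ∞ Θ U := contDiffOn_twoZeroPart hJ contDiffOn_const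
  have hΘab : ContDiffOn ℝ ∞ (fun x => Θ x a b) U :=
    (hΘ.clm_apply contDiffOn_const).clm_apply contDiffOn_const
  have hΘp : Θ p a b ≠ 0 := by
    rw [hB.twoZeroPart_apply, hab, mul_one]
    exact OfNat.ofNat_ne_zero 4
  refine ⟨U ∩ (fun x => Θ x a b) ⁻¹' {0}ᶜ, Set.inter_subset_left,
    hΘab.continuousOn.isOpen_inter_preimage hU isOpen_compl_singleton, ⟨hp, hΘp⟩,
    fun x => (Θ x a b)⁻¹ • Θ x, a, b, ?_, fun x hx => ⟨?_, inv_mul_cancel₀ hx.2⟩⟩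
  · exact ((hΘab.mono Set.inter_subset_left).inv fun x hx => hx.2).smul
      (hΘ.mono Set.inter_subset_left)
  · exact (isTwoZeroForm_twoZeroPart (hJ2 x hx.1) hB.self_eq_zero).smul _

end LocalFrames

section ClosednessEquation

variable {V : Type*} [NormedAddCommGroup V] [NormedSpace ℝ V] {E : Type*} [NormedAddCommGroup E]
  [NormedSpace ℝ E]

/-- The exterior derivative of a vector-valued 2-form, evaluated on three vectors. -/
noncomputable def extDerivTwo (β : V → V →L[ℝ] V →L[ℝ] E) (x X Y Z : V) : E :=
  fderiv ℝ β x X Y Z - fderiv ℝ β x Y X Z + fderiv ℝ β x Z X Y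

set_option maxSynthPendingDepth 4 in
lemma extDerivTwo_mapForm_smul {θ : V → V →L[ℝ] V →L[ℝ] ℂ} {f : V → ℂ} {x : V}
    (hθ : DifferentiableAt ℝ θ x) (hf : DifferentiableAt ℝ f x) (X Y Z : V) :
    extDerivTwo (fun y => mapForm reCLM (f y • θ y)) x X Y Z =
      (fderiv ℝ f x X * θ x Y Z - fderiv ℝ f x Y * θ x X Z + fderiv ℝ f x Z * θ x X Y +
        f x * extDerivTwo θ x X Y Z).re := by
  have hfderiv : ∀ X Y Z, fderiv ℝ (fun y => mapForm reCLM (f y • θ y)) x X Y Z =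
      (f x * fderiv ℝ θ x X Y Z + fderiv ℝ f x X * θ x Y Z).re := fun X Y Z => by
    have h := ((mapForm reCLM).hasFDerivAt.comp x (hf.hasFDerivAt.smul hθ.hasFDerivAt)).fderiv
    exact congrArg (fun L => L X Y Z) h
  simp only [extDerivTwo, hfderiv, ← sub_re, ← add_re]
  congr 1
  ring

section Pointwise

variable {j : V →L[ℝ] V} {θ : V →L[ℝ] V →L[ℝ] ℂ} {a b : V}

/-- `L ∘ j - i L` is antilinear, so it is determined by its values on a complex frame. -/
lemma IsTwoZeroForm.antilinearPart_eq (hθ : IsTwoZeroForm j θ) (hab : θ a b = 1)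
    (hV : Module.finrank ℝ V = 4) (hj : ∀ X, j (j X) = -X) (L : V →L[ℝ] ℂ) (X : V) :
    L (j X) - I * L X = conj (θ X b) * (L (j a) - I * L a) +
      conj (θ a X) * (L (j b) - I * L b) := by
  have hconj : ∀ q : ℂ, conj q = q.re - q.im * I := fun q => by
    rw [← re_add_im (conj q), conj_re, conj_im, ofReal_neg]
    ring
  conv_lhs => rw [← hθ.frameMap_eq hab hV X]
  simp only [frameMap, LinearMap.coe_mk, AddHom.coe_mk, map_add, map_smul, hj, map_neg, smul_neg,
    real_smul, hconj]
  linear_combination (-(θ X b).im * L a - (θ a X).im * L b) * I_mul_I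

/-- The solution `e` of the real equations `Re (e + c A) = 0` and `Re (i e + c B) = 0`, the form in
which closedness of `Re (f θ)` determines the antilinear part of `df`. -/
noncomputable def reImDefect (A B c : ℂ) : ℂ := -(c * A).re + (c * B).re * I

lemma eq_reImDefect {A B c e : ℂ} (hA : (e + c * A).re = 0) (hB : (I * e + c * B).re = 0) :
    e = reImDefect A B c := by
  rw [add_re] at hA hB
  rw [I_mul_re] at hB
  refine Complex.ext ?_ ?_ <;>
    simp only [reImDefect, add_re, add_im, neg_re, neg_im, ofReal_re, ofReal_im, re_ofReal_mul,
      im_ofReal_mul, I_re, I_im] <;>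
    linarith

end Pointwise

end ClosednessEquation

section ClosednessSystem

variable {V : Type*} [NormedAddCommGroup V] [NormedSpace ℝ V]
  {J : V → V →L[ℝ] V} {θ : V → V →L[ℝ] V →L[ℝ] ℂ} {a b : V} {s : Set V}

set_option maxSynthPendingDepth 4 in
lemma contDiffOn_extDerivTwo (hs : IsOpen s) (hθ : ContDiffOn ℝ ∞ θ s) {X Y Z : V → V}
    (hX : ContDiffOn ℝ ∞ X s) (hY : ContDiffOn ℝ ∞ Y s) (hZ : ContDiffOn ℝ ∞ Z s) :
    ContDiffOn ℝ ∞ (fun x => extDerivTwo θ x (X x) (Y x) (Z x)) s := by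
  have hDθ : ContDiffOn ℝ ∞ (fderiv ℝ θ) s := hθ.fderiv_of_isOpen hs (by simp)
  exact ((((hDθ.clm_apply hX).clm_apply hY).clm_apply hZ).sub
    (((hDθ.clm_apply hY).clm_apply hX).clm_apply hZ)).add
    (((hDθ.clm_apply hZ).clm_apply hX).clm_apply hY)

lemma contDiffOn_reImDefect {A B : V → ℂ} (hA : ContDiffOn ℝ ∞ A s) (hB : ContDiffOn ℝ ∞ B s)
    (c : ℂ) : ContDiffOn ℝ ∞ (fun x => reImDefect (A x) (B x) c) s := by
  have hre : ∀ {A : V → ℂ}, ContDiffOn ℝ ∞ A s → ContDiffOn ℝ ∞ (fun x => ((c * A x).re : ℂ)) s :=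
    fun hA => (ofRealCLM.contDiff.comp reCLM.contDiff).comp_contDiffOn (contDiffOn_const.mul hA)
  exact (hre hA).neg.add ((hre hB).mul contDiffOn_const)

variable [FiniteDimensional ℝ V]

/-- The zeroth order coefficient `Q` of the system `df ∘ J = i df + Q f` which expresses, in the
frame `a, b` with `θ a b = 1`, that `Re (f θ)` is closed. -/
noncomputable def closednessCoeff (J : V → V →L[ℝ] V) (θ : V → V →L[ℝ] V →L[ℝ] ℂ) (a b x : V) :
    ℂ →L[ℝ] V →L[ℝ] ℂ :=
  (LinearMap.mk₂ ℝ
    (fun c X => conj (θ x X b) *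
        reImDefect (extDerivTwo θ x (J x a) a b) (extDerivTwo θ x (J x a) a (J x b)) c +
      conj (θ x a X) *
        reImDefect (extDerivTwo θ x (J x b) a b) (extDerivTwo θ x (J x b) (J x a) b) c)
    (fun c c' X => by simp only [reImDefect, add_mul, add_re, ofReal_add]; ring)
    (fun r c X => by
      simp only [reImDefect, real_smul, mul_assoc, re_ofReal_mul, ofReal_mul]
      ring)
    (fun c X X' => by simp only [map_add, _root_.add_apply]; ring)
    fun r c X => by
      simp only [map_smul, _root_.smul_apply, real_smul, map_mul, conj_ofReal]
      ring).toContinuousBilinearMap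

lemma closednessCoeff_apply (J : V → V →L[ℝ] V) (θ : V → V →L[ℝ] V →L[ℝ] ℂ) (a b x : V) (c : ℂ)
    (X : V) : closednessCoeff J θ a b x c X = conj (θ x X b) *
        reImDefect (extDerivTwo θ x (J x a) a b) (extDerivTwo θ x (J x a) a (J x b)) c +
      conj (θ x a X) *
        reImDefect (extDerivTwo θ x (J x b) a b) (extDerivTwo θ x (J x b) (J x a) b) c := rfl

lemma contDiffOn_closednessCoeff (hs : IsOpen s) (hJ : ContDiffOn ℝ ∞ J s)
    (hθ : ContDiffOn ℝ ∞ θ s) (a b : V) : ContDiffOn ℝ ∞ (closednessCoeff J θ a b) s := by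
  have hk : ∀ v : V, ContDiffOn ℝ ∞ (fun _ => v) s := fun v => contDiffOn_const
  have hJv : ∀ v, ContDiffOn ℝ ∞ (fun x => J x v) s := fun v => hJ.clm_apply (hk v)
  have hθv : ∀ Y Z, ContDiffOn ℝ ∞ (fun x => conj (θ x Y Z)) s := fun Y Z =>
    conjCLE.contDiff.comp_contDiffOn ((hθ.clm_apply (hk Y)).clm_apply (hk Z))
  have hd := @contDiffOn_extDerivTwo V _ _ θ s hs hθ
  refine contDiffOn_clm_apply.2 fun c => contDiffOn_clm_apply.2 fun X => ?_
  simp only [closednessCoeff_apply]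
  exact ((hθv X b).mul (contDiffOn_reImDefect (hd (hJv a) (hk a) (hk b))
    (hd (hJv a) (hk a) (hJv b)) c)).add ((hθv a X).mul (contDiffOn_reImDefect
      (hd (hJv b) (hk a) (hk b)) (hd (hJv b) (hJv a) (hk b)) c))

theorem isCauchyRiemannSolutionOn_closednessCoeff (hV : Module.finrank ℝ V = 4)
    (hJ2 : ∀ x ∈ s, ∀ X, J x (J x X) = -X) (hθ : ∀ x ∈ s, IsTwoZeroForm (J x) (θ x))
    (hab : ∀ x ∈ s, θ x a b = 1) {f : V → ℂ} (hclosed : ∀ x ∈ s, ∀ X Y Z,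
      (fderiv ℝ f x X * θ x Y Z - fderiv ℝ f x Y * θ x X Z + fderiv ℝ f x Z * θ x X Y +
        f x * extDerivTwo θ x X Y Z).re = 0) :
    IsCauchyRiemannSolutionOn J (closednessCoeff J θ a b) f s := by
  intro x hx X
  have hθx := hθ x hx
  have hba : θ x b a = -1 := by rw [hθx.swap, hab x hx]
  have ha : fderiv ℝ f x (J x a) - I * fderiv ℝ f x a =
      reImDefect (extDerivTwo θ x (J x a) a b) (extDerivTwo θ x (J x a) a (J x b)) (f x) := by
    apply eq_reImDefect
    · convert hclosed x hx (J x a) a b using 3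
      simp only [hθx.map_j_left, hθx.self_eq_zero, hab x hx]
      ring
    · convert hclosed x hx (J x a) a (J x b) using 3
      simp only [hθx.map_j_left, hθx.map_j_right, hθx.self_eq_zero, hab x hx]
      ring
  have hb : fderiv ℝ f x (J x b) - I * fderiv ℝ f x b =
      reImDefect (extDerivTwo θ x (J x b) a b) (extDerivTwo θ x (J x b) (J x a) b) (f x) := by
    apply eq_reImDefect
    · convert hclosed x hx (J x b) a b using 3
      simp only [hθx.map_j_left, hθx.self_eq_zero, hab x hx, hba]
      ring
    · convert hclosed x hx (J x b) (J x a) b using 3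
      simp only [hθx.map_j_left, hθx.map_j_right, hθx.self_eq_zero, hab x hx, hba]
      ring
  rw [closednessCoeff_apply, ← ha, ← hb, smul_eq_mul,
    ← hθx.antilinearPart_eq (hab x hx) hV (hJ2 x hx), add_sub_cancel]

end ClosednessSystem

section Coefficient

variable {V : Type*} [NormedAddCommGroup V] [NormedSpace ℝ V]

/-- The coefficient of a `j`-anti-invariant form `A` with respect to a form of type `(2, 0)` whose
value on `(a, b)` is one. -/
noncomputable def twoZeroCoeff (j : V →L[ℝ] V) (A : V →L[ℝ] V →L[ℝ] ℝ) (a b : V) : ℂ :=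
  (2⁻¹ : ℝ) • twoZeroPart j (mapForm ofRealCLM A) a b

lemma IsTwoZeroForm.mapForm_reCLM_twoZeroCoeff_smul {j : V →L[ℝ] V} {A : V →L[ℝ] V →L[ℝ] ℝ}
    {θ : V →L[ℝ] V →L[ℝ] ℂ} {a b : V} (hθ : IsTwoZeroForm j θ) (hab : θ a b = 1)
    (hV : Module.finrank ℝ V = 4) (hj : ∀ X, j (j X) = -X) (hA0 : ∀ X, A X X = 0)
    (hA : ∀ X Y, A (j X) (j Y) = -A X Y) : mapForm reCLM (twoZeroCoeff j A a b • θ) = A := by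
  refine ContinuousLinearMap.ext fun Y => ContinuousLinearMap.ext fun Z => ?_
  have hΦ : IsTwoZeroForm j (twoZeroPart j (mapForm ofRealCLM A)) :=
    isTwoZeroForm_twoZeroPart hj fun X => by rw [mapForm_apply, hA0, map_zero]
  have hcoeff : (twoZeroCoeff j A a b • θ) Y Z =
      (2⁻¹ : ℝ) • twoZeroPart j (mapForm ofRealCLM A) Y Z := by
    rw [hΦ.apply_eq_mul hθ hab hV, ← smul_mul_assoc]
    rfl
  rw [mapForm_apply, hcoeff, reCLM_apply, smul_re, re_twoZeroPart_mapForm_ofRealCLM hA,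
    smul_eq_mul, inv_mul_cancel_left₀ two_ne_zero]

set_option maxSynthPendingDepth 4 in
lemma contDiffOn_twoZeroCoeff [FiniteDimensional ℝ V] {J : V → V →L[ℝ] V}
    {α : V → V →L[ℝ] V →L[ℝ] ℝ} {s : Set V} {n : WithTop ℕ∞} (hJ : ContDiffOn ℝ n J s)
    (hα : ContDiffOn ℝ n α s) (a b : V) :
    ContDiffOn ℝ n (fun x => twoZeroCoeff (J x) (α x) a b) s := by
  have hΦ := contDiffOn_twoZeroPart hJ ((mapForm (V := V) ofRealCLM).contDiff.comp_contDiffOn hα)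
  exact ((hΦ.clm_apply contDiffOn_const).clm_apply contDiffOn_const).const_smul (2⁻¹ : ℝ)

end Coefficient

section Extension

lemma contDiffOn_update {V W : Type*} [NormedAddCommGroup V] [NormedSpace ℝ V] [DecidableEq V]
    [NormedAddCommGroup W] [NormedSpace ℝ W] {g : V → W} {s : Set V} {p : V} {c : W}
    {n : WithTop ℕ∞} (hs : IsOpen s) (hg : ContDiffOn ℝ n g (s \ {p}))
    (hc : ContDiffAt ℝ n (Function.update g p c) p) :
    ContDiffOn ℝ n (Function.update g p c) s := by
  intro x hx
  rcases eq_or_ne x p with rfl | hxp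
  · exact hc.contDiffWithinAt
  · have hgx := hg.contDiffAt ((hs.sdiff isClosed_singleton).mem_nhds ⟨hx, hxp⟩)
    refine (hgx.congr_of_eventuallyEq ?_).contDiffWithinAt
    filter_upwards [isOpen_ne.mem_nhds hxp] with y hy using Function.update_of_ne hy _ _

variable {V : Type} [NormedAddCommGroup V] [NormedSpace ℝ V] [FiniteDimensional ℝ V]
  {J : V → V →L[ℝ] V} {α : V → V →L[ℝ] V →L[ℝ] ℝ} {U s : Set V} {p : V}

set_option maxSynthPendingDepth 4 in
lemma isCauchyRiemannSolutionOn_twoZeroCoeff (hV : Module.finrank ℝ V = 4) (hs : IsOpen s)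
    (hJ : ContDiffOn ℝ ∞ J s) (hJ2 : ∀ x ∈ s, ∀ X, J x (J x X) = -X) (hα : ContDiffOn ℝ ∞ α s)
    (hα0 : ∀ x ∈ s, ∀ X, α x X X = 0)
    (hαJ : ∀ x ∈ s, ∀ X Y, α x (J x X) (J x Y) = -α x X Y)
    (hαcl : ∀ x ∈ s, ∀ X Y Z, extDerivTwo α x X Y Z = 0) {θ : V → V →L[ℝ] V →L[ℝ] ℂ} {a b : V}
    (hθ : ContDiffOn ℝ ∞ θ s) (hθJ : ∀ x ∈ s, IsTwoZeroForm (J x) (θ x) ∧ θ x a b = 1) :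
    IsCauchyRiemannSolutionOn J (closednessCoeff J θ a b)
      (fun x => twoZeroCoeff (J x) (α x) a b) s := by
  refine isCauchyRiemannSolutionOn_closednessCoeff hV hJ2 (fun x hx => (hθJ x hx).1)
    (fun x hx => (hθJ x hx).2) fun x hx X Y Z => ?_
  have hxs := hs.mem_nhds hx
  have hreal : (fun y => mapForm reCLM (twoZeroCoeff (J y) (α y) a b • θ y)) =ᶠ[𝓝 x] α := by
    filter_upwards [hxs] with y hy
    exact (hθJ y hy).1.mapForm_reCLM_twoZeroCoeff_smul (hθJ y hy).2 hV (hJ2 y hy) (hα0 y hy)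
      (hαJ y hy)
  rw [← extDerivTwo_mapForm_smul ((hθ.contDiffAt hxs).differentiableAt (by simp))
    (((contDiffOn_twoZeroCoeff hJ hα a b).contDiffAt hxs).differentiableAt (by simp)),
    extDerivTwo, hreal.fderiv_eq]
  exact hαcl x hx X Y Z

set_option maxSynthPendingDepth 4 in
theorem exists_contDiffOn_update [DecidableEq V] (hV : Module.finrank ℝ V = 4) (hU : IsOpen U)
    (hp : p ∈ U) (hJ : ContDiffOn ℝ ∞ J U) (hJ2 : ∀ x ∈ U, ∀ X, J x (J x X) = -X)
    (hα : ContDiffOn ℝ ∞ α (U \ {p})) (hα0 : ∀ x ∈ U \ {p}, ∀ X, α x X X = 0)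
    (hαJ : ∀ x ∈ U \ {p}, ∀ X Y, α x (J x X) (J x Y) = -α x X Y)
    (hαcl : ∀ x ∈ U \ {p}, ∀ X Y Z, extDerivTwo α x X Y Z = 0) :
    ∃ A, ContDiffOn ℝ ∞ (Function.update α p A) U := by
  obtain ⟨N, hNU, hN, hpN, θ, a, b, hθ, hθJ⟩ := exists_isTwoZeroForm_near hV hU hp hJ hJ2
  have hNU' : N \ {p} ⊆ U \ {p} := Set.sdiff_subset_sdiff_left hNU
  have hNN : N \ {p} ⊆ N := Set.sdiff_subset
  let f := fun x => twoZeroCoeff (J x) (α x) a b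
  have hf : ContDiffOn ℝ ∞ f (N \ {p}) :=
    contDiffOn_twoZeroCoeff (hJ.mono (hNN.trans hNU)) (hα.mono hNU') a b
  have hCR : IsCauchyRiemannSolutionOn J (closednessCoeff J θ a b) f (N \ {p}) :=
    isCauchyRiemannSolutionOn_twoZeroCoeff hV (hN.sdiff isClosed_singleton)
      (hJ.mono (hNN.trans hNU)) (fun x hx => hJ2 x (hNU hx.1)) (hα.mono hNU')
      (fun x hx => hα0 x (hNU' hx)) (fun x hx => hαJ x (hNU' hx)) (fun x hx => hαcl x (hNU' hx))
      (hθ.mono hNN) fun x hx => hθJ x hx.1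
  obtain ⟨c, hc⟩ := exists_contDiffAt_update hV hN hpN (hJ.mono hNU)
    (fun x hx => hJ2 x (hNU hx)) (contDiffOn_closednessCoeff hN (hJ.mono hNU) hθ a b) hf hCR
  let β := fun x => mapForm reCLM (Function.update f p c x • θ x)
  have hβ : ContDiffAt ℝ ∞ β p :=
    (mapForm reCLM).contDiff.contDiffAt.comp p (hc.smul (hθ.contDiffAt (hN.mem_nhds hpN)))
  refine ⟨β p, contDiffOn_update hU hα (hβ.congr_of_eventuallyEq ?_)⟩
  filter_upwards [hN.mem_nhds hpN] with x hx
  rcases eq_or_ne x p with rfl | hxp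
  · exact Function.update_self _ _ _
  · have hxU := hNU' ⟨hx, hxp⟩
    simp only [β, Function.update_of_ne hxp]
    exact ((hθJ x hx).1.mapForm_reCLM_twoZeroCoeff_smul (hθJ x hx).2 hV (hJ2 x (hNU hx))
      (hα0 x hxU) (hαJ x hxU)).symm

end Extension

section Continuity

variable {J : ℂ × ℂ → ℂ × ℂ →L[ℝ] ℂ × ℂ} {α : ℂ × ℂ → ℂ × ℂ →L[ℝ] ℂ × ℂ →L[ℝ] ℝ}
  {s U : Set (ℂ × ℂ)}

lemma isTwoFormOn_of_subset_closure (hsU : s ⊆ U) (hUs : U ⊆ closure s)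
    (hα : ContDiffOn ℝ ∞ α U) (hs : IsTwoFormOn α s) : IsTwoFormOn α U :=
  ⟨hα, fun _ hx X => Set.EqOn.of_subset_closure (g := fun _ => (0 : ℝ)) (fun y hy => hs.2 y hy X)
    ((hα.continuousOn.clm_apply continuousOn_const).clm_apply continuousOn_const)
    continuousOn_const hsU hUs hx⟩

lemma isJAntiInvariantOn_of_subset_closure (hsU : s ⊆ U) (hUs : U ⊆ closure s)
    (hJ : ContinuousOn J U) (hα : ContinuousOn α U) (hs : IsJAntiInvariantOn J α s) :
    IsJAntiInvariantOn J α U := fun _ hx X Y =>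
  Set.EqOn.of_subset_closure (fun y hy => hs y hy X Y)
    ((hα.clm_apply (hJ.clm_apply continuousOn_const)).clm_apply (hJ.clm_apply continuousOn_const))
    ((hα.clm_apply continuousOn_const).clm_apply continuousOn_const).neg hsU hUs hx

set_option maxSynthPendingDepth 4 in
lemma isClosedTwoFormOn_of_subset_closure (hsU : s ⊆ U) (hUs : U ⊆ closure s) (hU : IsOpen U)
    (hα : ContDiffOn ℝ ∞ α U) (hs : IsClosedTwoFormOn α s) : IsClosedTwoFormOn α U := by
  have hDα : ContinuousOn (fderiv ℝ α) U := (hα.fderiv_of_isOpen hU (m := 0) (by simp)).continuousOn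
  have hcont : ∀ X Y Z : ℂ × ℂ, ContinuousOn (fun x => fderiv ℝ α x X Y Z) U := fun X Y Z =>
    ((hDα.clm_apply continuousOn_const).clm_apply continuousOn_const).clm_apply continuousOn_const
  exact fun x hx X Y Z => Set.EqOn.of_subset_closure (g := fun _ => (0 : ℝ))
    (fun y hy => hs y hy X Y Z)
    (((hcont X Y Z).sub (hcont Y X Z)).add (hcont Z X Y)) continuousOn_const hsU hUs hx

end Continuity

end HartogsExtension

/-- local form of Proposition 5.2 of the paper: Hartogs-type extension
of closed `J`-anti-invariant 2-forms across a point. -/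
theorem hartogs_extension_anti_invariant_form
    (U : Set (ℂ × ℂ)) (hU : IsOpen U) (p : ℂ × ℂ) (hp : p ∈ U)
    (J : ℂ × ℂ → (ℂ × ℂ →L[ℝ] ℂ × ℂ)) (hJ : IsAlmostComplexOn J U)
    (α : ℂ × ℂ → (ℂ × ℂ →L[ℝ] ℂ × ℂ →L[ℝ] ℝ))
    (hα : IsTwoFormOn α (U \ {p}))
    (hαJ : IsJAntiInvariantOn J α (U \ {p}))
    (hαcl : IsClosedTwoFormOn α (U \ {p})) :
    ∃ αt : ℂ × ℂ → (ℂ × ℂ →L[ℝ] ℂ × ℂ →L[ℝ] ℝ),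
      IsTwoFormOn αt U ∧ IsJAntiInvariantOn J αt U ∧ IsClosedTwoFormOn αt U ∧
      ∀ x ∈ U \ {p}, αt x = α x := by
  classical
  have hsU : U \ {p} ⊆ U := Set.sdiff_subset
  have hUs : U ⊆ closure (U \ {p}) := (dense_compl_singleton p).open_subset_closure_inter hU
  have hV : Module.finrank ℝ (ℂ × ℂ) = 4 := by rw [Module.finrank_prod, finrank_real_complex]
  obtain ⟨A, hext⟩ :=
    HartogsExtension.exists_contDiffOn_update hV hU hp hJ.1 hJ.2 hα.1 hα.2 hαJ hαcl
  have heq : Set.EqOn (Function.update α p A) α (U \ {p}) := fun x hx =>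
    Function.update_of_ne hx.2 _ _
  have hopen : IsOpen (U \ {p}) := hU.sdiff isClosed_singleton
  refine ⟨Function.update α p A, ?_, ?_, ?_, heq⟩
  · refine HartogsExtension.isTwoFormOn_of_subset_closure hsU hUs hext
      ⟨hext.mono hsU, fun x hx => ?_⟩
    rw [heq hx]
    exact hα.2 x hx
  · refine HartogsExtension.isJAntiInvariantOn_of_subset_closure hsU hUs hJ.1.continuousOn
      hext.continuousOn fun x hx => ?_
    rw [heq hx]
    exact hαJ x hx
  · refine HartogsExtension.isClosedTwoFormOn_of_subset_closure hsU hUs hU hext fun x hx => ?_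
    rw [(heq.eventuallyEq_of_mem (hopen.mem_nhds hx)).fderiv_eq]
    exact hαcl x hx
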